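/- arXiv:2309.10529 — 2 statements merged into one kernel-verified Lean document; each statement's English description precedes it below -/
import Mathlib

section
/- Let m ≥ 1 be an integer, let A_0, …, A_{m−1} > 1 and c_0, …, c_{m−1} > 0 be real numbers. Set β_{−1} = 1 and β_i = A_0·A_1⋯A_i for 0 ≤ i ≤ m−1, and put d_0 = s_{β_0} and d_i = g_{β_i, β_{i−1}} for 1 ≤ i ≤ m−1. Let S_m = { x ∈ (0,1) irrational : there are infinitely many n ∈ ℕ such that c_i·A_i^n ≤ a_{n+i}(x) < 2·c_i·A_i^n for every 0 ≤ i ≤ m−1 }. Then dim_H S_m ≥ min_{0 ≤ i ≤ m−1} d_i. -/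
open Filter MeasureTheory Set

/-- The Gauss map `T(x) = 1/x - ⌊1/x⌋`. -/
noncomputable def gaussMap (x : ℝ) : ℝ := 1 / x - (⌊1 / x⌋ : ℤ)

/-- The `n`-th partial quotient `a_n(x)` (for `n ≥ 1`) of the continued
fraction expansion of `x`: `a_n(x) = ⌊1 / T^{n-1}(x)⌋`. -/
noncomputable def pq (x : ℝ) (n : ℕ) : ℕ := ⌊1 / (gaussMap^[n - 1] x)⌋₊

/-- The continuant `q_n(a_1, …, a_n)`: `q_0 = 1`, `q_1 = a_1`,
`q_k = a_k q_{k-1} + q_{k-2}`. -/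
def contQ : (n : ℕ) → (Fin n → ℕ) → ℕ
  | 0, _ => 1
  | 1, a => a 0
  | (n + 2), a =>
      a (Fin.last (n + 1)) * contQ (n + 1) (Fin.init a) +
        contQ n (Fin.init (Fin.init a))

/-- `s_B`: the Wang–Wu pressure exponent. -/
noncomputable def sExp (B : ℝ) : ℝ :=
  sInf {s : ℝ | 0 ≤ s ∧
    Filter.atTop.limsup (fun n : ℕ =>
      (((n : ℝ)⁻¹ : ℝ) : EReal) * ENNReal.log (∑' a : Fin n → ℕ+,
        ENNReal.ofReal ((B ^ n * ((contQ n fun i => (a i : ℕ)) : ℝ) ^ 2) ^ (-s)))) ≤ 0}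

/-- `g_{B₁,B₂}`: the two-parameter pressure exponent. -/
noncomputable def gExp (B₁ B₂ : ℝ) : ℝ :=
  sInf {s : ℝ | 0 ≤ s ∧
    Filter.atTop.limsup (fun n : ℕ =>
      (((n : ℝ)⁻¹ : ℝ) : EReal) * ENNReal.log (∑' a : Fin n → ℕ+,
        ENNReal.ofReal (B₂ ^ ((1 - s) * (n : ℝ)) *
          (B₁ ^ n * ((contQ n fun i => (a i : ℕ)) : ℝ) ^ 2) ^ (-s)))) ≤ 0}

/-- `β_i = A_0 ⋯ A_i`. -/
noncomputable def betaProd (A : ℕ → ℝ) (i : ℕ) : ℝ := ∏ j ∈ Finset.range (i + 1), A j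

/-- The dimensional numbers `d_0 = s_{β_0}` and `d_i = g_{β_i, β_{i-1}}` for `i ≥ 1`. -/
noncomputable def dimNum (A : ℕ → ℝ) (i : ℕ) : ℝ :=
  if i = 0 then sExp (betaProd A 0) else gExp (betaProd A i) (betaProd A (i - 1))


/-! ### Part A: continued fraction words -/

/-- The value `[a_1, …, a_n + y]` of a finite continued fraction with tail `y`. -/
noncomputable def cfv : List ℕ → ℝ → ℝ
  | [], y => y
  | a :: w, y => 1 / ((a : ℝ) + cfv w y)

/-- Entries `(p, p', q, q')` of the Möbius map of a word. -/
def cfM : List ℕ → ℕ × ℕ × ℕ × ℕ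
  | [] => (0, 1, 1, 0)
  | a :: w => ((cfM w).2.2.1, (cfM w).2.2.2, a * (cfM w).2.2.1 + (cfM w).1,
      a * (cfM w).2.2.2 + (cfM w).2.1)

def cp (w : List ℕ) : ℕ := (cfM w).1
def cp' (w : List ℕ) : ℕ := (cfM w).2.1
def cq (w : List ℕ) : ℕ := (cfM w).2.2.1
def cq' (w : List ℕ) : ℕ := (cfM w).2.2.2

@[simp] lemma cp_nil : cp [] = 0 := rfl
@[simp] lemma cp'_nil : cp' [] = 1 := rfl
@[simp] lemma cq_nil : cq [] = 1 := rfl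
@[simp] lemma cq'_nil : cq' [] = 0 := rfl
@[simp] lemma cp_cons (a : ℕ) (w : List ℕ) : cp (a :: w) = cq w := rfl
@[simp] lemma cp'_cons (a : ℕ) (w : List ℕ) : cp' (a :: w) = cq' w := rfl
@[simp] lemma cq_cons (a : ℕ) (w : List ℕ) : cq (a :: w) = a * cq w + cp w := rfl
@[simp] lemma cq'_cons (a : ℕ) (w : List ℕ) : cq' (a :: w) = a * cq' w + cp' w := rfl

lemma cfM_append (u v : List ℕ) :
    cp (u ++ v) = cp u * cq v + cp' u * cp v ∧
    cp' (u ++ v) = cp u * cq' v + cp' u * cp' v ∧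
    cq (u ++ v) = cq u * cq v + cq' u * cp v ∧
    cq' (u ++ v) = cq u * cq' v + cq' u * cp' v := by
  induction u with
  | nil => simp
  | cons a u ih =>
    obtain ⟨h1, h2, h3, h4⟩ := ih
    simp only [List.cons_append, cp_cons, cp'_cons, cq_cons, cq'_cons, h1, h2, h3, h4]
    refine ⟨trivial, trivial, ?_, ?_⟩ <;> ring

lemma cq_snoc (u : List ℕ) (a : ℕ) : cq (u ++ [a]) = a * cq u + cq' u := by
  rw [(cfM_append u [a]).2.2.1]; simp; ring

lemma cq'_snoc (u : List ℕ) (a : ℕ) : cq' (u ++ [a]) = cq u := by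
  rw [(cfM_append u [a]).2.2.2]; simp

/-- A word all of whose digits are positive. -/
def Pos (w : List ℕ) : Prop := ∀ a ∈ w, 1 ≤ a

lemma Pos.nil : Pos [] := by intro a ha; simp at ha

lemma Pos.cons {a : ℕ} {w : List ℕ} (h : Pos (a :: w)) : 1 ≤ a ∧ Pos w :=
  ⟨h a (by simp), fun b hb => h b (by simp [hb])⟩

lemma Pos.append {u v : List ℕ} (hu : Pos u) (hv : Pos v) : Pos (u ++ v) := by
  intro a ha
  rcases List.mem_append.1 ha with h | h
  · exact hu a h
  · exact hv a h

lemma cp_le_cq {w : List ℕ} (h : Pos w) : cp w ≤ cq w := by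
  cases w with
  | nil => simp
  | cons a w =>
    have := (Pos.cons h).1
    simp only [cp_cons, cq_cons]
    nlinarith

lemma one_le_cq {w : List ℕ} (h : Pos w) : 1 ≤ cq w := by
  induction w with
  | nil => simp
  | cons a w ih =>
    have h1 := (Pos.cons h).1
    have h2 := ih (Pos.cons h).2
    simp only [cq_cons]
    nlinarith

lemma cq'_le_cq {w : List ℕ} (h : Pos w) : cq' w ≤ cq w := by
  induction w using List.reverseRecOn with
  | nil => simp
  | append_singleton w a _ =>
    have h1 : 1 ≤ a := h a (by simp)
    rw [cq_snoc, cq'_snoc]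
    nlinarith

lemma cq_append_le {u v : List ℕ} (hu : Pos u) (hv : Pos v) :
    cq (u ++ v) ≤ 2 * cq u * cq v := by
  rw [(cfM_append u v).2.2.1]
  have h1 := cq'_le_cq hu
  have h2 := cp_le_cq hv
  nlinarith [Nat.mul_le_mul h1 h2]

lemma cq_snoc_le {u : List ℕ} (hu : Pos u) (a : ℕ) :
    cq (u ++ [a]) ≤ (a + 1) * cq u := by
  rw [cq_snoc]
  have h1 := cq'_le_cq hu
  nlinarith

lemma cq_le_append {u v : List ℕ} (hv : Pos v) : cq u ≤ cq (u ++ v) := by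
  rw [(cfM_append u v).2.2.1]
  have := one_le_cq hv
  nlinarith [Nat.zero_le (cq' u * cp v), Nat.zero_le (cq u)]

lemma cfv_nonneg {w : List ℕ} {y : ℝ} (hy : 0 ≤ y) : 0 ≤ cfv w y := by
  induction w with
  | nil => simpa [cfv]
  | cons a w ih => simp only [cfv]; positivity

lemma cfv_le_one {w : List ℕ} {y : ℝ} (h : Pos w) (hy : 0 ≤ y) (hy1 : y ≤ 1) :
    cfv w y ≤ 1 := by
  cases w with
  | nil => simpa [cfv]
  | cons a w =>
    have h1 : (1 : ℝ) ≤ a := by exact_mod_cast (Pos.cons h).1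
    have := cfv_nonneg (w := w) hy
    simp only [cfv]
    rw [div_le_one (by linarith)]
    linarith

lemma cfv_append (u v : List ℕ) (y : ℝ) : cfv (u ++ v) y = cfv u (cfv v y) := by
  induction u with
  | nil => simp [cfv]
  | cons a u ih => simp [cfv, ih]

lemma cfv_den_pos {w : List ℕ} {y : ℝ} (h : Pos w) (hy : 0 ≤ y) :
    0 < (cq w : ℝ) + cq' w * y := by
  have : (1 : ℝ) ≤ cq w := by exact_mod_cast one_le_cq h
  positivity

lemma cfv_eq {w : List ℕ} {y : ℝ} (h : Pos w) (hy : 0 ≤ y) :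
    cfv w y = ((cp w : ℝ) + cp' w * y) / ((cq w : ℝ) + cq' w * y) := by
  induction w with
  | nil => simp [cfv]
  | cons a w ih =>
    have h1 := cfv_den_pos (Pos.cons h).2 hy
    have h2 := cfv_den_pos h hy
    simp only [cfv, ih (Pos.cons h).2]
    simp only [cp_cons, cp'_cons, cq_cons, cq'_cons] at h2 ⊢
    push_cast at h2 ⊢
    have h3 : (a : ℝ) + (↑(cp w) + ↑(cp' w) * y) / (↑(cq w) + ↑(cq' w) * y) =
      (↑a * ↑(cq w) + ↑(cp w) + (↑a * ↑(cq' w) + ↑(cp' w)) * y) / (↑(cq w) + ↑(cq' w) * y) := by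
      rw [eq_div_iff h1.ne', add_mul, div_mul_cancel₀ _ h1.ne']
      ring
    rw [h3, one_div_div]

lemma cfM_det (w : List ℕ) : |(cp' w : ℝ) * cq w - cp w * cq' w| = 1 := by
  induction w with
  | nil => simp
  | cons a w ih =>
    simp only [cp_cons, cp'_cons, cq_cons, cq'_cons]
    push_cast
    rw [← ih, ← abs_neg]
    congr 1
    ring

lemma cfv_dist {w : List ℕ} {y y' : ℝ} (h : Pos w) (hy : y ∈ Set.Icc (0 : ℝ) 1)
    (hy' : y' ∈ Set.Icc (0 : ℝ) 1) :
    |y - y'| / (4 * (cq w : ℝ) ^ 2) ≤ |cfv w y - cfv w y'| := by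
  have h1 := cfv_den_pos h hy.1
  have h2 := cfv_den_pos h hy'.1
  rw [cfv_eq h hy.1, cfv_eq h hy'.1, div_sub_div _ _ h1.ne' h2.ne']
  have h3 : ((cp w : ℝ) + cp' w * y) * ((cq w : ℝ) + cq' w * y') -
      ((cq w : ℝ) + cq' w * y) * ((cp w : ℝ) + cp' w * y') =
      ((cp' w : ℝ) * cq w - cp w * cq' w) * (y - y') := by ring
  rw [h3, abs_div, abs_mul, cfM_det, one_mul, abs_of_pos (mul_pos h1 h2)]
  have hq : (1 : ℝ) ≤ cq w := by exact_mod_cast one_le_cq h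
  have hq' : (cq' w : ℝ) ≤ cq w := by exact_mod_cast cq'_le_cq h
  have hq0 : (0 : ℝ) ≤ cq' w := by positivity
  have e1 : (cq w : ℝ) + cq' w * y ≤ 2 * cq w := by nlinarith [hy.1, hy.2]
  have e2 : (cq w : ℝ) + cq' w * y' ≤ 2 * cq w := by nlinarith [hy'.1, hy'.2]
  apply div_le_div_of_nonneg_left (abs_nonneg _) (mul_pos h1 h2)
  nlinarith [mul_le_mul e1 e2 h2.le (by linarith)]

lemma contQ_eq (n : ℕ) (a : Fin n → ℕ) : contQ n a = cq (List.ofFn a) := by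
  induction n using Nat.strong_induction_on with
  | _ n ih =>
    match n, a, ih with
    | 0, a, _ => simp [contQ]
    | 1, a, _ => simp [contQ]
    | n + 2, a, ih =>
      have e1 : List.ofFn a = List.ofFn (Fin.init a) ++ [a (Fin.last (n + 1))] := by
        rw [List.ofFn_succ', List.concat_eq_append]; rfl
      have e2 : List.ofFn (Fin.init a) =
          List.ofFn (Fin.init (Fin.init a)) ++ [Fin.init a (Fin.last n)] := by
        rw [List.ofFn_succ', List.concat_eq_append]; rfl
      rw [contQ, ih (n + 1) (by omega), ih n (by omega), e1, cq_snoc]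
      congr 1
      rw [e2, cq'_snoc]


/-! ### Part B: Gauss map and tails -/

lemma cfv_pos {w : List ℕ} {y : ℝ} (h : Pos w) (hy : 0 < y) : 0 < cfv w y := by
  cases w with
  | nil => simpa [cfv]
  | cons a w =>
    have h1 : (1 : ℝ) ≤ a := by exact_mod_cast (Pos.cons h).1
    have := cfv_nonneg (w := w) hy.le
    simp only [cfv]
    positivity

lemma cfv_lt_one {w : List ℕ} {y : ℝ} (h : Pos w) (hy : 0 < y) (hy1 : y < 1) :
    cfv w y < 1 := by
  cases w with
  | nil => simpa [cfv]
  | cons a w =>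
    have h1 : (1 : ℝ) ≤ a := by exact_mod_cast (Pos.cons h).1
    have := cfv_pos (Pos.cons h).2 hy
    simp only [cfv]
    rw [div_lt_one (by linarith)]
    linarith

lemma gaussMap_inv {a : ℕ} {z : ℝ} (hz : 0 ≤ z) (hz1 : z < 1) :
    gaussMap (1 / ((a : ℝ) + z)) = z := by
  unfold gaussMap
  rw [one_div_one_div]
  have : ⌊(a : ℝ) + z⌋ = (a : ℤ) := by
    rw [Int.floor_eq_iff]
    push_cast
    constructor <;> linarith
  rw [this]
  push_cast
  ring

lemma gaussMap_iter_cfv {w : List ℕ} {y : ℝ} (h : Pos w) (hy : 0 < y) (hy1 : y < 1) :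
    gaussMap^[w.length] (cfv w y) = y := by
  induction w with
  | nil => simp [cfv]
  | cons a w ih =>
    have h2 := (Pos.cons h).2
    rw [List.length_cons, Function.iterate_succ_apply]
    simp only [cfv]
    rw [gaussMap_inv (cfv_pos h2 hy).le (cfv_lt_one h2 hy hy1)]
    exact ih h2

lemma gaussMap_zero : gaussMap 0 = 0 := by simp [gaussMap]

lemma gaussMap_rat_terminates (q : ℕ) : ∀ p : ℕ, p < q →
    ∃ n, gaussMap^[n] ((p : ℝ) / q) = 0 := by
  induction q using Nat.strong_induction_on with
  | _ q ih =>
    intro p hp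
    rcases Nat.eq_zero_or_pos p with rfl | hp0
    · exact ⟨0, by simp⟩
    · obtain ⟨n, hn⟩ := ih p hp (q % p) (Nat.mod_lt _ hp0)
      refine ⟨n + 1, ?_⟩
      rw [Function.iterate_succ_apply]
      have hp' : (0 : ℝ) < p := by exact_mod_cast hp0
      have e : gaussMap ((p : ℝ) / q) = ((q % p : ℕ) : ℝ) / p := by
        have h1 : (p : ℝ) / q = 1 / (((q / p : ℕ) : ℝ) + ((q % p : ℕ) : ℝ) / p) := by
          have h2 : (q : ℝ) = p * ((q / p : ℕ) : ℝ) + ((q % p : ℕ) : ℝ) := by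
            exact_mod_cast (Nat.div_add_mod q p).symm
          have h3 : (((q / p : ℕ) : ℝ) + ((q % p : ℕ) : ℝ) / p) = q / p := by
            rw [eq_div_iff hp'.ne', add_mul, div_mul_cancel₀ _ hp'.ne', h2]
            ring
          rw [h3, one_div_div]
        rw [h1, gaussMap_inv (by positivity)]
        rw [div_lt_one hp']
        exact_mod_cast Nat.mod_lt _ hp0
      rw [e, hn]

lemma irrational_of_iter {x : ℝ} (h0 : 0 < x) (h1 : x < 1)
    (h : ∀ N, ∃ n ≥ N, gaussMap^[n] x ≠ 0) : Irrational x := by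
  rintro ⟨r, rfl⟩
  have hr0 : 0 < r := by exact_mod_cast h0
  have hr1 : r < 1 := by exact_mod_cast h1
  have e : (r : ℝ) = (r.num.toNat : ℝ) / r.den := by
    have h2 : (r.num.toNat : ℤ) = r.num := Int.toNat_of_nonneg (Rat.num_nonneg.2 hr0.le)
    have h3 : ((r.num.toNat : ℕ) : ℝ) = (r.num : ℝ) := by exact_mod_cast congrArg (Int.cast (R := ℝ)) h2
    rw [h3]
    exact_mod_cast (Rat.num_div_den r).symm
  have hlt : r.num.toNat < r.den := by
    have h2 : (r.num.toNat : ℝ) < r.den := by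
      rw [e, div_lt_one (by exact_mod_cast r.den_pos)] at h1
      exact h1
    exact_mod_cast h2
  obtain ⟨n, hn⟩ := gaussMap_rat_terminates r.den r.num.toNat hlt
  rw [← e] at hn
  obtain ⟨k, hk, hk0⟩ := h n
  apply hk0
  obtain ⟨l, rfl⟩ := Nat.exists_eq_add_of_le hk
  rw [add_comm, Function.iterate_add_apply, hn]
  exact Function.iterate_fixed gaussMap_zero l

/-- Concatenation of the first `j` words. -/
def pre (ω : ℕ → List ℕ) : ℕ → List ℕ
  | 0 => []
  | j + 1 => pre ω j ++ ω j

/-- `y` is the sequence of tails of the concatenated word `ω`. -/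
def Tails (κ : ℝ) (ω : ℕ → List ℕ) (y : ℕ → ℝ) : Prop :=
  ∀ j, (0 < y j ∧ y j ≤ κ) ∧ y j = cfv (ω j) (y (j + 1))

lemma pre_pos {ω : ℕ → List ℕ} (h : ∀ j, Pos (ω j)) (j : ℕ) : Pos (pre ω j) := by
  induction j with
  | zero => exact Pos.nil
  | succ j ih => exact ih.append (h j)

lemma pre_congr {ω ω' : ℕ → List ℕ} {j : ℕ} (h : ∀ i < j, ω i = ω' i) :
    pre ω j = pre ω' j := by
  induction j with
  | zero => rfl
  | succ j ih => rw [pre, pre, ih (fun i hi => h i (by omega)), h j (by omega)]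

lemma tails_zero {κ : ℝ} {ω : ℕ → List ℕ} {y : ℕ → ℝ} (h : Tails κ ω y) (j : ℕ) :
    y 0 = cfv (pre ω j) (y j) := by
  induction j with
  | zero => simp [pre, cfv]
  | succ j ih => rw [pre, cfv_append, ← (h j).2, ih]

lemma tails_iter {κ : ℝ} (hκ : κ < 1) {ω : ℕ → List ℕ} {y : ℕ → ℝ} (hω : ∀ j, Pos (ω j))
    (h : Tails κ ω y) (j : ℕ) : gaussMap^[(pre ω j).length] (y 0) = y j := by
  rw [tails_zero h j]
  exact gaussMap_iter_cfv (pre_pos hω j) (h j).1.1 ((h j).1.2.trans_lt hκ)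

lemma tails_finite (N : ℕ) : ∀ ω : ℕ → List ℕ, (∀ j, Pos (ω j)) →
    ∃ y : ℕ → ℝ, (∀ j, y j ∈ Set.Icc (0 : ℝ) 1) ∧ ∀ j < N, y j = cfv (ω j) (y (j + 1)) := by
  induction N with
  | zero => intro ω _; exact ⟨fun _ => 0, by simp, by simp⟩
  | succ N ih =>
    intro ω hω
    obtain ⟨y, hy, hy2⟩ := ih (fun j => ω (j + 1)) (fun j => hω _)
    refine ⟨fun j => Nat.casesOn j (cfv (ω 0) (y 0)) y, ?_, ?_⟩
    · intro j
      cases j with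
      | zero => exact ⟨cfv_nonneg (hy 0).1, cfv_le_one (hω 0) (hy 0).1 (hy 0).2⟩
      | succ j => exact hy j
    · intro j hj
      cases j with
      | zero => rfl
      | succ j => exact hy2 j (by omega)

lemma tails_exists {κ : ℝ} {ω : ℕ → List ℕ} (hω : ∀ j, Pos (ω j))
    (hne : ∀ j, ω j ≠ []) (hκ : ∀ j, ∀ y ∈ Set.Icc (0 : ℝ) 1, cfv (ω j) y ≤ κ) :
    ∃ y, Tails κ ω y := by
  let K : Set (ℕ → ℝ) := Set.pi Set.univ (fun _ => Set.Icc (0 : ℝ) 1)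
  let t : ℕ → Set (ℕ → ℝ) := fun N => K ∩ ⋂ j ∈ Set.Iio N,
    {y | y j * ((cq (ω j) : ℝ) + cq' (ω j) * y (j + 1)) =
      (cp (ω j) : ℝ) + cp' (ω j) * y (j + 1)}
  have key : ∀ (y : ℕ → ℝ) (j : ℕ), y ∈ K →
      (y j * ((cq (ω j) : ℝ) + cq' (ω j) * y (j + 1)) =
      (cp (ω j) : ℝ) + cp' (ω j) * y (j + 1) ↔ y j = cfv (ω j) (y (j + 1))) := by
    intro y j hy
    have h0 : 0 ≤ y (j + 1) := (hy (j + 1) trivial).1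
    rw [cfv_eq (hω j) h0, eq_div_iff (cfv_den_pos (hω j) h0).ne']
  have hne' : (⋂ N, t N).Nonempty := by
    apply IsCompact.nonempty_iInter_of_sequence_nonempty_isCompact_isClosed
    · intro N
      apply Set.inter_subset_inter_right
      apply Set.biInter_subset_biInter_left
      intro j hj
      simp only [Set.mem_Iio] at hj ⊢
      omega
    · intro N
      obtain ⟨y, hy, hy2⟩ := tails_finite N ω hω
      have hyK : y ∈ K := fun j _ => hy j
      refine ⟨y, hyK, ?_⟩
      simp only [Set.mem_iInter, Set.mem_Iio, Set.mem_ofPred_eq]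
      intro j hj
      exact (key y j hyK).2 (hy2 j hj)
    · have : t 0 = K := by simp [t]
      rw [this]
      exact isCompact_univ_pi (fun _ => isCompact_Icc)
    · intro N
      apply IsClosed.inter
      · exact isClosed_set_pi (fun _ _ => isClosed_Icc)
      · apply isClosed_biInter
        intro j _
        apply isClosed_eq <;> fun_prop
  obtain ⟨y, hy⟩ := hne'
  have hyt : ∀ N, y ∈ t N := fun N => Set.mem_iInter.1 hy N
  have hyK : y ∈ K := (hyt 0).1
  have hrec : ∀ j, y j = cfv (ω j) (y (j + 1)) := by
    intro j
    have h2 := (hyt (j + 1)).2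
    simp only [Set.mem_iInter, Set.mem_Iio, Set.mem_ofPred_eq] at h2
    exact (key y j hyK).1 (h2 j (by omega))
  refine ⟨y, fun j => ⟨⟨?_, ?_⟩, hrec j⟩⟩
  · rw [hrec j]
    have h0 := (hyK (j + 1) trivial).1
    cases h : ω j with
    | nil => exact absurd h (hne j)
    | cons a w =>
      have hp := hω j
      rw [h] at hp
      have h1 : (1 : ℝ) ≤ a := by exact_mod_cast (Pos.cons hp).1
      have := cfv_nonneg (w := w) h0
      simp only [cfv]
      positivity
  · rw [hrec j]
    exact hκ j _ (hyK (j + 1) trivial)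


/-! ### Part C: mass distribution -/

section MassDistribution

open scoped ENNReal

/-- discrete measurable structure on words -/
instance wordMeasurableSpace : MeasurableSpace (List ℕ) := ⊤

/-- The law of a single step. -/
noncomputable def stepMeasure (D : Finset (List ℕ)) (p : List ℕ → ℝ) : Measure (List ℕ) :=
  ∑ w ∈ D, ENNReal.ofReal (p w) • Measure.dirac w

lemma stepMeasure_apply (D : Finset (List ℕ)) (p : List ℕ → ℝ) (hp : ∀ w, 0 ≤ p w)
    (V : Finset (List ℕ)) (hV : V ⊆ D) :
    stepMeasure D p (V : Set (List ℕ)) = ENNReal.ofReal (∑ w ∈ V, p w) := by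
  classical
  unfold stepMeasure
  rw [Measure.finsetSum_apply]
  simp only [Measure.smul_apply, smul_eq_mul]
  rw [ENNReal.ofReal_sum_of_nonneg (fun w _ => hp w)]
  rw [← Finset.sum_subset hV]
  · apply Finset.sum_congr rfl
    intro w hw
    rw [Measure.dirac_apply' _ (by trivial)]
    simp [Set.indicator, hw]
  · intro w _ hw
    rw [Measure.dirac_apply' _ (by trivial)]
    simp [Set.indicator, hw]

lemma stepMeasure_univ (D : Finset (List ℕ)) (p : List ℕ → ℝ) (hp : ∀ w, 0 ≤ p w) :
    stepMeasure D p Set.univ = ENNReal.ofReal (∑ w ∈ D, p w) := by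
  classical
  unfold stepMeasure
  rw [Measure.finsetSum_apply]
  simp only [Measure.smul_apply, smul_eq_mul]
  rw [ENNReal.ofReal_sum_of_nonneg (fun w _ => hp w)]
  simp

theorem mass_distribution (D : ℕ → Finset (List ℕ)) (p : ℕ → List ℕ → ℝ) (κ s C : ℝ)
    (hκ : κ < 1) (hs : 0 < s) (hC : 0 < C)
    (hDpos : ∀ j, ∀ w ∈ D j, Pos w) (hDne : ∀ j, ∀ w ∈ D j, w ≠ [])
    (hDκ : ∀ j, ∀ w ∈ D j, ∀ y ∈ Set.Icc (0 : ℝ) 1, cfv w y ≤ κ)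
    (hp0 : ∀ j w, 0 ≤ p j w) (hp1 : ∀ j, ∑ w ∈ D j, p j w = 1)
    (hp2 : ∀ j, ∀ w ∈ D j, p j w ≤ 1 / 2)
    (hH : ∀ j, ∀ ω : ℕ → List ℕ, (∀ i, ω i ∈ D i) → ∀ V ⊆ D j, V.Nontrivial →
      ∃ w ∈ V, ∃ w' ∈ V, ∃ g : ℝ, 0 ≤ g ∧
        (∀ y ∈ Set.Icc (0 : ℝ) κ, ∀ y' ∈ Set.Icc (0 : ℝ) κ, g ≤ |cfv w y - cfv w' y'|) ∧
        (∏ i ∈ Finset.range j, p i (ω i)) * ∑ w ∈ V, p j w ≤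
          C * (g / (4 * (cq (pre ω j) : ℝ) ^ 2)) ^ s)
    (S : Set ℝ)
    (hS : ∀ ω : ℕ → List ℕ, (∀ i, ω i ∈ D i) → ∀ y, Tails κ ω y → y 0 ∈ S) :
    ENNReal.ofReal s ≤ dimH S := by
  classical
  let P : ℕ → Measure (List ℕ) := fun j => stepMeasure (D j) (p j)
  have hP : ∀ j, IsProbabilityMeasure (P j) := fun j =>
    ⟨by simp only [P]; rw [stepMeasure_univ _ _ (hp0 j), hp1 j]; simp⟩
  let μ : Measure (ℕ → List ℕ) := Measure.infinitePi P
  let Ω : Set (ℕ → List ℕ) := {ω | ∀ i, ω i ∈ D i}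
  have hΩ : μ Ωᶜ = 0 := by
    have h1 : Ωᶜ = ⋃ i, {ω : ℕ → List ℕ | ω i ∉ D i} := by
      ext ω; simp [Ω]
    rw [h1]
    apply measure_iUnion_null
    intro i
    have h2 : {ω : ℕ → List ℕ | ω i ∉ D i} =
        Set.pi (({i} : Finset ℕ) : Set ℕ) (fun _ => ((D i : Set (List ℕ))ᶜ)) := by
      ext ω; simp
    rw [h2, Measure.infinitePi_pi _ (fun _ _ => by trivial)]
    simp only [Finset.prod_singleton]
    rw [prob_compl_eq_zero_iff (by trivial)]
    simp only [P]
    rw [stepMeasure_apply _ _ (hp0 i) _ (le_refl _), hp1]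
    simp
  -- cylinders
  have hcyl : ∀ (ω : ℕ → List ℕ), ω ∈ Ω → ∀ (j : ℕ) (V : Finset (List ℕ)), V ⊆ D j →
      μ {ω' | (∀ i < j, ω' i = ω i) ∧ ω' j ∈ V} ≤
        ENNReal.ofReal ((∏ i ∈ Finset.range j, p i (ω i)) * ∑ w ∈ V, p j w) := by
    intro ω hω j V hV
    let U : ℕ → Finset (List ℕ) := fun i => if i < j then {ω i} else V
    have h2 : {ω' : ℕ → List ℕ | (∀ i < j, ω' i = ω i) ∧ ω' j ∈ V} =
        Set.pi ((Finset.range (j + 1) : Finset ℕ) : Set ℕ) (fun i => (U i : Set (List ℕ))) := by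
      ext ω'
      simp only [Set.mem_ofPred_eq, Set.mem_pi, Finset.mem_coe, Finset.mem_range, U]
      constructor
      · rintro ⟨h3, h4⟩ i hi
        split_ifs with h5
        · simp [h3 i h5]
        · have : i = j := by omega
          subst this; exact h4
      · intro h
        constructor
        · intro i hi
          have := h i (by omega)
          simpa [hi] using this
        · simpa using h j (by omega)
    rw [h2, Measure.infinitePi_pi _ (fun _ _ => by trivial), Finset.prod_range_succ]
    rw [ENNReal.ofReal_mul (Finset.prod_nonneg fun i _ => hp0 _ _),
      ENNReal.ofReal_prod_of_nonneg (fun i _ => hp0 _ _)]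
    apply le_of_eq
    congr 1
    · apply Finset.prod_congr rfl
      intro i hi
      have hi' : i < j := Finset.mem_range.1 hi
      simp only [U, hi', if_true, P]
      rw [stepMeasure_apply _ _ (hp0 i) _ (by simpa using hω i)]
      simp
    · simp only [U, lt_irrefl, if_false, P]
      rw [stepMeasure_apply _ _ (hp0 j) _ hV]
  have hex : ∀ ω : ℕ → List ℕ, ω ∈ Ω → ∃ y, Tails κ ω y := fun ω hω =>
    tails_exists (fun j => hDpos j _ (hω j)) (fun j => hDne j _ (hω j))
      (fun j => hDκ j _ (hω j))
  let Y : (ℕ → List ℕ) → ℕ → ℝ := fun ω => if h : ω ∈ Ω then (hex ω h).choose else fun _ => 0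
  have hY : ∀ ω ∈ Ω, Tails κ ω (Y ω) := by
    intro ω hω
    simp only [Y, dif_pos hω]
    exact (hex ω hω).choose_spec
  -- the main estimate
  have main : ∀ U : Set ℝ, μ {ω | ω ∈ Ω ∧ Y ω 0 ∈ U} ≤
      ENNReal.ofReal C * (Metric.ediam U) ^ s := by
    intro U
    by_cases hsub : ∃ j, ∃ ω ω', (ω ∈ Ω ∧ Y ω 0 ∈ U) ∧ (ω' ∈ Ω ∧ Y ω' 0 ∈ U) ∧ ω j ≠ ω' j
    · let j := Nat.find hsub
      obtain ⟨ω, ω', hω, hω', hne⟩ := Nat.find_spec hsub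
      have hmin : ∀ i < j, ∀ ω₁ ω₂, (ω₁ ∈ Ω ∧ Y ω₁ 0 ∈ U) → (ω₂ ∈ Ω ∧ Y ω₂ 0 ∈ U) →
          ω₁ i = ω₂ i := by
        intro i hi ω₁ ω₂ h1 h2
        by_contra h3
        exact Nat.find_min hsub hi ⟨ω₁, ω₂, h1, h2, h3⟩
      let V : Finset (List ℕ) := (D j).filter (fun w => ∃ ω₁, (ω₁ ∈ Ω ∧ Y ω₁ 0 ∈ U) ∧ ω₁ j = w)
      have hV : V ⊆ D j := Finset.filter_subset _ _
      have hVn : V.Nontrivial := by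
        refine ⟨ω j, ?_, ω' j, ?_, hne⟩
        · simp only [V, Finset.coe_filter, Set.mem_ofPred_eq]
          exact ⟨hω.1 j, ω, hω, rfl⟩
        · simp only [V, Finset.coe_filter, Set.mem_ofPred_eq]
          exact ⟨hω'.1 j, ω', hω', rfl⟩
      obtain ⟨w, hw, w', hw', g, hg, hgap, hmass⟩ := hH j ω hω.1 V hV hVn
      obtain ⟨_, ω₁, hω₁, rfl⟩ := Finset.mem_filter.1 hw
      obtain ⟨_, ω₂, hω₂, rfl⟩ := Finset.mem_filter.1 hw'
      have e1 : pre ω₁ j = pre ω j := pre_congr (fun i hi => hmin i hi _ _ hω₁ hω)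
      have e2 : pre ω₂ j = pre ω j := pre_congr (fun i hi => hmin i hi _ _ hω₂ hω)
      have t1 := hY ω₁ hω₁.1
      have t2 := hY ω₂ hω₂.1
      have hprep : Pos (pre ω j) := pre_pos (fun i => hDpos i _ (hω.1 i)) j
      have hd : g / (4 * (cq (pre ω j) : ℝ) ^ 2) ≤ |Y ω₁ 0 - Y ω₂ 0| := by
        rw [tails_zero t1 j, tails_zero t2 j, e1, e2]
        refine le_trans ?_ (cfv_dist hprep ⟨(t1 j).1.1.le, (t1 j).1.2.trans hκ.le⟩
          ⟨(t2 j).1.1.le, (t2 j).1.2.trans hκ.le⟩)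
        apply div_le_div_of_nonneg_right _ (by positivity)
        rw [(t1 j).2, (t2 j).2]
        exact hgap _ ⟨(t1 (j + 1)).1.1.le, (t1 (j + 1)).1.2⟩ _
          ⟨(t2 (j + 1)).1.1.le, (t2 (j + 1)).1.2⟩
      have hd2 : ENNReal.ofReal (g / (4 * (cq (pre ω j) : ℝ) ^ 2)) ≤ Metric.ediam U := by
        refine le_trans (ENNReal.ofReal_le_ofReal hd) ?_
        rw [← Real.dist_eq, ← edist_dist]
        exact Metric.edist_le_ediam_of_mem hω₁.2 hω₂.2
      calc μ {ω | ω ∈ Ω ∧ Y ω 0 ∈ U}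
          ≤ μ {ω' | (∀ i < j, ω' i = ω i) ∧ ω' j ∈ V} := by
            apply measure_mono
            intro ω₃ hω₃
            refine ⟨fun i hi => hmin i hi _ _ hω₃ hω, ?_⟩
            exact Finset.mem_filter.2 ⟨hω₃.1 j, ω₃, hω₃, rfl⟩
        _ ≤ _ := hcyl ω hω.1 j V hV
        _ ≤ ENNReal.ofReal (C * (g / (4 * (cq (pre ω j) : ℝ) ^ 2)) ^ s) :=
            ENNReal.ofReal_le_ofReal hmass
        _ = ENNReal.ofReal C * (ENNReal.ofReal (g / (4 * (cq (pre ω j) : ℝ) ^ 2))) ^ s := by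
            rw [ENNReal.ofReal_mul hC.le, ENNReal.ofReal_rpow_of_nonneg (by positivity) hs.le]
        _ ≤ _ := by gcongr
    · push Not at hsub
      have h0 : μ {ω | ω ∈ Ω ∧ Y ω 0 ∈ U} = 0 := by
        by_cases hemp : ∃ ω, ω ∈ Ω ∧ Y ω 0 ∈ U
        · obtain ⟨ω, hω⟩ := hemp
          have hb : ∀ j : ℕ, μ {ω | ω ∈ Ω ∧ Y ω 0 ∈ U} ≤ ENNReal.ofReal ((1 / 2) ^ j) := by
            intro j
            calc μ {ω | ω ∈ Ω ∧ Y ω 0 ∈ U}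
                ≤ μ {ω' | (∀ i < j, ω' i = ω i) ∧ ω' j ∈ D j} := by
                  apply measure_mono
                  intro ω₃ hω₃
                  exact ⟨fun i _ => hsub i _ _ hω₃ hω, hω₃.1 j⟩
              _ ≤ _ := hcyl ω hω.1 j (D j) le_rfl
              _ ≤ _ := by
                  apply ENNReal.ofReal_le_ofReal
                  rw [hp1, mul_one]
                  calc ∏ i ∈ Finset.range j, p i (ω i) ≤ ∏ i ∈ Finset.range j, (1 / 2 : ℝ) :=
                        Finset.prod_le_prod (fun i _ => hp0 _ _) (fun i _ => hp2 i _ (hω.1 i))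
                    _ = _ := by simp
          have hlim : Tendsto (fun j : ℕ => ENNReal.ofReal ((1 / 2 : ℝ) ^ j)) atTop (nhds 0) := by
            rw [← ENNReal.ofReal_zero]
            apply ENNReal.tendsto_ofReal
            exact tendsto_pow_atTop_nhds_zero_of_lt_one (by norm_num) (by norm_num)
          exact le_antisymm (ge_of_tendsto' hlim hb) (zero_le)
        · have : {ω | ω ∈ Ω ∧ Y ω 0 ∈ U} = ∅ := by
            ext ω
            simp only [Set.mem_ofPred_eq, Set.mem_empty_iff_false, iff_false]
            exact fun h => hemp ⟨ω, h⟩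
          rw [this, measure_empty]
      rw [h0]
      exact zero_le
  -- conclusion
  have hpos : μH[s] S ≠ 0 := by
    intro h0
    rw [Measure.hausdorffMeasure_apply] at h0
    have h1 := le_iSup₂ (f := fun (r : ℝ≥0∞) (_ : 0 < r) =>
      ⨅ (t : ℕ → Set ℝ) (_ : S ⊆ ⋃ n, t n) (_ : ∀ n, Metric.ediam (t n) ≤ r),
        ∑' n, ⨆ _ : (t n).Nonempty, Metric.ediam (t n) ^ s) 1 (by norm_num)
    rw [h0] at h1
    have hC0 : ENNReal.ofReal C ≠ 0 := by simpa using hC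
    have hlow : (ENNReal.ofReal C)⁻¹ ≤ ⨅ (t : ℕ → Set ℝ) (_ : S ⊆ ⋃ n, t n)
        (_ : ∀ n, Metric.ediam (t n) ≤ 1), ∑' n, ⨆ _ : (t n).Nonempty, Metric.ediam (t n) ^ s := by
      refine le_iInf fun t => le_iInf fun hcov => le_iInf fun _ => ?_
      suffices h : 1 ≤ ENNReal.ofReal C * ∑' n, ⨆ _ : (t n).Nonempty, Metric.ediam (t n) ^ s by
        rw [← one_div]
        apply ENNReal.div_le_of_le_mul
        rwa [mul_comm] at h
      have hμ1 : μ Ω = 1 := by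
        have := measure_add_measure_compl₀ (μ := μ) (s := Ω)
          (NullMeasurableSet.of_compl (NullMeasurableSet.of_null hΩ))
        rw [hΩ, add_zero, measure_univ] at this
        exact this
      rw [← hμ1, ← ENNReal.tsum_mul_left]
      calc μ Ω ≤ μ (⋃ n, {ω | ω ∈ Ω ∧ Y ω 0 ∈ t n}) := by
            apply measure_mono
            intro ω hω
            obtain ⟨n, hn⟩ := Set.mem_iUnion.1 (hcov (hS ω hω _ (hY ω hω)))
            exact Set.mem_iUnion.2 ⟨n, hω, hn⟩
        _ ≤ ∑' n, μ {ω | ω ∈ Ω ∧ Y ω 0 ∈ t n} := measure_iUnion_le _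
        _ ≤ _ := by
            apply ENNReal.tsum_le_tsum
            intro n
            by_cases hn : (t n).Nonempty
            · simp only [hn, ciSup_pos]
              exact main (t n)
            · have : {ω | ω ∈ Ω ∧ Y ω 0 ∈ t n} = ∅ := by
                rw [Set.not_nonempty_iff_eq_empty.1 hn]; simp
              rw [this, measure_empty]
              exact zero_le
    have h3 := hlow.trans h1
    rw [nonpos_iff_eq_zero, ENNReal.inv_eq_zero] at h3
    exact ENNReal.ofReal_ne_top h3
  have hs' : ((s.toNNReal : NNReal) : ℝ) = s := Real.coe_toNNReal s hs.le
  have := le_dimH_of_hausdorffMeasure_ne_zero (s := S) (d := s.toNNReal) (by rw [hs']; exact hpos)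
  exact this

end MassDistribution


/-! ### Part D: pressure -/

/-- `Bm A i = A_0 ⋯ A_{i-1}`. -/
noncomputable def Bm (A : ℕ → ℝ) (i : ℕ) : ℝ := ∏ j ∈ Finset.range i, A j

/-- The geometric factor of the `i`-th pressure function. -/
noncomputable def lam (A : ℕ → ℝ) (s : ℝ) (i : ℕ) : ℝ :=
  (Bm A i) ^ (1 - s) * (Bm A (i + 1)) ^ (-s)

/-- The digit word of a tuple of positive integers. -/
def wordOf {n : ℕ} (a : Fin n → ℕ+) : List ℕ := List.ofFn (fun i => (a i : ℕ))

lemma wordOf_pos {n : ℕ} (a : Fin n → ℕ+) : Pos (wordOf a) := by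
  intro b hb
  obtain ⟨i, rfl⟩ := (List.mem_ofFn' _ _).1 hb
  exact (a i).pos

lemma wordOf_inj {n : ℕ} : Function.Injective (wordOf (n := n)) := by
  intro a b h
  have := List.ofFn_injective h
  funext i
  exact PNat.coe_injective (congrFun this i)

lemma pressure_large (f : ℕ → ENNReal)
    (h : 0 < Filter.atTop.limsup (fun n : ℕ => (((n : ℝ)⁻¹ : ℝ) : EReal) * ENNReal.log (f n)))
    (R : ℝ) : ∃ n, ENNReal.ofReal R < f n := by
  obtain ⟨δ, hδ0, hδ⟩ := EReal.lt_iff_exists_real_btwn.1 h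
  have hδ0' : 0 < δ := by exact_mod_cast hδ0
  have hfreq := Filter.frequently_lt_of_lt_limsup (by isBoundedDefault) hδ
  have hev : ∀ᶠ n : ℕ in atTop, R ≤ Real.exp (n * δ) ∧ 1 ≤ n := by
    refine Filter.Eventually.and ?_ (eventually_ge_atTop 1)
    have : Tendsto (fun n : ℕ => Real.exp (n * δ)) atTop atTop :=
      Real.tendsto_exp_atTop.comp (tendsto_natCast_atTop_atTop.atTop_mul_const hδ0')
    exact this.eventually_ge_atTop R
  obtain ⟨n, hn, hR, hn1⟩ := (hfreq.and_eventually hev).exists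
  refine ⟨n, ?_⟩
  by_contra hcon
  push Not at hcon
  have h1 : f n ≤ ENNReal.ofReal (Real.exp (n * δ)) := hcon.trans (ENNReal.ofReal_le_ofReal hR)
  have h2 : ENNReal.log (f n) ≤ ((n * δ : ℝ) : EReal) := by
    have := ENNReal.log_le_log h1
    rwa [ENNReal.log_ofReal_of_pos (Real.exp_pos _), Real.log_exp] at this
  have hn0 : (0 : ℝ) < n := by exact_mod_cast hn1
  have h3 : (((n : ℝ)⁻¹ : ℝ) : EReal) * ENNReal.log (f n) ≤
      (((n : ℝ)⁻¹ : ℝ) : EReal) * ((n * δ : ℝ) : EReal) := by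
    apply mul_le_mul_of_nonneg_left h2
    exact_mod_cast (inv_pos.2 hn0).le
  rw [← EReal.coe_mul, inv_mul_cancel_left₀ hn0.ne'] at h3
  exact absurd (hn.trans_le h3) (lt_irrefl _)

lemma Bm_pos {A : ℕ → ℝ} {m : ℕ} (hA : ∀ i < m, 1 < A i) {i : ℕ} (hi : i ≤ m) : 0 < Bm A i :=
  Finset.prod_pos fun j hj => by
    have := hA j (lt_of_lt_of_le (Finset.mem_range.1 hj) hi)
    linarith

lemma lam_pos {A : ℕ → ℝ} {m : ℕ} (hA : ∀ i < m, 1 < A i) (s : ℝ) {i : ℕ} (hi : i < m) :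
    0 < lam A s i :=
  mul_pos (Real.rpow_pos_of_pos (Bm_pos hA hi.le) _) (Real.rpow_pos_of_pos (Bm_pos hA hi) _)

lemma term_eq {B₁ B₂ q s : ℝ} (h1 : 0 < B₁) (h2 : 0 < B₂) (hq : 0 < q) (n : ℕ) :
    B₂ ^ ((1 - s) * (n : ℝ)) * (B₁ ^ n * q ^ 2) ^ (-s) =
      (B₂ ^ (1 - s) * B₁ ^ (-s)) ^ n * q ^ (-(2 * s)) := by
  rw [Real.mul_rpow (by positivity) (by positivity), Real.rpow_mul h2.le, Real.rpow_natCast,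
    mul_pow, ← Real.rpow_natCast B₁ n, ← Real.rpow_mul h1.le, ← Real.rpow_natCast (B₁ ^ (-s)) n,
    ← Real.rpow_mul h1.le, ← Real.rpow_natCast q 2, ← Real.rpow_mul hq.le, mul_comm (-s) (n : ℝ)]
  push_cast
  rw [show (2 : ℝ) * -s = -(2 * s) by ring]
  ring

lemma pressure_words {A : ℕ → ℝ} {m : ℕ} (hA : ∀ i < m, 1 < A i) {s : ℝ} (hs : 0 ≤ s) {i : ℕ}
    (hi : i < m) (hlt : s < dimNum A i) (R : ℝ) :
    ∃ n, ENNReal.ofReal R < ∑' a : Fin n → ℕ+,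
      ENNReal.ofReal (lam A s i ^ n * (cq (wordOf a) : ℝ) ^ (-(2 * s))) := by
  have hB1 : 0 < Bm A (i + 1) := Bm_pos hA hi
  have hB0 : 0 < Bm A i := Bm_pos hA hi.le
  have hq : ∀ {n : ℕ} (a : Fin n → ℕ+), (0 : ℝ) < cq (wordOf a) := fun a => by
    exact_mod_cast one_le_cq (wordOf_pos a)
  apply pressure_large
  unfold dimNum at hlt
  by_cases h0 : i = 0
  · subst h0
    rw [if_pos rfl] at hlt
    unfold sExp at hlt
    have hn := notMem_of_lt_csInf hlt ⟨0, fun x hx => hx.1⟩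
    rw [Set.mem_ofPred_eq] at hn
    push Not at hn
    have h3 := hn hs
    convert! h3 using 6 with n a
    funext a
    congr 1
    have := term_eq (s := s) hB1 one_pos (hq a) n
    rw [Real.one_rpow, one_mul] at this
    rw [contQ_eq, show betaProd A 0 = Bm A 1 from rfl]
    refine Eq.trans ?_ this.symm
    simp [lam, Bm]
  · rw [if_neg h0] at hlt
    unfold gExp at hlt
    have hn := notMem_of_lt_csInf hlt ⟨0, fun x hx => hx.1⟩
    rw [Set.mem_ofPred_eq] at hn
    push Not at hn
    have h3 := hn hs
    convert! h3 using 6 with n a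
    funext a
    congr 1
    have := term_eq (s := s) hB1 hB0 (hq a) n
    rw [contQ_eq, show betaProd A i = Bm A (i + 1) from rfl,
      show betaProd A (i - 1) = Bm A i by
        unfold betaProd Bm; rw [Nat.sub_add_cancel (Nat.pos_of_ne_zero h0)]]
    exact this.symm

lemma exists_words {A : ℕ → ℝ} {m : ℕ} (hA : ∀ i < m, 1 < A i) {s : ℝ} (hs : 0 ≤ s) {i : ℕ}
    (hi : i < m) (hlt : s < dimNum A i) (R : ℝ) (hR : 0 ≤ R) :
    ∃ (n : ℕ) (W : Finset (List ℕ)), (∀ w ∈ W, w.length = n ∧ Pos w) ∧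
      R < lam A s i ^ n * ∑ w ∈ W, (cq w : ℝ) ^ (-(2 * s)) := by
  classical
  obtain ⟨n, hn⟩ := pressure_words hA hs hi hlt R
  rw [ENNReal.tsum_eq_iSup_sum, lt_iSup_iff] at hn
  obtain ⟨F, hF⟩ := hn
  have hl := lam_pos hA s hi
  refine ⟨n, F.image wordOf, ?_, ?_⟩
  · intro w hw
    obtain ⟨a, _, rfl⟩ := Finset.mem_image.1 hw
    exact ⟨by simp [wordOf], wordOf_pos a⟩
  · rw [Finset.sum_image (fun a _ b _ h => wordOf_inj h), Finset.mul_sum]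
    rw [← ENNReal.ofReal_sum_of_nonneg (fun a _ => by positivity)] at hF
    exact (ENNReal.ofReal_lt_ofReal_iff_of_nonneg hR).1 hF

lemma tele_sum (q q' : ℝ) (hq : 0 < q) (hq' : 0 ≤ q') :
    ∑' a : ℕ+, ENNReal.ofReal (1 / (((a : ℕ) * q + q') * ((a : ℕ) * q + q' + q))) ≤
      ENNReal.ofReal (1 / (q * (q + q'))) := by
  rw [tsum_pnat_eq_tsum_succ (f := fun a : ℕ =>
    ENNReal.ofReal (1 / (((a : ℕ) * q + q') * ((a : ℕ) * q + q' + q))))]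
  apply ENNReal.tsum_le_of_sum_range_le
  intro N
  rw [← ENNReal.ofReal_sum_of_nonneg (fun a _ => by positivity)]
  apply ENNReal.ofReal_le_ofReal
  have h : ∑ i ∈ Finset.range N, 1 / ((((i + 1 : ℕ) : ℝ) * q + q') * (((i + 1 : ℕ) : ℝ) * q + q' + q))
      = 1 / (q * (q + q')) - 1 / (q * ((N + 1) * q + q')) := by
    induction N with
    | zero => simp
    | succ N ih =>
      rw [Finset.sum_range_succ, ih]
      push_cast
      have h1 : 0 < q + q' := by positivity
      have h2 : 0 < ((N : ℝ) + 1) * q + q' := by positivity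
      have h3 : 0 < ((N : ℝ) + 1 + 1) * q + q' := by positivity
      have h4 : ((N : ℝ) + 1) * q + q' + q = ((N : ℝ) + 1 + 1) * q + q' := by ring
      rw [h4]
      field_simp
      ring
  rw [h]
  have : 0 ≤ 1 / (q * (((N : ℝ) + 1) * q + q')) := by positivity
  linarith

lemma sum_len_le (n : ℕ) : ∑' a : Fin n → ℕ+,
    ENNReal.ofReal (1 / ((cq (wordOf a) : ℝ) * (cq (wordOf a) + cq' (wordOf a)))) ≤ 1 := by
  induction n with
  | zero =>
    rw [tsum_eq_single default (fun b hb => absurd (Subsingleton.elim b default) hb)]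
    simp [wordOf]
  | succ n ih =>
    rw [← (Fin.snocEquiv (fun _ => ℕ+)).tsum_eq, ENNReal.tsum_prod', ENNReal.tsum_comm]
    refine le_trans (ENNReal.tsum_le_tsum fun b => ?_) ih
    have hq : (1 : ℝ) ≤ cq (wordOf b) := by exact_mod_cast one_le_cq (wordOf_pos b)
    refine le_trans (le_of_eq ?_) (tele_sum (cq (wordOf b)) (cq' (wordOf b)) (by linarith)
      (by positivity))
    apply tsum_congr
    intro a
    have e : wordOf (Fin.snocEquiv (fun _ => ℕ+) (a, b)) = wordOf b ++ [(a : ℕ)] := by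
      unfold wordOf
      rw [List.ofFn_succ', List.concat_eq_append]
      simp [Fin.snocEquiv]
    rw [e, cq_snoc, cq'_snoc]
    push_cast
    rfl

lemma dimNum_zero_le {A : ℕ → ℝ} (hA : 1 < A 0) : dimNum A 0 ≤ 1 := by
  unfold dimNum
  rw [if_pos rfl]
  unfold sExp
  apply csInf_le ⟨0, fun x hx => hx.1⟩
  refine ⟨zero_le_one, ?_⟩
  have hb : betaProd A 0 = A 0 := by simp [betaProd]
  rw [hb]
  have hsum : ∀ n : ℕ, ∑' a : Fin n → ℕ+,
      ENNReal.ofReal ((A 0 ^ n * ((contQ n fun i => (a i : ℕ)) : ℝ) ^ 2) ^ (-(1 : ℝ))) ≤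
      ENNReal.ofReal 2 := by
    intro n
    have h1 : ∀ a : Fin n → ℕ+,
        ENNReal.ofReal ((A 0 ^ n * ((contQ n fun i => (a i : ℕ)) : ℝ) ^ 2) ^ (-(1 : ℝ))) ≤
        ENNReal.ofReal 2 * ENNReal.ofReal
          (1 / ((cq (wordOf a) : ℝ) * (cq (wordOf a) + cq' (wordOf a)))) := by
      intro a
      rw [← ENNReal.ofReal_mul (by norm_num), contQ_eq]
      apply ENNReal.ofReal_le_ofReal
      change (A 0 ^ n * (cq (wordOf a) : ℝ) ^ 2) ^ (-(1 : ℝ)) ≤ _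
      rw [Real.rpow_neg_one]
      have hq : (1 : ℝ) ≤ cq (wordOf a) := by exact_mod_cast one_le_cq (wordOf_pos a)
      have hq' : (cq' (wordOf a) : ℝ) ≤ cq (wordOf a) := by
        exact_mod_cast cq'_le_cq (wordOf_pos a)
      have hq0 : (0 : ℝ) ≤ cq' (wordOf a) := by positivity
      have hA' : 1 ≤ A 0 ^ n := one_le_pow₀ hA.le
      rw [mul_one_div, ← one_div, div_le_div_iff₀ (by positivity) (by positivity)]
      have h5 : (cq (wordOf a) : ℝ) * (cq (wordOf a) + cq' (wordOf a)) ≤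
        2 * (cq (wordOf a) : ℝ) ^ 2 := by nlinarith
      have h6 : (cq (wordOf a) : ℝ) ^ 2 ≤ A 0 ^ n * (cq (wordOf a) : ℝ) ^ 2 :=
        le_mul_of_one_le_left (by positivity) hA'
      linarith
    refine le_trans (ENNReal.tsum_le_tsum h1) ?_
    rw [ENNReal.tsum_mul_left]
    calc _ ≤ ENNReal.ofReal 2 * 1 := by gcongr; exact sum_len_le n
      _ = _ := mul_one _
  have hlim : Tendsto (fun n : ℕ => (((n : ℝ)⁻¹ * Real.log 2 : ℝ) : EReal)) atTop (nhds 0) := by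
    rw [← EReal.coe_zero]
    apply (continuous_coe_real_ereal.tendsto 0).comp
    have := (tendsto_inv_atTop_nhds_zero_nat (𝕜 := ℝ)).mul_const (Real.log 2)
    simpa using this
  rw [← hlim.limsup_eq]
  apply Filter.limsup_le_limsup
  · apply Filter.Eventually.of_forall
    intro n
    simp only []
    rw [EReal.coe_mul]
    apply mul_le_mul_of_nonneg_left
    · rw [← ENNReal.log_ofReal_of_pos (by norm_num : (0 : ℝ) < 2)]
      exact ENNReal.log_le_log (hsum n)
    · exact_mod_cast inv_nonneg.2 (Nat.cast_nonneg n)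
  · isBoundedDefault
  · isBoundedDefault


/-! ### Part E: the construction -/

lemma free_low {M : ℕ} {w : List ℕ} (hw : Pos w) (hM : ∀ a ∈ w, a ≤ M) (hM2 : 2 ≤ M) {y : ℝ}
    (hy : 0 ≤ y) (hy1 : y ≤ 1) : 1 / ((M : ℝ) + 1) ≤ cfv (w ++ [2]) y := by
  have h2 : Pos [2] := by intro a ha; simp at ha; omega
  cases w with
  | nil =>
    have : (2 : ℝ) ≤ M := by exact_mod_cast hM2
    simp only [List.nil_append, cfv]
    apply one_div_le_one_div_of_le <;> push_cast <;> linarith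
  | cons a v =>
    have ha : (a : ℝ) ≤ M := by exact_mod_cast hM a (by simp)
    have ha1 : (1 : ℝ) ≤ a := by exact_mod_cast hw.cons.1
    have h0 : 0 ≤ cfv (v ++ [2]) y := cfv_nonneg hy
    have h1 : cfv (v ++ [2]) y ≤ 1 := cfv_le_one (hw.cons.2.append h2) hy hy1
    simp only [List.cons_append, cfv]
    apply one_div_le_one_div_of_le <;> linarith

lemma free_kappa {M : ℕ} {w : List ℕ} (hw : Pos w) (hM : ∀ a ∈ w, a ≤ M) (hM2 : 2 ≤ M) {y : ℝ}
    (hy : 0 ≤ y) (hy1 : y ≤ 1) : cfv (w ++ [2]) y ≤ ((M : ℝ) + 1) / (M + 2) := by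
  have hMr : (2 : ℝ) ≤ M := by exact_mod_cast hM2
  cases w with
  | nil =>
    simp only [List.nil_append, cfv]
    rw [div_le_div_iff₀ (by push_cast; linarith) (by linarith)]
    push_cast
    nlinarith
  | cons a v =>
    have ha1 : (1 : ℝ) ≤ a := by exact_mod_cast hw.cons.1
    have h0 := free_low hw.cons.2 (fun b hb => hM b (by simp [hb])) hM2 hy hy1
    have hpos : 0 < 1 / ((M : ℝ) + 1) := by positivity
    simp only [List.cons_append, cfv]
    calc 1 / ((a : ℝ) + cfv (v ++ [2]) y) ≤ 1 / (1 + 1 / ((M : ℝ) + 1)) := by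
          apply one_div_le_one_div_of_le <;> linarith
      _ = ((M : ℝ) + 1) / (M + 2) := by field_simp; ring

lemma inv_gap {a b z z' K δ : ℝ} (ha : 1 ≤ a) (hb : 1 ≤ b) (hz : 0 ≤ z) (hz' : 0 ≤ z')
    (hK : a + z ≤ K) (hK' : b + z' ≤ K) (hd : δ ≤ |(b + z') - (a + z)|) :
    δ / K ^ 2 ≤ |1 / (a + z) - 1 / (b + z')| := by
  have h1 : 0 < a + z := by linarith
  have h2 : 0 < b + z' := by linarith
  have e : 1 / (a + z) - 1 / (b + z') = ((b + z') - (a + z)) / ((a + z) * (b + z')) := by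
    field_simp
  rw [e, abs_div, abs_of_pos (mul_pos h1 h2)]
  calc δ / K ^ 2 ≤ |(b + z') - (a + z)| / K ^ 2 := by gcongr
    _ ≤ _ := by
      apply div_le_div_of_nonneg_left (abs_nonneg _) (mul_pos h1 h2)
      nlinarith

lemma nat_gap {a b : ℕ} (h : a ≠ b) {z z' κ : ℝ} (hz : 0 ≤ z) (hz' : 0 ≤ z') (hzκ : z ≤ κ)
    (hzκ' : z' ≤ κ) (hκ : κ ≤ 1) : (1 - κ) * |(b : ℝ) - a| ≤ |((b : ℝ) + z') - (a + z)| := by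
  rcases lt_or_gt_of_ne h with h | h
  · have h1 : (a : ℝ) + 1 ≤ b := by exact_mod_cast h
    rw [abs_of_nonneg (by linarith)]
    refine le_trans ?_ (le_abs_self _)
    nlinarith
  · have h1 : (b : ℝ) + 1 ≤ a := by exact_mod_cast h
    rw [abs_of_nonpos (by linarith)]
    refine le_trans ?_ (neg_le_abs _)
    nlinarith

lemma free_gap {M : ℕ} (hM2 : 2 ≤ M) : ∀ w w' : List ℕ, w.length = w'.length → w ≠ w' →
    Pos w → Pos w' → (∀ a ∈ w, a ≤ M) → (∀ a ∈ w', a ≤ M) →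
    ∀ y ∈ Set.Icc (0 : ℝ) (((M : ℝ) + 1) / (M + 2)),
    ∀ y' ∈ Set.Icc (0 : ℝ) (((M : ℝ) + 1) / (M + 2)),
    (1 - ((M : ℝ) + 1) / (M + 2)) / (((M : ℝ) + 1) ^ 2) ^ w.length ≤
      |cfv (w ++ [2]) y - cfv (w' ++ [2]) y'| := by
  have h2 : Pos [2] := by intro a ha; simp at ha; omega
  have hκ1 : ((M : ℝ) + 1) / (M + 2) ≤ 1 := by
    rw [div_le_one (by positivity)]; linarith
  intro w
  induction w with
  | nil =>
    intro w' hl hne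
    cases w' with
    | nil => exact absurd rfl hne
    | cons b v => simp at hl
  | cons a v ih =>
    intro w' hl hne hp hp' hM hM' y hy y' hy'
    cases w' with
    | nil => simp at hl
    | cons b v' =>
      have hy1 := hy.2.trans hκ1
      have hy1' := hy'.2.trans hκ1
      have hMv : ∀ a ∈ v, a ≤ M := fun c hc => hM c (by simp [hc])
      have hMv' : ∀ a ∈ v', a ≤ M := fun c hc => hM' c (by simp [hc])
      have ha : (a : ℝ) ≤ M := by exact_mod_cast hM a (by simp)
      have hb : (b : ℝ) ≤ M := by exact_mod_cast hM' b (by simp)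
      have ha1 : (1 : ℝ) ≤ a := by exact_mod_cast hp.cons.1
      have hb1 : (1 : ℝ) ≤ b := by exact_mod_cast hp'.cons.1
      have hz0 : 0 ≤ cfv (v ++ [2]) y := cfv_nonneg hy.1
      have hz0' : 0 ≤ cfv (v' ++ [2]) y' := cfv_nonneg hy'.1
      have hzκ := free_kappa hp.cons.2 hMv hM2 hy.1 hy1
      have hzκ' := free_kappa hp'.cons.2 hMv' hM2 hy'.1 hy1'
      simp only [List.cons_append, cfv, List.length_cons]
      have hl' : v.length = v'.length := by simpa using hl
      by_cases hab : a = b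
      · subst hab
        have hne' : v ≠ v' := fun h => hne (by rw [h])
        have := ih v' hl' hne' hp.cons.2 hp'.cons.2 hMv hMv' y hy y' hy'
        have hg := inv_gap (K := (M : ℝ) + 1) ha1 ha1 hz0 hz0' (by linarith) (by linarith)
          (δ := (1 - ((M : ℝ) + 1) / (M + 2)) / (((M : ℝ) + 1) ^ 2) ^ v.length) (by
            rw [add_sub_add_left_eq_sub, abs_sub_comm]; exact this)
        rwa [div_div, ← pow_succ] at hg
      · have h3 := nat_gap hab hz0 hz0' hzκ hzκ' hκ1
        have h4 : (1 : ℝ) ≤ |(b : ℝ) - a| := by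
          have : (1 : ℤ) ≤ |(b : ℤ) - a| := Int.one_le_abs (by omega)
          exact_mod_cast this
        have hg := inv_gap (K := (M : ℝ) + 1) ha1 hb1 hz0 hz0' (by linarith) (by linarith)
          (δ := (1 - ((M : ℝ) + 1) / (M + 2))) (by nlinarith)
        refine le_trans ?_ hg
        apply div_le_div_of_nonneg_left (by linarith) (by positivity)
        apply le_self_pow₀ _ (by omega)
        nlinarith

/-- The start of the stage containing the step `j`. -/
def stg (h : ℕ → ℕ) (m : ℕ) : ℕ → ℕ
  | 0 => 0
  | j + 1 => if j + 1 < stg h m j + h (stg h m j) + m then stg h m j else j + 1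

section
variable {h : ℕ → ℕ} {m : ℕ}

lemma stg_le (hm : 1 ≤ m) (j : ℕ) : stg h m j ≤ j ∧ j < stg h m j + h (stg h m j) + m := by
  induction j with
  | zero => simp [stg]; omega
  | succ j ih =>
    simp only [stg]
    split_ifs with hh
    · omega
    · omega

lemma stg_idem (hm : 1 ≤ m) (j : ℕ) : stg h m (stg h m j) = stg h m j := by
  induction j with
  | zero => simp [stg]
  | succ j ih =>
    simp only [stg]
    split_ifs with hh
    · exact ih
    · simp only [stg]
      rw [if_neg hh]

lemma stg_add {e : ℕ} (he : stg h m e = e) (r : ℕ) (hr : r < h e + m) : stg h m (e + r) = e := by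
  induction r with
  | zero => exact he
  | succ r ih =>
    have := ih (by omega)
    rw [← add_assoc]
    simp only [stg, this]
    rw [if_pos (by omega)]

lemma stg_next (hm : 1 ≤ m) {e : ℕ} (he : stg h m e = e) :
    stg h m (e + h e + m) = e + h e + m := by
  obtain ⟨k, rfl⟩ : ∃ k, m = k + 1 := ⟨m - 1, by omega⟩
  have := stg_add he (h e + k) (by omega)
  rw [← add_assoc] at this
  rw [← add_assoc]
  simp only [stg, this]
  rw [if_neg (by omega)]

lemma stg_pred (hm : 1 ≤ m) {e : ℕ} (he : stg h m e = e) (h0 : 0 < e) :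
    ∃ e' < e, stg h m e' = e' ∧ e = e' + h e' + m := by
  obtain ⟨k, rfl⟩ : ∃ k, e = k + 1 := ⟨e - 1, by omega⟩
  refine ⟨stg h m k, by have := (stg_le (h := h) hm k).1; omega, stg_idem hm k, ?_⟩
  have h1 := stg_le (h := h) hm k
  simp only [stg] at he
  split_ifs at he with hh <;> omega

lemma stg_inf (hm : 1 ≤ m) (N : ℕ) : ∃ e ≥ N, stg h m e = e := by
  induction N with
  | zero => exact ⟨0, le_rfl, rfl⟩
  | succ N ih =>
    obtain ⟨e, he, h1⟩ := ih
    exact ⟨_, by omega, stg_next hm h1⟩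

lemma stage_induction (hm : 1 ≤ m) (P : ℕ → Prop) (h0 : P 0)
    (hs : ∀ e, stg h m e = e → P e → P (e + h e + m)) : ∀ e, stg h m e = e → P e := by
  intro e
  induction e using Nat.strong_induction_on with
  | _ e ih =>
    intro he
    rcases Nat.eq_zero_or_pos e with h1 | h1
    · rw [h1]; exact h0
    · obtain ⟨e', hlt, he', heq⟩ := stg_pred hm he h1
      rw [heq]; exact hs e' he' (ih e' hlt he')

/-- Step `j` is a free step. -/
def Fr (h : ℕ → ℕ) (m j : ℕ) : Prop := j < stg h m j + h (stg h m j)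

instance decidableFr (j : ℕ) : Decidable (Fr h m j) := by unfold Fr; infer_instance

/-- Number of digits produced before step `j`. -/
def posn (h : ℕ → ℕ) (m L : ℕ) : ℕ → ℕ
  | 0 => 0
  | j + 1 => posn h m L j + if Fr h m j then L else 1

lemma fr_add {e : ℕ} (hm : 1 ≤ m) (he : stg h m e = e) {r : ℕ} (hr : r < h e) :
    Fr h m (e + r) := by
  unfold Fr; rw [stg_add he r (by omega)]; omega

lemma not_fr_add {e : ℕ} (he : stg h m e = e) {i : ℕ} (hi : i < m) :
    ¬ Fr h m (e + h e + i) := by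
  unfold Fr; rw [add_assoc, stg_add he _ (by omega)]; omega

lemma posn_free (hm : 1 ≤ m) {L : ℕ} {e : ℕ} (he : stg h m e = e) (r : ℕ) (hr : r ≤ h e) :
    posn h m L (e + r) = posn h m L e + L * r := by
  induction r with
  | zero => simp
  | succ r ih =>
    rw [← add_assoc, posn, ih (by omega), if_pos (fr_add hm he (by omega))]; ring

lemma posn_big {L : ℕ} {e : ℕ} (he : stg h m e = e) (i : ℕ) (hi : i ≤ m) :
    posn h m L (e + h e + i) = posn h m L (e + h e) + i := by
  induction i with
  | zero => simp
  | succ i ih =>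
    rw [← add_assoc, posn, ih (by omega), if_neg (not_fr_add he (by omega))]; ring

lemma le_posn {L : ℕ} (hL : 1 ≤ L) (j : ℕ) : j ≤ posn h m L j := by
  induction j with
  | zero => simp
  | succ j ih => rw [posn]; split_ifs <;> omega

lemma posn_le {L : ℕ} (hL : 1 ≤ L) (j : ℕ) : posn h m L j ≤ L * j := by
  induction j with
  | zero => simp [posn]
  | succ j ih => rw [posn, mul_add]; split_ifs <;> omega

/-- Index of the big digit produced at step `j`. -/
def bI (h : ℕ → ℕ) (m j : ℕ) : ℕ := j - stg h m j - h (stg h m j)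

/-- The time `n` attached to the stage containing `j`. -/
def nst (h : ℕ → ℕ) (m L j : ℕ) : ℕ := posn h m L (stg h m j + h (stg h m j)) + 1

lemma bI_lt (hm : 1 ≤ m) (j : ℕ) : bI h m j < m := by
  have := stg_le (h := h) hm j
  unfold bI; omega

lemma bI_add {e : ℕ} (he : stg h m e = e) {i : ℕ} (hi : i < m) : bI h m (e + h e + i) = i := by
  unfold bI; rw [add_assoc, stg_add he _ (by omega)]; omega

lemma nst_add {L e : ℕ} (he : stg h m e = e) {i : ℕ} (hi : i < m) :
    nst h m L (e + h e + i) = posn h m L (e + h e) + 1 := by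
  unfold nst; rw [add_assoc, stg_add he _ (by omega)]

lemma big_decomp (hm : 1 ≤ m) {j : ℕ} (hj : ¬ Fr h m j) :
    ∃ e i, stg h m e = e ∧ i < m ∧ j = e + h e + i := by
  refine ⟨stg h m j, bI h m j, stg_idem hm j, bI_lt hm j, ?_⟩
  have := stg_le (h := h) hm j
  unfold Fr at hj
  unfold bI; omega

lemma free_decomp (hm : 1 ≤ m) {j : ℕ} (hj : Fr h m j) :
    ∃ e r, stg h m e = e ∧ r < h e ∧ j = e + r := by
  refine ⟨stg h m j, j - stg h m j, stg_idem hm j, ?_, ?_⟩ <;>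
  · have := stg_le (h := h) hm j
    unfold Fr at hj
    omega

end

lemma lam_cancel {A c : ℕ → ℝ} {m : ℕ} (hA : ∀ i < m, 1 < A i) (hc : ∀ i < m, 0 < c i) (s : ℝ)
    {i : ℕ} (hi : i < m) (n : ℕ) :
    lam A s i ^ n * (∏ k ∈ Finset.range i, (32 * (c k * A k ^ n) ^ (2 * s - 1))) *
      (c i * A i ^ n) ^ s = c i ^ s * ∏ k ∈ Finset.range i, (32 * c k ^ (2 * s - 1)) := by
  have hApos : ∀ k ∈ Finset.range i, 0 < A k := fun k hk =>
    lt_trans one_pos (hA k ((Finset.mem_range.1 hk).trans hi))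
  have e1 : ∏ k ∈ Finset.range i, (32 * (c k * A k ^ n) ^ (2 * s - 1)) =
      (∏ k ∈ Finset.range i, (32 * c k ^ (2 * s - 1))) * ((Bm A i) ^ (2 * s - 1)) ^ n := by
    have : (Bm A i) ^ (2 * s - 1) = ∏ k ∈ Finset.range i, (A k) ^ (2 * s - 1) := by
      unfold Bm
      exact (Real.finsetProd_rpow _ _ (fun k hk => (hApos k hk).le) _).symm
    rw [this, ← Finset.prod_pow, ← Finset.prod_mul_distrib]
    refine Finset.prod_congr rfl fun k hk => ?_
    have hk0 := hApos k hk
    rw [Real.mul_rpow (hc k ((Finset.mem_range.1 hk).trans hi)).le (by positivity),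
      ← Real.rpow_natCast (A k ^ (2 * s - 1)), ← Real.rpow_natCast, ← Real.rpow_mul hk0.le,
      ← Real.rpow_mul hk0.le, mul_comm (n : ℝ)]
    ring
  have ha : 0 < A i := lt_trans one_pos (hA i hi)
  have hB : 0 < Bm A i := Bm_pos hA hi.le
  have e2 : (c i * A i ^ n) ^ s = c i ^ s * (A i ^ s) ^ n := by
    rw [Real.mul_rpow (hc i hi).le (by positivity), ← Real.rpow_natCast (A i ^ s),
      ← Real.rpow_natCast, ← Real.rpow_mul ha.le, ← Real.rpow_mul ha.le, mul_comm (n : ℝ)]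
  have e3 : lam A s i * (Bm A i) ^ (2 * s - 1) * A i ^ s = 1 := by
    have : Bm A (i + 1) = Bm A i * A i := by simp [Bm, Finset.prod_range_succ]
    rw [lam, this, Real.mul_rpow hB.le ha.le]
    have h1 : Bm A i ^ (1 - s) * Bm A i ^ (-s) * Bm A i ^ (2 * s - 1) = 1 := by
      rw [← Real.rpow_add hB, ← Real.rpow_add hB]; ring_nf; simp
    have h2 : A i ^ (-s) * A i ^ s = 1 := by
      rw [← Real.rpow_add ha]; ring_nf; simp
    calc _ = (Bm A i ^ (1 - s) * Bm A i ^ (-s) * Bm A i ^ (2 * s - 1)) * (A i ^ (-s) * A i ^ s) := by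
          ring
      _ = 1 := by rw [h1, h2, one_mul]
  rw [e1, e2]
  calc _ = (lam A s i * (Bm A i) ^ (2 * s - 1) * A i ^ s) ^ n *
        (c i ^ s * ∏ k ∈ Finset.range i, (32 * c k ^ (2 * s - 1))) := by ring
    _ = _ := by rw [e3, one_pow, one_mul]


/-- The size of the big digit at step `j`. -/
noncomputable def bN (A c : ℕ → ℝ) (h : ℕ → ℕ) (m L j : ℕ) : ℝ :=
  c (bI h m j) * A (bI h m j) ^ nst h m L j

lemma bN_add {A c : ℕ → ℝ} {h : ℕ → ℕ} {m L e i : ℕ} (he : stg h m e = e) (hi : i < m) :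
    bN A c h m L (e + h e + i) = c i * A i ^ (posn h m L (e + h e) + 1) := by
  rw [bN, bI_add he hi, nst_add he hi]

lemma stage_potential {A c : ℕ → ℝ} {h : ℕ → ℕ} {m L : ℕ} {s l ε : ℝ} (hm : 1 ≤ m) (hL : 1 ≤ L)
    (hA : ∀ i < m, 1 < A i) (hc : ∀ i < m, 0 < c i) (hs1 : s < 1)
    (hl0 : 0 < l) (hl1 : l ≤ 1) (hl : ∀ i < m, l ≤ lam A s i) (hε : 0 < ε)
    (hεK : ∀ i < m, ε * (c i ^ s * ∏ k ∈ Finset.range i, (32 * c k ^ (2 * s - 1))) ≤ 1 / 32)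
    (hh : ∀ e, (1 / 2 : ℝ) ^ h e ≤ ε * l ^ (L * e + 1))
    (hN : ∀ j, ¬ Fr h m j → 1 ≤ bN A c h m L j)
    (F : ℕ → ℝ) (hFn : ∀ j, 0 ≤ F j)
    (hfree : ∀ j, Fr h m j → F (j + 1) ≤ F j * (1 / 2 * l ^ L))
    (hbig : ∀ j, ¬ Fr h m j → F (j + 1) ≤ F j * (32 * bN A c h m L j ^ (2 * s - 1)))
    {e : ℕ} (he : stg h m e = e) (hFe : F e ≤ 1) :
    (∀ r ≤ h e, F (e + r) ≤ 1) ∧ (∀ i < m, F (e + h e + i) * bN A c h m L (e + h e + i) ^ s ≤ 1 / 32)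
      ∧ F (e + h e + m) ≤ 1 := by
  have h1 : ∀ r ≤ h e, F (e + r) ≤ (1 / 2 * l ^ L) ^ r := by
    intro r
    induction r with
    | zero => simpa using hFe
    | succ r ih =>
      intro hr
      rw [← add_assoc, pow_succ]
      refine (hfree _ (fr_add hm he (by omega))).trans ?_
      gcongr
      exact ih (by omega)
  have hlL : l ^ L ≤ 1 := pow_le_one₀ hl0.le hl1
  have h2 : ∀ r ≤ h e, F (e + r) ≤ 1 := fun r hr => (h1 r hr).trans
    (pow_le_one₀ (by positivity) (by linarith))
  set n := posn h m L (e + h e) + 1 with hn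
  have h3 : F (e + h e) ≤ ε * l ^ n := by
    have hnle : n ≤ L * e + 1 + L * h e := by
      rw [hn, posn_free hm he _ le_rfl]
      have := posn_le (h := h) (m := m) hL e
      omega
    calc F (e + h e) ≤ (1 / 2 * l ^ L) ^ h e := h1 _ le_rfl
      _ = (1 / 2) ^ h e * l ^ (L * h e) := by rw [mul_pow, pow_mul]
      _ ≤ (ε * l ^ (L * e + 1)) * l ^ (L * h e) := by gcongr; exact hh e
      _ = ε * l ^ (L * e + 1 + L * h e) := by rw [pow_add l (L * e + 1)]; ring
      _ ≤ ε * l ^ n := by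
        gcongr ε * ?_
        exact pow_le_pow_of_le_one hl0.le hl1 hnle
  have hNpos : ∀ i < m, 0 < c i * A i ^ n := fun i hi =>
    mul_pos (hc i hi) (pow_pos (lt_trans one_pos (hA i hi)) _)
  have h4 : ∀ i ≤ m, F (e + h e + i) ≤
      ε * l ^ n * ∏ k ∈ Finset.range i, (32 * (c k * A k ^ n) ^ (2 * s - 1)) := by
    intro i
    induction i with
    | zero => intro _; simpa using h3
    | succ i ih =>
      intro hi
      have hb := hbig _ (not_fr_add he (i := i) (by omega))
      rw [bN_add he (by omega), ← hn] at hb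
      rw [← add_assoc, Finset.prod_range_succ, ← mul_assoc]
      refine hb.trans ?_
      have := hNpos i (by omega)
      gcongr
      exact ih (by omega)
  have h5 : ∀ i < m, F (e + h e + i) * bN A c h m L (e + h e + i) ^ s ≤ 1 / 32 := by
    intro i hi
    rw [bN_add he hi, ← hn]
    have hp : 0 ≤ ∏ k ∈ Finset.range i, (32 * (c k * A k ^ n) ^ (2 * s - 1)) :=
      Finset.prod_nonneg fun k hk => by
        have := hNpos k ((Finset.mem_range.1 hk).trans hi)
        positivity
    have := hNpos i hi
    calc F (e + h e + i) * (c i * A i ^ n) ^ s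
        ≤ (ε * l ^ n * ∏ k ∈ Finset.range i, (32 * (c k * A k ^ n) ^ (2 * s - 1))) *
          (c i * A i ^ n) ^ s := by gcongr; exact h4 i hi.le
      _ ≤ (ε * lam A s i ^ n * ∏ k ∈ Finset.range i, (32 * (c k * A k ^ n) ^ (2 * s - 1))) *
          (c i * A i ^ n) ^ s := by gcongr; exact hl i hi
      _ = ε * (lam A s i ^ n * (∏ k ∈ Finset.range i, (32 * (c k * A k ^ n) ^ (2 * s - 1))) *
          (c i * A i ^ n) ^ s) := by ring
      _ ≤ 1 / 32 := by rw [lam_cancel hA hc s hi]; exact hεK i hi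
  refine ⟨h2, h5, ?_⟩
  obtain ⟨k, rfl⟩ : ∃ k, m = k + 1 := ⟨m - 1, by omega⟩
  have hnf := not_fr_add (m := k + 1) he (i := k) (by omega)
  have hb := hbig _ hnf
  have h6 := h5 k (by omega)
  have h7 := hN _ hnf
  set X := bN A c h (k + 1) L (e + h e + k) with hX
  have hX0 : 0 < X := by linarith
  have e1 : X ^ (2 * s - 1) = X ^ s * X ^ (s - 1) := by
    rw [← Real.rpow_add hX0]; ring_nf
  have h8 : X ^ (s - 1) ≤ 1 := Real.rpow_le_one_of_one_le_of_nonpos h7 (by linarith)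
  have h9 : 0 ≤ X ^ (s - 1) := by positivity
  rw [← add_assoc]
  calc F (e + h e + k + 1) ≤ F (e + h e + k) * (32 * X ^ (2 * s - 1)) := hb
    _ = (F (e + h e + k) * X ^ s) * 32 * X ^ (s - 1) := by rw [e1]; ring
    _ ≤ (1 / 32) * 32 * 1 := by gcongr
    _ = 1 := by norm_num

lemma potential {A c : ℕ → ℝ} {h : ℕ → ℕ} {m L : ℕ} {s l ε : ℝ} (hm : 1 ≤ m) (hL : 1 ≤ L)
    (hA : ∀ i < m, 1 < A i) (hc : ∀ i < m, 0 < c i) (hs1 : s < 1)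
    (hl0 : 0 < l) (hl1 : l ≤ 1) (hl : ∀ i < m, l ≤ lam A s i) (hε : 0 < ε)
    (hεK : ∀ i < m, ε * (c i ^ s * ∏ k ∈ Finset.range i, (32 * c k ^ (2 * s - 1))) ≤ 1 / 32)
    (hh : ∀ e, (1 / 2 : ℝ) ^ h e ≤ ε * l ^ (L * e + 1))
    (hN : ∀ j, ¬ Fr h m j → 1 ≤ bN A c h m L j)
    (F : ℕ → ℝ) (hF0 : F 0 ≤ 1) (hFn : ∀ j, 0 ≤ F j)
    (hfree : ∀ j, Fr h m j → F (j + 1) ≤ F j * (1 / 2 * l ^ L))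
    (hbig : ∀ j, ¬ Fr h m j → F (j + 1) ≤ F j * (32 * bN A c h m L j ^ (2 * s - 1))) :
    (∀ j, Fr h m j → F j ≤ 1) ∧ (∀ j, ¬ Fr h m j → F j * bN A c h m L j ^ s ≤ 1) := by
  have hst : ∀ e, stg h m e = e → F e ≤ 1 :=
    stage_induction hm _ hF0 fun e he hFe =>
      (stage_potential hm hL hA hc hs1 hl0 hl1 hl hε hεK hh hN F hFn hfree hbig he hFe).2.2
  constructor
  · intro j hj
    obtain ⟨e, r, he, hr, rfl⟩ := free_decomp hm hj
    exact (stage_potential hm hL hA hc hs1 hl0 hl1 hl hε hεK hh hN F hFn hfree hbig he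
      (hst e he)).1 r hr.le
  · intro j hj
    obtain ⟨e, i, he, hi, rfl⟩ := big_decomp hm hj
    exact ((stage_potential hm hL hA hc hs1 hl0 hl1 hl hε hεK hh hN F hFn hfree hbig he
      (hst e he)).2.1 i hi).trans (by norm_num)


/-- Alphabet of a big step of size `N`. -/
noncomputable def bigD (N : ℝ) : Finset (List ℕ) :=
  (Finset.Ico ⌈N⌉₊ ⌈2 * N⌉₊).image (fun a => [a])

/-- Weight of a big step of size `N`. -/
noncomputable def bigp (N : ℝ) : ℝ := 1 / ((bigD N).card : ℝ)

lemma mem_bigD {N : ℝ} {w : List ℕ} :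
    w ∈ bigD N ↔ ∃ a : ℕ, w = [a] ∧ N ≤ a ∧ (a : ℝ) < 2 * N := by
  simp only [bigD, Finset.mem_image, Finset.mem_Ico, Nat.ceil_le, Nat.lt_ceil]
  constructor
  · rintro ⟨a, h, rfl⟩; exact ⟨a, rfl, h⟩
  · rintro ⟨a, rfl, h⟩; exact ⟨a, h, rfl⟩

lemma card_bigD {N : ℝ} (hN : 4 ≤ N) : N / 2 ≤ ((bigD N).card : ℝ) := by
  rw [bigD, Finset.card_image_of_injective _ (fun a b hab => by simpa using hab), Nat.card_Ico]
  have h1 : (⌈N⌉₊ : ℝ) < N + 1 := Nat.ceil_lt_add_one (by linarith)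
  have h2 : 2 * N ≤ (⌈2 * N⌉₊ : ℝ) := Nat.le_ceil _
  have h3 : ⌈N⌉₊ ≤ ⌈2 * N⌉₊ := Nat.ceil_le_ceil (by linarith)
  rw [Nat.cast_sub h3]
  linarith

lemma bigp_nonneg (N : ℝ) : 0 ≤ bigp N := by unfold bigp; positivity

lemma bigp_le {N : ℝ} (hN : 4 ≤ N) : bigp N ≤ 2 / N := by
  have := card_bigD hN
  unfold bigp
  calc 1 / ((bigD N).card : ℝ) ≤ 1 / (N / 2) := by
        apply one_div_le_one_div_of_le _ this; linarith
    _ = 2 / N := by field_simp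

lemma bigp_sum {N : ℝ} (hN : 4 ≤ N) : ∑ _w ∈ bigD N, bigp N = 1 := by
  have := card_bigD hN
  rw [Finset.sum_const, nsmul_eq_mul, bigp, mul_one_div, div_self]
  linarith

lemma big_gap {N κ : ℝ} (hN : 4 ≤ N) (hκ1 : κ < 1) {V : Finset (List ℕ)}
    (hV : V ⊆ bigD N) (hVn : V.Nontrivial) :
    ∃ w ∈ V, ∃ w' ∈ V, ∃ T : ℝ, 1 ≤ T ∧ T ≤ N ∧ (V.card : ℝ) ≤ 2 * T ∧
      ∀ y ∈ Set.Icc (0 : ℝ) κ, ∀ y' ∈ Set.Icc (0 : ℝ) κ,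
        (1 - κ) * T / (16 * N ^ 2) ≤ |cfv w y - cfv w' y'| := by
  obtain ⟨w, hw, hmin⟩ := Finset.exists_min_image V (fun w => w.headI) hVn.nonempty
  obtain ⟨w', hw', hmax⟩ := Finset.exists_max_image V (fun w => w.headI) hVn.nonempty
  obtain ⟨a, rfl, ha1, ha2⟩ := mem_bigD.1 (hV hw)
  obtain ⟨b, rfl, hb1, hb2⟩ := mem_bigD.1 (hV hw')
  simp only [List.headI_cons] at hmin hmax
  have hsub : V ⊆ (Finset.Icc a b).image (fun a => [a]) := by
    intro v hv
    obtain ⟨k, rfl, _, _⟩ := mem_bigD.1 (hV hv)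
    have h1 := hmin _ hv
    have h2 := hmax _ hv
    simp only [List.headI_cons] at h1 h2
    simp [h1, h2]
  have hcard : V.card ≤ b + 1 - a := by
    refine (Finset.card_le_card hsub).trans (Finset.card_image_le.trans ?_)
    simp
  have h2 : 1 < V.card := Finset.one_lt_card_iff_nontrivial.2 hVn
  have hab : a + 1 ≤ b := by omega
  have habr : (a : ℝ) + 1 ≤ b := by exact_mod_cast hab
  refine ⟨[a], hw, [b], hw', (b : ℝ) - a, by linarith, by linarith, ?_, ?_⟩
  · have : (V.card : ℝ) ≤ b + 1 - a := by
      have h3 : V.card + a ≤ b + 1 := by omega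
      have : ((V.card : ℝ) + a) ≤ b + 1 := by exact_mod_cast h3
      linarith
    linarith
  · intro y hy y' hy'
    have hne : a ≠ b := by omega
    have hg := nat_gap hne hy.1 hy'.1 hy.2 hy'.2 hκ1.le
    rw [abs_of_nonneg (by linarith : (0 : ℝ) ≤ (b : ℝ) - a)] at hg
    have := inv_gap (a := (a : ℝ)) (b := b) (K := 4 * N) (by linarith) (by linarith) hy.1 hy'.1
      (by linarith [hy.2]) (by linarith [hy'.2]) hg
    simp only [cfv]
    rw [mul_pow] at this
    norm_num at this
    simpa using this

lemma big_ineq {Q q N T κ s C : ℝ} (hQ : 0 ≤ Q) (hq : 1 ≤ q) (hT : 1 ≤ T) (hTN : T ≤ N)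
    (hs1 : s < 1) (hκ : κ < 1) (hF : Q * q ^ (2 * s) * N ^ s ≤ 1)
    (hC : 4 * (64 / (1 - κ)) ^ s ≤ C) :
    Q * (4 * T / N) ≤ C * (((1 - κ) * T / (16 * N ^ 2)) / (4 * q ^ 2)) ^ s := by
  have hT0 : 0 < T := by linarith
  have hN0 : 0 < N := by linarith
  have hq0 : 0 < q := by linarith
  have hk : 0 < 1 - κ := by linarith
  have e1 : ((1 - κ) * T / (16 * N ^ 2)) / (4 * q ^ 2) = ((1 - κ) / 64) * (T / (N ^ 2 * q ^ 2)) := by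
    field_simp; ring
  have e2 : (T / (N ^ 2 * q ^ 2)) ^ s = T ^ s / ((N ^ s) ^ 2 * q ^ (2 * s)) := by
    rw [Real.div_rpow hT0.le (by positivity), Real.mul_rpow (by positivity) (by positivity)]
    congr 2
    · rw [← Real.rpow_natCast, ← Real.rpow_natCast, ← Real.rpow_mul hN0.le, ← Real.rpow_mul hN0.le,
        mul_comm s]
    · rw [← Real.rpow_natCast, ← Real.rpow_mul hq0.le]; norm_num
  have e3 : 4 ≤ C * ((1 - κ) / 64) ^ s := by
    have : (64 / (1 - κ)) ^ s * ((1 - κ) / 64) ^ s = 1 := by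
      rw [← Real.mul_rpow (by positivity) (by positivity)]
      rw [show 64 / (1 - κ) * ((1 - κ) / 64) = 1 by field_simp, Real.one_rpow]
    calc (4 : ℝ) = 4 * (64 / (1 - κ)) ^ s * ((1 - κ) / 64) ^ s := by rw [mul_assoc, this, mul_one]
      _ ≤ _ := by gcongr
  have eT : T = T ^ s * T ^ (1 - s) := by rw [← Real.rpow_add hT0]; simp
  have eN : N = N ^ s * N ^ (1 - s) := by rw [← Real.rpow_add hN0]; simp
  have huv : T ^ (1 - s) ≤ N ^ (1 - s) := Real.rpow_le_rpow hT0.le hTN (by linarith)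
  have ha : 0 < T ^ s := by positivity
  have hb : 0 < N ^ s := by positivity
  have hv : 0 < N ^ (1 - s) := by positivity
  have hd : 0 < q ^ (2 * s) := by positivity
  have h1 : T / N ≤ T ^ s / N ^ s := by
    calc T / N = (T ^ s * T ^ (1 - s)) / (N ^ s * N ^ (1 - s)) := by rw [← eT, ← eN]
      _ ≤ (T ^ s * N ^ (1 - s)) / (N ^ s * N ^ (1 - s)) := by gcongr
      _ = T ^ s / N ^ s := by field_simp
  have h2 : Q ≤ 1 / (q ^ (2 * s) * N ^ s) := by
    rw [le_div_iff₀ (by positivity), ← mul_assoc]; exact hF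
  rw [e1, Real.mul_rpow (by positivity) (by positivity), ← mul_assoc, e2]
  calc Q * (4 * T / N) = 4 * (Q * (T / N)) := by ring
    _ ≤ 4 * ((1 / (q ^ (2 * s) * N ^ s)) * (T ^ s / N ^ s)) := by gcongr
    _ = 4 * (T ^ s / ((N ^ s) ^ 2 * q ^ (2 * s))) := by field_simp
    _ ≤ _ := by gcongr

lemma free_ineq {Q q k s C : ℝ} (hq : 1 ≤ q) (hk : 0 < k)
    (hF : Q * q ^ (2 * s) ≤ 1) (hC : (4 / k) ^ s ≤ C) : Q ≤ C * (k / (4 * q ^ 2)) ^ s := by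
  have hq0 : 0 < q := by linarith
  have hd : 0 < q ^ (2 * s) := by positivity
  have e2 : (k / (4 * q ^ 2)) ^ s = (k / 4) ^ s / q ^ (2 * s) := by
    rw [← div_div, Real.div_rpow (by positivity) (by positivity)]
    congr 1
    rw [← Real.rpow_natCast, ← Real.rpow_mul hq0.le]; norm_num
  have e3 : 1 ≤ C * (k / 4) ^ s := by
    have : (4 / k) ^ s * (k / 4) ^ s = 1 := by
      rw [← Real.mul_rpow (by positivity) (by positivity)]
      rw [show 4 / k * (k / 4) = 1 by field_simp, Real.one_rpow]
    rw [← this]; gcongr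
  rw [e2, ← mul_div_assoc, le_div_iff₀ hd]
  linarith

/-- Alphabet of a free step. -/
def freeD (W : Finset (List ℕ)) : Finset (List ℕ) := W.image (fun w => w ++ [2])

/-- Weights of a free step. -/
noncomputable def freep (s Z : ℝ) (w : List ℕ) : ℝ := (cq w.dropLast : ℝ) ^ (-(2 * s)) / Z

lemma freep_sum {W : Finset (List ℕ)} {s Z : ℝ} (hZ : 0 < Z)
    (hZe : Z = ∑ w ∈ W, (cq w : ℝ) ^ (-(2 * s))) : ∑ w ∈ freeD W, freep s Z w = 1 := by
  unfold freeD freep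
  rw [Finset.sum_image (fun a _ b _ hab => by simpa using hab)]
  simp only [List.dropLast_concat]
  rw [← Finset.sum_div, ← hZe, div_self hZ.ne']

lemma freep_le {w : List ℕ} {s Z : ℝ} (hs : 0 < s) (hZ : 2 ≤ Z) (hw : Pos w) :
    freep s Z (w ++ [2]) ≤ 1 / 2 := by
  unfold freep
  rw [List.dropLast_concat]
  have h1 : (1 : ℝ) ≤ cq w := by exact_mod_cast one_le_cq hw
  have h2 : (cq w : ℝ) ^ (-(2 * s)) ≤ 1 := Real.rpow_le_one_of_one_le_of_nonpos h1 (by linarith)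
  rw [div_le_div_iff₀ (by linarith) (by norm_num)]
  linarith

lemma rpow_two_mul_le {x s : ℝ} (hx : 1 ≤ x) (hs1 : s < 1) : x ^ (2 * s) ≤ x ^ 2 := by
  rw [← Real.rpow_natCast]
  exact Real.rpow_le_rpow_of_exponent_le hx (by push_cast; linarith)

lemma free_step {u w : List ℕ} {Q s Z l : ℝ} {L : ℕ} (hu : Pos u) (hw : Pos w) (hQ : 0 ≤ Q)
    (hs : 0 < s) (hs1 : s < 1) (hZ0 : 0 < Z) (hZ : 72 ≤ l ^ L * Z) :
    (Q * freep s Z (w ++ [2])) * (cq (u ++ (w ++ [2])) : ℝ) ^ (2 * s) ≤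
      (Q * (cq u : ℝ) ^ (2 * s)) * (1 / 2 * l ^ L) := by
  have h2 : Pos [2] := by intro a ha; simp at ha; omega
  have h1 : cq (u ++ (w ++ [2])) ≤ 6 * (cq u * cq w) := by
    have e1 := cq_append_le hu (hw.append h2)
    have e2 := cq_snoc_le hw 2
    nlinarith
  have h1r : (cq (u ++ (w ++ [2])) : ℝ) ≤ 6 * (cq u * cq w) := by exact_mod_cast h1
  have hw1 : (1 : ℝ) ≤ cq w := by exact_mod_cast one_le_cq hw
  have hu1 : (1 : ℝ) ≤ cq u := by exact_mod_cast one_le_cq hu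
  have hw0 : (0 : ℝ) < cq w := by linarith
  have hu0 : (0 : ℝ) < cq u := by linarith
  have h3 : (cq (u ++ (w ++ [2])) : ℝ) ^ (2 * s) ≤ 36 * ((cq u : ℝ) ^ (2 * s) * (cq w : ℝ) ^ (2 * s)) := by
    calc (cq (u ++ (w ++ [2])) : ℝ) ^ (2 * s) ≤ (6 * ((cq u : ℝ) * cq w)) ^ (2 * s) := by
          apply Real.rpow_le_rpow (by positivity) h1r (by linarith)
      _ = 6 ^ (2 * s) * ((cq u : ℝ) ^ (2 * s) * (cq w : ℝ) ^ (2 * s)) := by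
          rw [Real.mul_rpow (by norm_num) (by positivity), Real.mul_rpow hu0.le hw0.le]
      _ ≤ _ := by
          gcongr
          refine (rpow_two_mul_le (by norm_num) hs1).trans (by norm_num)
  unfold freep
  rw [List.dropLast_concat, Real.rpow_neg hw0.le]
  have hwp : 0 < (cq w : ℝ) ^ (2 * s) := by positivity
  have hup : 0 < (cq u : ℝ) ^ (2 * s) := by positivity
  calc _ ≤ (Q * (((cq w : ℝ) ^ (2 * s))⁻¹ / Z)) *
        (36 * ((cq u : ℝ) ^ (2 * s) * (cq w : ℝ) ^ (2 * s))) := by gcongr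
    _ = (Q * (cq u : ℝ) ^ (2 * s)) * (36 / Z) := by field_simp
    _ ≤ _ := by
      gcongr
      rw [div_le_iff₀ hZ0]; linarith

lemma big_step {u : List ℕ} {a : ℕ} {Q s N : ℝ} (hu : Pos u) (hQ : 0 ≤ Q)
    (hs : 0 < s) (hs1 : s < 1) (hN : 4 ≤ N) (ha : (a : ℝ) < 2 * N) :
    (Q * bigp N) * (cq (u ++ [a]) : ℝ) ^ (2 * s) ≤
      (Q * (cq u : ℝ) ^ (2 * s)) * (32 * N ^ (2 * s - 1)) := by
  have hu1 : (1 : ℝ) ≤ cq u := by exact_mod_cast one_le_cq hu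
  have hu0 : (0 : ℝ) < cq u := by linarith
  have hN0 : 0 < N := by linarith
  have h1 : (cq (u ++ [a]) : ℝ) ≤ 4 * (N * cq u) := by
    have : (cq (u ++ [a]) : ℝ) ≤ (a + 1) * cq u := by exact_mod_cast cq_snoc_le hu a
    nlinarith
  have h3 : (cq (u ++ [a]) : ℝ) ^ (2 * s) ≤ 16 * (N ^ (2 * s) * (cq u : ℝ) ^ (2 * s)) := by
    calc (cq (u ++ [a]) : ℝ) ^ (2 * s) ≤ (4 * (N * cq u)) ^ (2 * s) := by
          apply Real.rpow_le_rpow (by positivity) h1 (by linarith)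
      _ = 4 ^ (2 * s) * (N ^ (2 * s) * (cq u : ℝ) ^ (2 * s)) := by
          rw [Real.mul_rpow (by norm_num) (by positivity), Real.mul_rpow hN0.le hu0.le]
      _ ≤ _ := by
          gcongr
          refine (rpow_two_mul_le (by norm_num) hs1).trans (by norm_num)
  have h4 : N ^ (2 * s - 1) = N ^ (2 * s) / N := by
    rw [Real.rpow_sub hN0, Real.rpow_one]
  have h5 := bigp_le hN
  have h6 := bigp_nonneg N
  calc _ ≤ (Q * (2 / N)) * (16 * (N ^ (2 * s) * (cq u : ℝ) ^ (2 * s))) := by gcongr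
    _ = _ := by rw [h4]; ring


/-- The target set. -/
def Sm (m : ℕ) (A c : ℕ → ℝ) : Set ℝ := {x : ℝ | x ∈ Set.Ioo (0 : ℝ) 1 ∧ Irrational x ∧
      {n : ℕ | ∀ i < m, c i * A i ^ n ≤ (pq x (n + i) : ℝ) ∧
        (pq x (n + i) : ℝ) < 2 * (c i * A i ^ n)}.Infinite}

lemma mem_Sm {m : ℕ} {A c : ℕ → ℝ} {h : ℕ → ℕ} {L : ℕ} {κ : ℝ} (hm : 1 ≤ m) (hL : 1 ≤ L)
    (hκ : κ < 1) {ω : ℕ → List ℕ} {y : ℕ → ℝ} (hpos : ∀ j, Pos (ω j))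
    (hfree : ∀ j, Fr h m j → (ω j).length = L)
    (hbig : ∀ j, ¬ Fr h m j → ω j ∈ bigD (bN A c h m L j)) (hy : Tails κ ω y) :
    y 0 ∈ Sm m A c := by
  have hlen : ∀ j, (pre ω j).length = posn h m L j := by
    intro j
    induction j with
    | zero => rfl
    | succ j ih =>
      rw [pre, posn, List.length_append, ih]
      split_ifs with hj
      · rw [hfree j hj]
      · obtain ⟨a, ha, _⟩ := mem_bigD.1 (hbig j hj)
        rw [ha]; simp
  have hit : ∀ j, gaussMap^[posn h m L j] (y 0) = y j := fun j => by
    rw [← hlen]; exact tails_iter hκ hpos hy j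
  have hy0 : 0 < y 0 := (hy 0).1.1
  have hy1 : y 0 < 1 := (hy 0).1.2.trans_lt hκ
  refine ⟨⟨hy0, hy1⟩, ?_, ?_⟩
  · refine irrational_of_iter hy0 hy1 fun N => ⟨posn h m L N, le_posn hL N, ?_⟩
    rw [hit]; exact (hy N).1.1.ne'
  · refine Set.infinite_of_forall_exists_gt fun N => ?_
    obtain ⟨e, heN, he⟩ := stg_inf (h := h) hm N
    refine ⟨posn h m L (e + h e) + 1, ?_, ?_⟩
    · intro i hi
      obtain ⟨a, ha, ha1, ha2⟩ := mem_bigD.1 (hbig _ (not_fr_add he hi))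
      rw [bN_add he hi] at ha1 ha2
      have hpq : pq (y 0) (posn h m L (e + h e) + 1 + i) = a := by
        unfold pq
        rw [show posn h m L (e + h e) + 1 + i - 1 = posn h m L (e + h e + i) by
          rw [posn_big he i hi.le]; omega, hit, (hy _).2, ha]
        simp only [cfv, one_div_one_div]
        have h1 := (hy (e + h e + i + 1)).1
        rw [Nat.floor_eq_iff (by have := h1.1; positivity)]
        constructor <;> linarith [h1.1, h1.2]
      rw [hpq]
      exact ⟨ha1, ha2⟩
    · have := le_posn (h := h) (m := m) hL (e + h e)
      omega

theorem dim_ge {m : ℕ} (hm : 1 ≤ m) {A c : ℕ → ℝ}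
    (hA : ∀ i < m, 1 < A i) (hc : ∀ i < m, 0 < c i) {s : ℝ} (hs : 0 < s) (hs1 : s < 1)
    (hsd : ∀ i < m, s < dimNum A i) : ENNReal.ofReal s ≤ dimH (Sm m A c) := by
  obtain ⟨i₀, hi₀, hmin⟩ := Finset.exists_min_image (Finset.range m) (lam A s)
    (Finset.nonempty_range_iff.mpr (by omega))
  have hi₀' := Finset.mem_range.1 hi₀
  set l := lam A s i₀ with hl_def
  have hl0 : 0 < l := lam_pos hA s hi₀'
  have hl : ∀ i < m, l ≤ lam A s i := fun i hi => hmin i (Finset.mem_range.2 hi)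
  have hl1 : l ≤ 1 := by
    refine (hl 0 (by omega)).trans ?_
    have : Bm A 0 = 1 := by simp [Bm]
    have h1 : Bm A (0 + 1) = A 0 := by simp [Bm]
    rw [lam, this, h1, Real.one_rpow, one_mul]
    exact Real.rpow_le_one_of_one_le_of_nonpos (hA 0 (by omega)).le (by linarith)
  obtain ⟨n₁, W, hW, hR⟩ := exists_words hA hs.le hi₀' (hsd i₀ hi₀') (72 / l) (by positivity)
  rw [← hl_def] at hR
  set L := n₁ + 1 with hL_def
  have hL : 1 ≤ L := by omega
  set Z := ∑ w ∈ W, (cq w : ℝ) ^ (-(2 * s)) with hZ_def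
  have hZ72 : 72 ≤ l ^ L * Z := by
    rw [div_lt_iff₀ hl0] at hR
    rw [hL_def, pow_succ]; linarith
  have hlL : l ^ L ≤ 1 := pow_le_one₀ hl0.le hl1
  have hlLpos : 0 < l ^ L := by positivity
  have hZ0 : 0 < Z := by
    by_contra hneg
    push Not at hneg
    have := mul_nonpos_of_nonneg_of_nonpos hlLpos.le hneg
    linarith
  have hZ2 : 2 ≤ Z := by nlinarith
  -- digit bound
  obtain ⟨M, hM2, hM⟩ : ∃ M : ℕ, 2 ≤ M ∧ ∀ w ∈ W, ∀ a ∈ w, a ≤ M := by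
    refine ⟨2 + ∑ w ∈ W, w.sum, by omega, fun w hw a ha => ?_⟩
    have h1 : a ≤ w.sum := List.le_sum_of_mem ha
    have h2 : w.sum ≤ ∑ w ∈ W, w.sum :=
      Finset.single_le_sum (f := fun w : List ℕ => w.sum) (fun _ _ => Nat.zero_le _) hw
    omega
  set κ : ℝ := ((M : ℝ) + 1) / (M + 2) with hκ_def
  have hκ1 : κ < 1 := by rw [hκ_def, div_lt_one (by positivity)]; linarith
  have hκh : 1 / 2 ≤ κ := by
    rw [hκ_def, div_le_div_iff₀ (by norm_num) (by positivity)]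
    have : (0 : ℝ) ≤ M := by positivity
    linarith
  -- the constant ε
  obtain ⟨ε, hε, hεK⟩ : ∃ ε : ℝ, 0 < ε ∧
      ∀ i < m, ε * (c i ^ s * ∏ k ∈ Finset.range i, (32 * c k ^ (2 * s - 1))) ≤ 1 / 32 := by
    set K : ℕ → ℝ := fun i => c i ^ s * ∏ k ∈ Finset.range i, (32 * c k ^ (2 * s - 1)) with hK
    have hK0 : ∀ i ∈ Finset.range m, 0 ≤ K i := by
      intro i hi
      have hi' := Finset.mem_range.1 hi
      have := hc i hi'
      refine mul_nonneg (by positivity) (Finset.prod_nonneg fun k hk => ?_)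
      have := hc k ((Finset.mem_range.1 hk).trans hi')
      positivity
    have hS : 0 ≤ ∑ i ∈ Finset.range m, K i := Finset.sum_nonneg hK0
    refine ⟨1 / (32 * (1 + ∑ i ∈ Finset.range m, K i)), by positivity, fun i hi => ?_⟩
    have h1 : K i ≤ ∑ i ∈ Finset.range m, K i :=
      Finset.single_le_sum hK0 (Finset.mem_range.2 hi)
    change 1 / (32 * (1 + ∑ i ∈ Finset.range m, K i)) * K i ≤ 1 / 32
    rw [one_div_mul_eq_div, div_le_div_iff₀ (by positivity) (by norm_num)]
    linarith
  -- n₀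
  obtain ⟨n₀, hn₀⟩ : ∃ n₀ : ℕ, ∀ n ≥ n₀, ∀ i ∈ Finset.range m, 4 ≤ c i * A i ^ n := by
    rw [← Filter.eventually_atTop, Filter.eventually_all_finset]
    intro i hi
    have hi' := Finset.mem_range.1 hi
    have : Tendsto (fun n : ℕ => c i * A i ^ n) atTop atTop :=
      (tendsto_pow_atTop_atTop_of_one_lt (hA i hi')).const_mul_atTop (hc i hi')
    exact this.eventually_ge_atTop 4
  -- schedule
  have hex : ∀ e : ℕ, ∃ k : ℕ, n₀ ≤ k ∧ (1 / 2 : ℝ) ^ k ≤ ε * l ^ (L * e + 1) := by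
    intro e
    obtain ⟨k, hk⟩ := exists_pow_lt_of_lt_one (show 0 < ε * l ^ (L * e + 1) by positivity)
      (show (1 / 2 : ℝ) < 1 by norm_num)
    refine ⟨n₀ + k, by omega, le_trans ?_ hk.le⟩
    exact pow_le_pow_of_le_one (by norm_num) (by norm_num) (by omega)
  choose h hhn hh using hex
  have hN4 : ∀ j, 4 ≤ bN A c h m L j := by
    intro j
    refine hn₀ _ ?_ _ (Finset.mem_range.2 (bI_lt hm j))
    unfold nst
    have h1 := le_posn (h := h) (m := m) hL (stg h m j + h (stg h m j))
    have h2 := hhn (stg h m j)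
    omega
  -- alphabets and weights
  set D : ℕ → Finset (List ℕ) := fun j =>
    if Fr h m j then freeD W else bigD (bN A c h m L j) with hD
  set p : ℕ → List ℕ → ℝ := fun j w =>
    if Fr h m j then freep s Z w else bigp (bN A c h m L j) with hp
  have hDf : ∀ j, Fr h m j → ∀ w ∈ D j, ∃ v ∈ W, w = v ++ [2] := by
    intro j hj w hw
    simp only [hD, if_pos hj, freeD, Finset.mem_image] at hw
    obtain ⟨v, hv, rfl⟩ := hw
    exact ⟨v, hv, rfl⟩
  have hDb : ∀ j, ¬ Fr h m j → ∀ w ∈ D j, w ∈ bigD (bN A c h m L j) := by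
    intro j hj w hw
    simpa only [hD, if_neg hj] using hw
  have h2 : Pos [2] := by intro a ha; simp at ha; omega
  have hDpos : ∀ j, ∀ w ∈ D j, Pos w := by
    intro j w hw
    by_cases hj : Fr h m j
    · obtain ⟨v, hv, rfl⟩ := hDf j hj w hw
      exact (hW v hv).2.append h2
    · obtain ⟨a, rfl, ha, _⟩ := mem_bigD.1 (hDb j hj w hw)
      intro b hb
      simp only [List.mem_singleton] at hb
      subst hb
      have : (1 : ℝ) ≤ b := by linarith [hN4 j]
      exact_mod_cast this
  have hp0 : ∀ j w, 0 ≤ p j w := by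
    intro j w
    simp only [hp]
    split_ifs
    · unfold freep; positivity
    · exact bigp_nonneg _
  set κ₀ : ℝ := (1 - κ) / (((M : ℝ) + 1) ^ 2) ^ n₁ with hκ₀
  have hκ₀pos : 0 < κ₀ := by
    have : 0 < 1 - κ := by linarith
    positivity
  have hk1 : 0 < 1 - κ := by linarith
  set C : ℝ := (4 / κ₀) ^ s + 4 * (64 / (1 - κ)) ^ s with hC
  have hC1 : 0 ≤ (4 / κ₀) ^ s := by positivity
  have hC2 : 0 < 4 * (64 / (1 - κ)) ^ s := by positivity
  refine mass_distribution D p κ s C hκ1 hs (by positivity) hDpos ?_ ?_ hp0 ?_ ?_ ?_ (Sm m A c) ?_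
  · intro j w hw
    by_cases hj : Fr h m j
    · obtain ⟨v, hv, rfl⟩ := hDf j hj w hw
      simp
    · obtain ⟨a, rfl, ha, _⟩ := mem_bigD.1 (hDb j hj w hw)
      simp
  · intro j w hw y hy
    by_cases hj : Fr h m j
    · obtain ⟨v, hv, rfl⟩ := hDf j hj w hw
      exact free_kappa (hW v hv).2 (hM v hv) hM2 hy.1 hy.2
    · obtain ⟨a, rfl, ha, _⟩ := mem_bigD.1 (hDb j hj w hw)
      refine le_trans ?_ hκh
      simp only [cfv]
      apply one_div_le_one_div_of_le (by norm_num)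
      linarith [hN4 j, hy.1]
  · intro j
    by_cases hj : Fr h m j
    · simp only [hD, hp, if_pos hj]
      exact freep_sum hZ0 hZ_def
    · simp only [hD, hp, if_neg hj]
      exact bigp_sum (hN4 j)
  · intro j w hw
    by_cases hj : Fr h m j
    · obtain ⟨v, hv, rfl⟩ := hDf j hj w hw
      simp only [hp, if_pos hj]
      exact freep_le hs hZ2 (hW v hv).2
    · simp only [hp, if_neg hj]
      refine (bigp_le (hN4 j)).trans ?_
      rw [div_le_div_iff₀ (by linarith [hN4 j]) (by norm_num)]
      linarith [hN4 j]
  · intro j ω hω V hV hVn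
    have hωpos : ∀ j, Pos (ω j) := fun j => hDpos j _ (hω j)
    have hQ0 : ∀ j, 0 ≤ ∏ i ∈ Finset.range j, p i (ω i) := fun j =>
      Finset.prod_nonneg fun i _ => hp0 i _
    have hq1 : ∀ j, (1 : ℝ) ≤ cq (pre ω j) := fun j => by
      exact_mod_cast one_le_cq (pre_pos hωpos j)
    obtain ⟨hF1, hF2⟩ := potential (ε := ε) hm hL hA hc hs1 hl0 hl1 hl hε hεK hh
      (fun j _ => by linarith [hN4 j])
      (fun j => (∏ i ∈ Finset.range j, p i (ω i)) * (cq (pre ω j) : ℝ) ^ (2 * s))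
      (by simp [pre]) (fun j => mul_nonneg (hQ0 j) (by positivity))
      (by
        intro j hj
        obtain ⟨v, hv, hωv⟩ := hDf j hj _ (hω j)
        simp only [Finset.prod_range_succ, pre]
        have hpj : p j (ω j) = freep s Z (v ++ [2]) := by
          simp only [hp, if_pos hj, hωv]
        rw [hpj, hωv]
        exact free_step (pre_pos hωpos j) (hW v hv).2 (hQ0 j) hs hs1 hZ0 hZ72)
      (by
        intro j hj
        obtain ⟨a, hωa, _, ha⟩ := mem_bigD.1 (hDb j hj _ (hω j))
        simp only [Finset.prod_range_succ, pre]
        have hpj : p j (ω j) = bigp (bN A c h m L j) := by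
          simp only [hp, if_neg hj]
        rw [hpj, hωa]
        exact big_step (pre_pos hωpos j) (hQ0 j) hs hs1 (hN4 j) ha)
    by_cases hj : Fr h m j
    · obtain ⟨w, hw, w', hw', hne⟩ := hVn
      have hw1 : w ∈ V := hw
      have hw1' : w' ∈ V := hw'
      obtain ⟨v, hv, rfl⟩ := hDf j hj w (hV hw1)
      obtain ⟨v', hv', rfl⟩ := hDf j hj w' (hV hw1')
      refine ⟨_, hw1, _, hw1', κ₀, hκ₀pos.le, ?_, ?_⟩
      · have hg := free_gap hM2 v v' (by rw [(hW v hv).1, (hW v' hv').1])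
          (fun hvv => hne (by rw [hvv])) (hW v hv).2 (hW v' hv').2 (hM v hv) (hM v' hv')
        rw [(hW v hv).1] at hg
        exact hg
      · have hsum : ∑ w ∈ V, p j w ≤ 1 := by
          have h3 : ∑ w ∈ D j, p j w = 1 := by
            simp only [hD, hp, if_pos hj]
            exact freep_sum hZ0 hZ_def
          rw [← h3]
          exact Finset.sum_le_sum_of_subset_of_nonneg hV fun w _ _ => hp0 j w
        calc (∏ i ∈ Finset.range j, p i (ω i)) * ∑ w ∈ V, p j w
            ≤ (∏ i ∈ Finset.range j, p i (ω i)) * 1 := by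
              gcongr
              exact hQ0 j
          _ = ∏ i ∈ Finset.range j, p i (ω i) := mul_one _
          _ ≤ _ := free_ineq (hq1 j) hκ₀pos (hF1 j hj) (by linarith)
    · have hVb : V ⊆ bigD (bN A c h m L j) := fun w hw => hDb j hj w (hV hw)
      obtain ⟨w, hw, w', hw', T, hT1, hTN, hcard, hg⟩ := big_gap (hN4 j) hκ1 hVb hVn
      refine ⟨w, hw, w', hw', _, ?_, hg, ?_⟩
      · have := hN4 j
        positivity
      · refine le_trans ?_ (big_ineq (hQ0 j) (hq1 j) hT1 hTN hs1 hκ1 (hF2 j hj) (by linarith))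
        have hsum : ∑ w ∈ V, p j w = V.card * bigp (bN A c h m L j) := by
          simp only [hp, if_neg hj]
          rw [Finset.sum_const, nsmul_eq_mul]
        have hb := bigp_le (hN4 j)
        have hb0 := bigp_nonneg (bN A c h m L j)
        have hNp : 0 < bN A c h m L j := by linarith [hN4 j]
        rw [hsum]
        refine mul_le_mul_of_nonneg_left ?_ (hQ0 j)
        calc (V.card : ℝ) * bigp (bN A c h m L j) ≤ (2 * T) * (2 / bN A c h m L j) := by
              gcongr
          _ = 4 * T / bN A c h m L j := by ring
  · intro ω hω y hy
    refine mem_Sm (h := h) (L := L) hm hL hκ1 (fun j => hDpos j _ (hω j)) ?_ ?_ hy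
    · intro j hj
      obtain ⟨v, hv, hωv⟩ := hDf j hj _ (hω j)
      rw [hωv, List.length_append, (hW v hv).1]; rfl
    · intro j hj
      exact hDb j hj _ (hω j)

theorem hausdorff_dim_Sm_lower (m : ℕ) (hm : 1 ≤ m) (A c : ℕ → ℝ)
    (hA : ∀ i < m, 1 < A i) (hc : ∀ i < m, 0 < c i) :
    dimH {x : ℝ | x ∈ Set.Ioo (0 : ℝ) 1 ∧ Irrational x ∧
      {n : ℕ | ∀ i < m, c i * A i ^ n ≤ (pq x (n + i) : ℝ) ∧
        (pq x (n + i) : ℝ) < 2 * (c i * A i ^ n)}.Infinite} ≥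
    ENNReal.ofReal
      ((Finset.range m).inf' (Finset.nonempty_range_iff.mpr (by omega)) (dimNum A)) := by
  change ENNReal.ofReal _ ≤ dimH (Sm m A c)
  set d := (Finset.range m).inf' (Finset.nonempty_range_iff.mpr (by omega)) (dimNum A) with hd
  have hdi : ∀ i < m, d ≤ dimNum A i := fun i hi => Finset.inf'_le _ (Finset.mem_range.2 hi)
  have hd1 : d ≤ 1 := (hdi 0 (by omega)).trans (dimNum_zero_le (hA 0 (by omega)))
  refine le_of_forall_lt fun b hb => ?_
  have hbt : b ≠ ⊤ := ne_top_of_lt hb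
  have hbd : b.toReal < d := by
    rwa [ENNReal.lt_ofReal_iff_toReal_lt hbt] at hb
  have hb0 : 0 ≤ b.toReal := ENNReal.toReal_nonneg
  obtain ⟨s, hs1, hs2⟩ := exists_between hbd
  have h1 : b < ENNReal.ofReal s := (ENNReal.lt_ofReal_iff_toReal_lt hbt).2 hs1
  exact h1.trans_le (dim_ge hm hA hc (by linarith) (by linarith)
    fun i hi => hs2.trans_le (hdi i hi))
end

section
/- For every real B with 1 ≤ B < ∞, the set F(B) = { x ∈ (0,1) irrational : a_n(x) ≥ B^n for infinitely many n ∈ ℕ } satisfies dim_H F(B) = s_B. -/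
open Filter MeasureTheory Set

/-! ### Basic continued fraction words -/

namespace WW

/-- All digits are positive. -/
def PosL (l : List ℕ) : Prop := ∀ a ∈ l, 1 ≤ a

/-- The inverse branch indexed by a word. -/
noncomputable def phi : List ℕ → ℝ → ℝ
  | [], x => x
  | a :: l, x => 1 / (a + phi l x)

/-- The denominator of the inverse branch. -/
noncomputable def den : List ℕ → ℝ → ℝ
  | [], _ => 1
  | a :: l, x => (a + phi l x) * den l x

lemma PosL.cons {a : ℕ} {l : List ℕ} (h : PosL (a :: l)) : 1 ≤ a ∧ PosL l :=
  ⟨h a (by simp), fun b hb => h b (by simp [hb])⟩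

lemma PosL.cons_real {a : ℕ} {l : List ℕ} (h : PosL (a :: l)) : (1:ℝ) ≤ a ∧ PosL l :=
  ⟨by exact_mod_cast h.cons.1, h.cons.2⟩

lemma PosL.append {l m : List ℕ} (h : PosL l) (h' : PosL m) : PosL (l ++ m) := by
  intro a ha
  rcases List.mem_append.1 ha with h1 | h1
  · exact h a h1
  · exact h' a h1

lemma PosL.of_append {l m : List ℕ} (h : PosL (l ++ m)) : PosL l ∧ PosL m :=
  ⟨fun a ha => h a (by simp [ha]), fun a ha => h a (by simp [ha])⟩

lemma posL_nil : PosL [] := by intro a ha; simp at ha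

lemma phi_nonneg {l : List ℕ} (hl : PosL l) {x : ℝ} (hx : 0 ≤ x) : 0 ≤ phi l x := by
  induction l with
  | nil => simpa [phi]
  | cons a l ih =>
    have := hl.cons_real
    have h2 := ih this.2
    simp only [phi]; positivity

lemma phi_mem_Icc {l : List ℕ} (hl : PosL l) {x : ℝ} (hx : x ∈ Icc (0:ℝ) 1) :
    phi l x ∈ Icc (0:ℝ) 1 := by
  refine ⟨phi_nonneg hl hx.1, ?_⟩
  cases l with
  | nil => simpa [phi] using hx.2
  | cons a l =>
    have h1 := hl.cons_real
    have h2 := phi_nonneg h1.2 hx.1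
    simp only [phi]
    rw [div_le_one (by linarith)]; linarith [h1.1]

lemma phi_mem_Ioo {l : List ℕ} (hl : PosL l) {x : ℝ} (hx : x ∈ Ioo (0:ℝ) 1) :
    phi l x ∈ Ioo (0:ℝ) 1 := by
  induction l with
  | nil => simpa [phi] using hx
  | cons a l ih =>
    have h1 := hl.cons_real
    have h2 := ih h1.2
    simp only [phi]
    constructor
    · have := h2.1; have := h1.1; positivity
    · rw [div_lt_one (by linarith [h2.1])]; linarith [h1.1, h2.1]

lemma phi_append (l m : List ℕ) (x : ℝ) : phi (l ++ m) x = phi l (phi m x) := by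
  induction l with
  | nil => simp [phi]
  | cons a l ih => simp [phi, ih]

lemma den_append (l m : List ℕ) (x : ℝ) : den (l ++ m) x = den l (phi m x) * den m x := by
  induction l with
  | nil => simp [den]
  | cons a l ih => simp [den, ih, phi_append, mul_assoc]

lemma one_le_den {l : List ℕ} (hl : PosL l) {x : ℝ} (hx : 0 ≤ x) : 1 ≤ den l x := by
  induction l with
  | nil => simp [den]
  | cons a l ih =>
    have h1 := hl.cons_real
    have h2 := phi_nonneg h1.2 hx
    have h3 := ih h1.2
    simp only [den]
    nlinarith [h1.1]

lemma phi_sub {l : List ℕ} (hl : PosL l) {x y : ℝ} (hx : 0 ≤ x) (hy : 0 ≤ y) :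
    |phi l x - phi l y| = |x - y| / (den l x * den l y) := by
  induction l with
  | nil => simp [phi, den]
  | cons a l ih =>
    have h1 := hl.cons_real
    have h2 := phi_nonneg h1.2 hx
    have h2' := phi_nonneg h1.2 hy
    have h3 := one_le_den h1.2 hx
    have h3' := one_le_den h1.2 hy
    have p1 : 0 < (a:ℝ) + phi l x := by linarith [h1.1]
    have p2 : 0 < (a:ℝ) + phi l y := by linarith [h1.1]
    simp only [phi, den]
    have : 1 / ((a:ℝ) + phi l x) - 1 / (a + phi l y)
        = - (phi l x - phi l y) / ((a + phi l x) * (a + phi l y)) := by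
      field_simp; ring
    rw [this, abs_div, abs_neg, ih h1.2, abs_of_pos (mul_pos p1 p2), div_div]
    congr 1; ring

lemma den_affine {l : List ℕ} (hl : PosL l) : ∃ α β α' β' : ℝ, 0 ≤ α ∧ 0 ≤ β ∧ 0 ≤ α' ∧ 0 ≤ β' ∧
    β ≤ α ∧ β + β' ≤ α + α' ∧
    ∀ x, 0 ≤ x → den l x = α + β * x ∧ phi l x * den l x = α' + β' * x := by
  induction l with
  | nil => exact ⟨1, 0, 0, 1, by norm_num, by norm_num, by norm_num, by norm_num, by norm_num,
      by norm_num, fun x _ => by simp [den, phi]⟩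
  | cons a l ih =>
    have h1 := hl.cons_real
    obtain ⟨α, β, α', β', h2, h3, h4, h5, h6, h7, h8⟩ := ih h1.2
    have ha := h1.1
    refine ⟨a * α + α', a * β + β', α, β, by positivity, by positivity, h2, h3, ?_, ?_, ?_⟩
    · nlinarith
    · nlinarith
    · intro x hx
      obtain ⟨e1, e2⟩ := h8 x hx
      have h9 := phi_nonneg h1.2 hx
      constructor
      · simp only [den]; rw [add_mul, e2, e1]; ring
      · simp only [den, phi]
        have : (a:ℝ) + phi l x ≠ 0 := by positivity
        rw [← mul_assoc, one_div, inv_mul_cancel₀ this, one_mul, e1]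

lemma den_aff {l : List ℕ} (hl : PosL l) {x : ℝ} (hx : 0 ≤ x) :
    den l x = den l 0 + (den l 1 - den l 0) * x := by
  obtain ⟨α, β, α', β', h2, h3, h4, h5, h6, h7, h8⟩ := den_affine hl
  rw [(h8 x hx).1, (h8 0 le_rfl).1, (h8 1 zero_le_one).1]; ring

lemma den_bounds {l : List ℕ} (hl : PosL l) {x : ℝ} (hx : x ∈ Icc (0:ℝ) 1) :
    den l 0 ≤ den l x ∧ den l x ≤ 2 * den l 0 := by
  obtain ⟨α, β, α', β', h2, h3, h4, h5, h6, h7, h8⟩ := den_affine hl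
  rw [(h8 x hx.1).1, (h8 0 le_rfl).1]
  constructor <;> nlinarith [hx.1, hx.2]

/-- The continuant of a word. -/
noncomputable def q (l : List ℕ) : ℝ := den l 0

lemma one_le_q {l : List ℕ} (hl : PosL l) : 1 ≤ q l := one_le_den hl le_rfl

lemma q_pos {l : List ℕ} (hl : PosL l) : 0 < q l := lt_of_lt_of_le one_pos (one_le_q hl)

lemma q_append_ge {l m : List ℕ} (hl : PosL l) (hm : PosL m) : q l * q m ≤ q (l ++ m) := by
  have := (den_bounds hl (phi_mem_Icc hm (x := 0) (by simp))).1
  unfold q; rw [den_append]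
  exact mul_le_mul_of_nonneg_right this (q_pos hm).le

lemma q_append_le {l m : List ℕ} (hl : PosL l) (hm : PosL m) :
    q (l ++ m) ≤ 2 * (q l * q m) := by
  have := (den_bounds hl (phi_mem_Icc hm (x := 0) (by simp))).2
  unfold q; rw [den_append, ← mul_assoc]
  exact mul_le_mul_of_nonneg_right this (q_pos hm).le

lemma phi_lip {l : List ℕ} (hl : PosL l) {x y : ℝ} (hx : x ∈ Icc (0:ℝ) 1) (hy : y ∈ Icc (0:ℝ) 1) :
    |phi l x - phi l y| ≤ |x - y| / q l ^ 2 := by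
  rw [phi_sub hl hx.1 hy.1]
  have := q_pos hl
  have h1 := (den_bounds hl hx).1
  have h2 := (den_bounds hl hy).1
  have : q l ^ 2 ≤ den l x * den l y := by
    rw [sq]; exact mul_le_mul h1 h2 this.le (this.le.trans h1)
  gcongr

lemma phi_expand {l : List ℕ} (hl : PosL l) {x y : ℝ} (hx : x ∈ Icc (0:ℝ) 1)
    (hy : y ∈ Icc (0:ℝ) 1) :
    |x - y| ≤ 4 * q l ^ 2 * |phi l x - phi l y| := by
  rw [phi_sub hl hx.1 hy.1]
  have := q_pos hl
  have h1 := (den_bounds hl hx).2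
  have h2 := (den_bounds hl hy).2
  have p1 := one_le_den hl hx.1
  have p2 := one_le_den hl hy.1
  have h3 : den l x * den l y ≤ 4 * q l ^ 2 := by
    have : den l x * den l y ≤ (2 * q l) * (2 * q l) :=
      mul_le_mul h1 h2 (by linarith) (by linarith)
    linarith
  rw [mul_div_assoc', le_div_iff₀ (by positivity), mul_comm]
  exact mul_le_mul_of_nonneg_right h3 (abs_nonneg _)

lemma q_growth : ∀ (n : ℕ) (l : List ℕ), l.length = n → PosL l → (2:ℝ) ^ n ≤ 2 * q l ^ 2
  | 0, l, h, hl => by have := one_le_q hl; nlinarith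
  | 1, l, h, hl => by have := one_le_q hl; nlinarith
  | n + 2, a :: b :: l, h, hl => by
    have hl' : PosL l := hl.cons.2.cons.2
    have ih := q_growth n l (by simpa using h) hl'
    have hab : PosL [a, b] := (PosL.of_append (l := [a, b]) (m := l) (by simpa using hl)).1
    have h1 := q_append_ge hab hl'
    have ha : (1:ℝ) ≤ a := hl.cons_real.1
    have hb : (1:ℝ) ≤ b := hl.cons.2.cons_real.1
    have h2 : 2 ≤ q [a, b] := by
      simp only [q, den, phi, add_zero, mul_one]
      rw [add_mul, one_div, inv_mul_cancel₀ (by positivity)]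
      nlinarith
    have h3 : 2 * q l ≤ q (a :: b :: l) := by
      have := q_pos hl'
      calc 2 * q l ≤ q [a, b] * q l := by gcongr
        _ ≤ _ := by simpa using h1
    have := q_pos hl'
    have : (2 * q l)^2 ≤ q (a :: b :: l) ^ 2 := by gcongr
    rw [pow_add]; nlinarith
  | n + 2, [a], h, hl => by simp at h
  | n + 2, [], h, hl => by simp at h

lemma q_concat {l : List ℕ} (hl : PosL l) {a : ℕ} (ha : 1 ≤ a) :
    q (l ++ [a]) = a * q l + (den l 1 - q l) := by
  have ha' : (1:ℝ) ≤ a := by exact_mod_cast ha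
  unfold q
  rw [den_append]
  simp only [phi, den, add_zero, mul_one]
  rw [den_aff hl (by positivity)]
  field_simp

lemma den_concat_one {l : List ℕ} (hl : PosL l) {a : ℕ} (ha : 1 ≤ a) :
    den (l ++ [a]) 1 - q (l ++ [a]) = q l := by
  have ha' : (1:ℝ) ≤ a := by exact_mod_cast ha
  rw [q_concat hl ha]
  unfold q
  rw [den_append]
  simp only [phi, den, mul_one]
  rw [den_aff hl (by positivity)]
  field_simp
  ring

lemma posL_ofFn {n : ℕ} {a : Fin n → ℕ} (ha : ∀ i, 1 ≤ a i) : PosL (List.ofFn a) := by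
  intro b hb
  obtain ⟨i, rfl⟩ := (List.mem_ofFn' _ _).1 hb
  exact ha i

lemma contQ_eq : ∀ (n : ℕ) (a : Fin n → ℕ), (∀ i, 1 ≤ a i) → (contQ n a : ℝ) = q (List.ofFn a)
  | 0, a, h => by simp [contQ, q, den]
  | 1, a, h => by simp [contQ, q, den, phi]
  | n + 2, a, h => by
    have h1 := contQ_eq (n + 1) (Fin.init a) (fun i => h _)
    have h2 := contQ_eq n (Fin.init (Fin.init a)) (fun i => h _)
    have e1 : List.ofFn a = List.ofFn (Fin.init a) ++ [a (Fin.last (n+1))] := by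
      rw [List.ofFn_succ', List.concat_eq_append]; rfl
    have e2 : List.ofFn (Fin.init a) = List.ofFn (Fin.init (Fin.init a)) ++
        [(Fin.init a) (Fin.last n)] := by
      rw [List.ofFn_succ', List.concat_eq_append]; rfl
    simp only [contQ]
    push_cast
    rw [h1, h2, e1, q_concat (posL_ofFn (a := Fin.init a) fun i => h _) (h _)]
    congr 1
    rw [e2, den_concat_one (posL_ofFn (a := Fin.init (Fin.init a)) fun i => h _)
      (a := Fin.init a (Fin.last n)) (h _)]

/-! ### Gauss map -/

lemma gauss_branch {a : ℕ} {z : ℝ} (hz : z ∈ Ico (0:ℝ) 1) :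
    gaussMap (1 / (a + z)) = z ∧ ⌊1 / (1 / ((a:ℝ) + z))⌋₊ = a := by
  have h : ⌊(a:ℝ) + z⌋ = a := by
    rw [Int.floor_eq_iff]; push_cast; constructor <;> linarith [hz.1, hz.2]
  have h' : ⌊(a:ℝ) + z⌋₊ = a := by
    rw [Nat.floor_eq_iff (by have := hz.1; positivity)]; constructor <;> linarith [hz.1, hz.2]
  unfold gaussMap
  rw [one_div_one_div, h, h']; simp

lemma gauss_iter {l : List ℕ} (hl : PosL l) {y : ℝ} (hy : y ∈ Ioo (0:ℝ) 1) :
    gaussMap^[l.length] (phi l y) = y := by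
  induction l with
  | nil => simp [phi]
  | cons a l ih =>
    have h1 := hl.cons
    have h2 := phi_mem_Ioo h1.2 hy
    simp only [List.length_cons, Function.iterate_succ, Function.comp, phi]
    rw [(gauss_branch ⟨h2.1.le, h2.2⟩).1, ih h1.2]

lemma phi_inj {l m : List ℕ} (hl : PosL l) (hm : PosL m) (hlen : l.length = m.length) {y z : ℝ}
    (hy : y ∈ Ioo (0:ℝ) 1) (hz : z ∈ Ioo (0:ℝ) 1) (h : phi l y = phi m z) : l = m := by
  induction l generalizing m with
  | nil => cases m with
    | nil => rfl
    | cons b m => simp at hlen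
  | cons a l ih =>
    cases m with
    | nil => simp at hlen
    | cons b m =>
      have h1 := phi_mem_Ioo hl.cons.2 hy
      have h2 := phi_mem_Ioo hm.cons.2 hz
      simp only [phi] at h
      have g1 := gauss_branch (a := a) ⟨h1.1.le, h1.2⟩
      have g2 := gauss_branch (a := b) ⟨h2.1.le, h2.2⟩
      rw [h] at g1
      have e1 : a = b := g1.2.symm.trans g2.2
      have e2 := g1.1.symm.trans g2.1
      rw [e1, ih hl.cons.2 hm.cons.2 (by simpa using hlen) e2]

lemma irr_of_iter {x : ℝ} (h : ∀ n, gaussMap^[n] x ∈ Ioo (0:ℝ) 1) : Irrational x := by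
  have key : ∀ (k : ℕ) (x : ℝ) (p : ℤ), 0 < k → (∀ n, gaussMap^[n] x ∈ Ioo (0:ℝ) 1) →
      x * k = p → False := by
    intro k
    induction k using Nat.strong_induction_on with
    | _ k ih =>
      intro x p hk hx hp
      have h0 := hx 0
      simp only [Function.iterate_zero, id] at h0
      have hk' : (0:ℝ) < k := by exact_mod_cast hk
      have p0 : (0:ℝ) < p := by rw [← hp]; exact mul_pos h0.1 hk'
      have p1 : (p:ℝ) < k := by rw [← hp]; nlinarith [h0.2]
      have p0' : 0 < p := by exact_mod_cast p0
      have p1' : p < k := by exact_mod_cast p1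
      obtain ⟨m, rfl⟩ : ∃ m : ℕ, p = m := ⟨p.toNat, by omega⟩
      refine ih m (by omega) (gaussMap x) (k - ⌊1 / x⌋ * m) (by omega) (fun n => ?_) ?_
      · have := hx (n + 1)
        simpa only [Function.iterate_succ, Function.comp] using this
      · unfold gaussMap
        push_cast at hp ⊢
        rw [← hp]
        have := h0.1.ne'
        field_simp
  rintro ⟨r, rfl⟩
  refine key r.den r r.num r.pos h ?_
  have := Rat.mul_den_eq_num r
  exact_mod_cast this

lemma gauss_irr {x : ℝ} (hx : x ∈ Ioo (0:ℝ) 1) (hi : Irrational x) :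
    gaussMap x ∈ Ioo (0:ℝ) 1 ∧ Irrational (gaussMap x) := by
  have h1 : Irrational (gaussMap x) := by
    unfold gaussMap
    rw [one_div]
    exact hi.inv.sub_intCast _
  refine ⟨⟨lt_of_le_of_ne (Int.fract_nonneg (1 / x)) (fun h => ?_), Int.fract_lt_one (1 / x)⟩, h1⟩
  exact h1.ne_zero h.symm

lemma gauss_irr_iter {x : ℝ} (hx : x ∈ Ioo (0:ℝ) 1) (hi : Irrational x) (n : ℕ) :
    gaussMap^[n] x ∈ Ioo (0:ℝ) 1 ∧ Irrational (gaussMap^[n] x) := by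
  induction n with
  | zero => exact ⟨hx, hi⟩
  | succ n ih =>
    rw [Function.iterate_succ_apply']
    exact gauss_irr ih.1 ih.2

lemma pq_pos {x : ℝ} (hx : x ∈ Ioo (0:ℝ) 1) (hi : Irrational x) (n : ℕ) : 1 ≤ pq x n := by
  unfold pq
  have := (gauss_irr_iter hx hi (n - 1)).1
  rw [Nat.one_le_floor_iff, le_div_iff₀ this.1]
  linarith [this.2]

lemma expansion (n : ℕ) {x : ℝ} (hx : x ∈ Ioo (0:ℝ) 1) (hi : Irrational x) :
    x = phi (List.ofFn fun i : Fin n => pq x (i + 1)) (gaussMap^[n] x) := by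
  induction n generalizing x with
  | zero => simp [phi]
  | succ n ih =>
    have h := gauss_irr hx hi
    rw [List.ofFn_succ, Function.iterate_succ_apply]
    simp only [phi]
    have e : (fun i : Fin n => pq x (i.succ + 1)) = fun i : Fin n => pq (gaussMap x) (i + 1) := by
      funext i
      simp only [pq, Fin.val_succ, Nat.add_sub_cancel, Function.iterate_succ_apply]
    rw [e, ← ih h.1 h.2]
    have h1 : ((pq x (((0 : Fin (n+1)) : ℕ) + 1) : ℕ) : ℝ) = (⌊1 / x⌋ : ℤ) := by
      simp only [pq, Fin.val_zero, zero_add, Nat.sub_self, Function.iterate_zero, id]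
      rw [natCast_floor_eq_intCast_floor (by have := hx.1; positivity)]
    rw [h1]
    unfold gaussMap
    have := hx.1.ne'
    field_simp
    ring

end WW

/-! ### Pressure sums -/

namespace WW
open scoped ENNReal Topology

/-- The partition sum. -/
noncomputable def S (B s : ℝ) (n : ℕ) : ℝ≥0∞ := ∑' a : Fin n → ℕ+,
        ENNReal.ofReal ((B ^ n * ((contQ n fun i => (a i : ℕ)) : ℝ) ^ 2) ^ (-s))

/-- The word attached to a tuple. -/
def wd {n : ℕ} (a : Fin n → ℕ+) : List ℕ := List.ofFn fun i => (a i : ℕ)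

lemma posL_wd {n : ℕ} (a : Fin n → ℕ+) : PosL (wd a) := posL_ofFn fun i => (a i).pos

lemma length_wd {n : ℕ} (a : Fin n → ℕ+) : (wd a).length = n := by simp [wd]

lemma wd_inj {n : ℕ} {a b : Fin n → ℕ+} (h : wd a = wd b) : a = b := by
  have := List.ofFn_injective h
  funext i
  exact PNat.coe_injective (congrFun this i)

lemma S_eq (B s : ℝ) (n : ℕ) :
    S B s n = ∑' a : Fin n → ℕ+, ENNReal.ofReal ((B ^ n * q (wd a) ^ 2) ^ (-s)) := by
  unfold S
  congr 1
  funext a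
  rw [contQ_eq n _ (fun i => (a i).pos)]
  rfl

/-- The set defining the exponent. -/
def good (B : ℝ) : Set ℝ := {s : ℝ | 0 ≤ s ∧
    Filter.atTop.limsup (fun n : ℕ => (((n : ℝ)⁻¹ : ℝ) : EReal) * ENNReal.log (S B s n)) ≤ 0}

lemma sExp_eq (B : ℝ) : sExp B = sInf (good B) := rfl

lemma good_bddBelow (B : ℝ) : BddBelow (good B) := ⟨0, fun _ h => h.1⟩

lemma good_of_bdd {B s C : ℝ} (hs : 0 ≤ s) (hC : 0 < C) (h : ∀ n, S B s n ≤ ENNReal.ofReal C) :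
    s ∈ good B := by
  refine ⟨hs, ?_⟩
  have h1 : ∀ n : ℕ, (((n : ℝ)⁻¹ : ℝ) : EReal) * ENNReal.log (S B s n) ≤
      (((n : ℝ)⁻¹ * Real.log C : ℝ) : EReal) := by
    intro n
    rw [EReal.coe_mul]
    refine mul_le_mul_of_nonneg_left ?_ (by exact_mod_cast inv_nonneg.2 (Nat.cast_nonneg n))
    rw [← ENNReal.log_ofReal_of_pos hC]
    exact ENNReal.log_monotone (h n)
  have h2 : Tendsto (fun n : ℕ => (((n : ℝ)⁻¹ * Real.log C : ℝ) : EReal)) atTop (𝓝 0) := by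
    have : Tendsto (fun n : ℕ => (n : ℝ)⁻¹ * Real.log C) atTop (𝓝 0) := by
      simpa using tendsto_inv_atTop_nhds_zero_nat.mul_const (Real.log C)
    exact (continuous_coe_real_ereal.tendsto 0).comp this
  calc _ ≤ _ := limsup_le_limsup (Eventually.of_forall h1)
    _ = 0 := h2.limsup_eq

lemma eventually_of_good {B s ε : ℝ} (hs : s ∈ good B) (hε : 0 < ε) :
    ∀ᶠ n : ℕ in atTop, S B s n ≤ ENNReal.ofReal (Real.exp (ε * n)) := by
  have h1 := eventually_lt_of_limsup_lt (lt_of_le_of_lt hs.2 (show (0:EReal) < (ε:ℝ) by exact_mod_cast hε))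
  filter_upwards [h1, eventually_gt_atTop 0] with n hn hn0
  have hn0' : (0:ℝ) < n := by exact_mod_cast hn0
  have h2 : ENNReal.log (S B s n) ≤ ((ε * n : ℝ) : EReal) := by
    have := mul_le_mul_of_nonneg_left hn.le (show (0:EReal) ≤ ((n:ℝ):EReal) by exact_mod_cast hn0'.le)
    rw [← mul_assoc, ← EReal.coe_mul, mul_inv_cancel₀ hn0'.ne', EReal.coe_one, one_mul,
      ← EReal.coe_mul, mul_comm] at this
    exact this
  have h3 : ENNReal.log (ENNReal.ofReal (Real.exp (ε * n))) = ((ε * n : ℝ) : EReal) := by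
    rw [ENNReal.log_ofReal_of_pos (Real.exp_pos _), Real.log_exp]
  rw [← h3] at h2
  exact ENNReal.log_le_log_iff.1 h2

lemma continuousOn_phi {l : List ℕ} (hl : PosL l) : ContinuousOn (phi l) (Icc (0:ℝ) 1) := by
  induction l with
  | nil => exact continuousOn_id
  | cons a l ih =>
    have h := hl.cons_real
    refine continuousOn_const.div (continuousOn_const.add (ih h.2)) (fun x hx => ?_)
    have := phi_nonneg h.2 hx.1
    linarith [h.1]

lemma tail_sub : Icc (1/3:ℝ) (1/2) ⊆ Ioo (0:ℝ) 1 := fun x hx => ⟨by linarith [hx.1], by linarith [hx.2]⟩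

lemma tail_sub' : Icc (1/3:ℝ) (1/2) ⊆ Icc (0:ℝ) 1 := fun x hx => ⟨by linarith [hx.1], by linarith [hx.2]⟩

lemma isCompact_phi {l : List ℕ} (hl : PosL l) : IsCompact (phi l '' Icc (1/3:ℝ) (1/2)) :=
  isCompact_Icc.image_of_continuousOn ((continuousOn_phi hl).mono tail_sub')

lemma disjoint_phi {l m : List ℕ} (hl : PosL l) (hm : PosL m) (hlen : l.length = m.length)
    (hne : l ≠ m) : Disjoint (phi l '' Icc (1/3:ℝ) (1/2)) (phi m '' Icc (1/3:ℝ) (1/2)) := by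
  rw [Set.disjoint_left]
  rintro x ⟨y, hy, rfl⟩ ⟨z, hz, h⟩
  exact hne (phi_inj hl hm hlen (tail_sub hy) (tail_sub hz) h.symm)

lemma volume_phi {l : List ℕ} (hl : PosL l) :
    ENNReal.ofReal (1 / (24 * q l ^ 2)) ≤ volume (phi l '' Icc (1/3:ℝ) (1/2)) := by
  have h1 : uIcc (phi l (1/3)) (phi l (1/2)) ⊆ phi l '' Icc (1/3:ℝ) (1/2) := by
    have := intermediate_value_uIcc (a := (1/3:ℝ)) (b := 1/2) (f := phi l)
      (by rw [uIcc_of_le (by norm_num)]; exact (continuousOn_phi hl).mono tail_sub')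
    rwa [uIcc_of_le (show (1/3:ℝ) ≤ 1/2 by norm_num)] at this
  refine le_trans ?_ (measure_mono h1)
  rw [Real.volume_interval]
  apply ENNReal.ofReal_le_ofReal
  have h2 := phi_expand hl (x := 1/2) (y := 1/3) (by constructor <;> norm_num)
    (by constructor <;> norm_num)
  have h3 := q_pos hl
  rw [div_le_iff₀ (by positivity)]
  rw [show |(1/2:ℝ) - 1/3| = 1/6 by rw [abs_of_pos] <;> norm_num] at h2
  linarith

lemma one_mem_good {B : ℝ} (hB : 1 ≤ B) : (1:ℝ) ∈ good B := by
  refine good_of_bdd (C := 24) zero_le_one (by norm_num) (fun n => ?_)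
  rw [S_eq]
  have h1 : ∑' a : Fin n → ℕ+, volume (phi (wd a) '' Icc (1/3:ℝ) (1/2)) ≤ volume (Icc (0:ℝ) 1) := by
    refine (tsum_meas_le_meas_iUnion_of_disjoint volume
      (fun a => (isCompact_phi (posL_wd a)).measurableSet) ?_).trans (measure_mono ?_)
    · intro a b hab
      exact disjoint_phi (posL_wd a) (posL_wd b) (by rw [length_wd, length_wd])
        (fun h => hab (wd_inj h))
    · refine iUnion_subset fun a => ?_
      rintro _ ⟨y, hy, rfl⟩
      exact phi_mem_Icc (posL_wd a) (tail_sub' hy)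
  have h2 : ∀ a : Fin n → ℕ+, ENNReal.ofReal ((B ^ n * q (wd a) ^ 2) ^ (-1:ℝ)) ≤
      ENNReal.ofReal 24 * volume (phi (wd a) '' Icc (1/3:ℝ) (1/2)) := by
    intro a
    refine le_trans ?_ (mul_le_mul_right (volume_phi (posL_wd a)) _)
    rw [← ENNReal.ofReal_mul (by norm_num)]
    apply ENNReal.ofReal_le_ofReal
    have h3 := q_pos (posL_wd a)
    have h4 : 1 ≤ B ^ n := one_le_pow₀ hB
    rw [Real.rpow_neg_one]
    have : 24 * (1 / (24 * q (wd a) ^ 2)) = (1 * q (wd a) ^ 2)⁻¹ := by field_simp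
    rw [this]
    gcongr
  calc _ ≤ _ := ENNReal.tsum_le_tsum h2
    _ = ENNReal.ofReal 24 * ∑' a : Fin n → ℕ+, volume (phi (wd a) '' Icc (1/3:ℝ) (1/2)) :=
      ENNReal.tsum_mul_left
    _ ≤ ENNReal.ofReal 24 * 1 := by gcongr; simpa using h1
    _ = _ := by simp

lemma sExp_le_one {B : ℝ} (hB : 1 ≤ B) : sExp B ≤ 1 :=
  csInf_le (good_bddBelow B) (one_mem_good hB)

lemma sExp_nonneg (B : ℝ) : 0 ≤ sExp B := Real.sInf_nonneg fun _ h => h.1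

/-- Below the exponent, partition sums are arbitrarily large. -/
lemma exists_big {B s C : ℝ} (hs : 0 ≤ s) (hsB : s < sExp B) (hC : 0 < C) :
    ∃ n, ENNReal.ofReal C < S B s n := by
  by_contra! h
  exact absurd (csInf_le (good_bddBelow B) (good_of_bdd hs hC h)) (not_le.2 hsB)

/-! ### Upper bound -/

lemma S_compare {B s s' : ℝ} (hB : 1 ≤ B) (hss : s' ≤ s) (n : ℕ) :
    S B s n ≤ ENNReal.ofReal ((2 ^ n / 2 : ℝ) ^ (-(s - s'))) * S B s' n := by
  rw [S_eq, S_eq, ← ENNReal.tsum_mul_left]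
  refine ENNReal.tsum_le_tsum fun a => ?_
  rw [← ENNReal.ofReal_mul (by positivity)]
  apply ENNReal.ofReal_le_ofReal
  have h3 := q_pos (posL_wd a)
  have h4 : 1 ≤ B ^ n := one_le_pow₀ hB
  have h5 := q_growth n (wd a) (length_wd a) (posL_wd a)
  have h6 : (2 ^ n / 2 : ℝ) ≤ B ^ n * q (wd a) ^ 2 := by nlinarith [sq_nonneg (q (wd a))]
  rw [show -s = -(s - s') + -s' by ring, Real.rpow_add (by positivity)]
  gcongr ?_ * _
  exact Real.rpow_le_rpow_of_nonpos (by positivity) h6 (by linarith)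

lemma S_summable {B s : ℝ} (hB : 1 ≤ B) (hs : sExp B < s) : ∃ N, ∑' m, S B s (N + m) ≠ ∞ := by
  obtain ⟨s', hs', hlt⟩ := (csInf_lt_iff (good_bddBelow B) ⟨1, one_mem_good hB⟩).1 hs
  set d := s - s' with hd
  have hd0 : 0 < d := by linarith
  have hl2 : 0 < Real.log 2 := Real.log_pos (by norm_num)
  have hε : 0 < d * Real.log 2 / 2 := by positivity
  obtain ⟨N, hN⟩ := eventually_atTop.1 (eventually_of_good hs' hε)
  refine ⟨N, ?_⟩
  set r : ℝ := Real.exp (-(d * Real.log 2 / 2)) with hr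
  have hr1 : r < 1 := by rw [hr, Real.exp_lt_one_iff]; linarith
  have hr0 : 0 < r := Real.exp_pos _
  have h1 : ∀ m, S B s (N + m) ≤ ENNReal.ofReal (2 ^ d * r ^ N * r ^ m) := by
    intro m
    refine (S_compare hB hlt.le (N + m)).trans ((mul_le_mul_right (hN _ (by omega)) _).trans ?_)
    rw [← ENNReal.ofReal_mul (by positivity)]
    apply ENNReal.ofReal_le_ofReal
    apply le_of_eq
    rw [mul_assoc, ← pow_add, hr, ← Real.exp_nat_mul, ← hd, Real.rpow_def_of_pos (by positivity),
      Real.rpow_def_of_pos (by positivity), Real.log_div (by positivity) (by positivity),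
      Real.log_pow, ← Real.exp_add, ← Real.exp_add]
    congr 1
    push_cast
    ring
  refine ne_top_of_le_ne_top ?_ (ENNReal.tsum_le_tsum h1)
  rw [← ENNReal.ofReal_tsum_of_nonneg (fun m => by positivity)
    ((summable_geometric_of_lt_one hr0.le hr1).mul_left _)]
  exact ENNReal.ofReal_ne_top

/-- The Wang–Wu set. -/
def FB (B : ℝ) : Set ℝ := {x : ℝ | x ∈ Set.Ioo (0 : ℝ) 1 ∧ Irrational x ∧
      {n : ℕ | B ^ n ≤ (pq x n : ℝ)}.Infinite}

/-- Covering sets. -/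
def cov (B : ℝ) {n : ℕ} (a : Fin n → ℕ+) : Set ℝ := phi (wd a) '' Icc 0 (B ^ (n+1))⁻¹

lemma diam_cov {B : ℝ} (hB : 1 ≤ B) {n : ℕ} (a : Fin n → ℕ+) :
    Metric.ediam (cov B a) ≤ ENNReal.ofReal (B ^ n * q (wd a) ^ 2)⁻¹ := by
  have h3 := q_pos (posL_wd a)
  have h4 : 1 ≤ B ^ n := one_le_pow₀ hB
  have h5 : B ^ n ≤ B ^ (n+1) := pow_le_pow_right₀ hB (by omega)
  have h6 : (B ^ (n+1))⁻¹ ≤ (B^n)⁻¹ := by gcongr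
  have h7 : (B^n)⁻¹ ≤ 1 := inv_le_one_of_one_le₀ h4
  refine Metric.ediam_le ?_
  rintro _ ⟨x, hx, rfl⟩ _ ⟨y, hy, rfl⟩
  rw [edist_dist, Real.dist_eq]
  apply ENNReal.ofReal_le_ofReal
  refine (phi_lip (posL_wd a) ⟨hx.1, by linarith [hx.2]⟩ ⟨hy.1, by linarith [hy.2]⟩).trans ?_
  rw [mul_inv, ← div_eq_mul_inv]
  have : |x - y| ≤ (B^n)⁻¹ := by rw [abs_le]; constructor <;> linarith [hx.1, hx.2, hy.1, hy.2]
  gcongr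

lemma FB_cover {B : ℝ} (hB : 1 ≤ B) (N : ℕ) :
    FB B ⊆ ⋃ i : (Σ m : ℕ, (Fin (N + m) → ℕ+)), cov B i.2 := by
  rintro x ⟨hx, hi, hinf⟩
  obtain ⟨n, hn, hnN⟩ := hinf.exists_gt N
  obtain ⟨m, rfl⟩ : ∃ m, n = N + m + 1 := ⟨n - N - 1, by omega⟩
  refine mem_iUnion.2 ⟨⟨m, fun i => ⟨pq x (i + 1), pq_pos hx hi _⟩⟩, ?_⟩
  refine ⟨gaussMap^[N + m] x, ?_, (expansion (N + m) hx hi).symm⟩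
  have h := (gauss_irr_iter hx hi (N + m)).1
  refine ⟨h.1.le, ?_⟩
  have h0 : (0:ℝ) < B ^ (N + m + 1) := by positivity
  rw [le_inv_comm₀ h.1 h0, ← one_div]
  refine (show B ^ (N + m + 1) ≤ _ from hn).trans ?_
  unfold pq
  rw [Nat.add_sub_cancel]
  exact Nat.floor_le (by have := h.1; positivity)

lemma upper {B : ℝ} (hB : 1 ≤ B) : dimH (FB B) ≤ ENNReal.ofReal (sExp B) := by
  refine ENNReal.le_of_forall_pos_le_add fun ε hε _ => ?_
  set s : ℝ := sExp B + ε with hs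
  have hs0 : 0 < s := by have := sExp_nonneg B; have : (0:ℝ) < ε := hε; linarith
  have : ENNReal.ofReal (sExp B) + ε = (s.toNNReal : ℝ≥0∞) := by
    rw [hs]
    change _ = ENNReal.ofReal _
    rw [ENNReal.ofReal_add (sExp_nonneg B) (by positivity)]
    simp
  rw [this]
  refine dimH_le_of_hausdorffMeasure_ne_top ?_
  rw [Real.coe_toNNReal _ hs0.le]
  obtain ⟨N, hN⟩ := S_summable hB (show sExp B < s by have : (0:ℝ) < ε := hε; linarith)
  have key := Measure.hausdorffMeasure_le_liminf_tsum s (FB B) (l := atTop) (β := ℕ)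
    (ι := fun k => Σ m : ℕ, (Fin (N + k + m) → ℕ+))
    (fun k => ENNReal.ofReal (2 * (1/2) ^ k)) ?_ (fun k i => cov B i.2) ?_ ?_
  · refine ne_top_of_le_ne_top hN (key.trans ?_)
    refine (liminf_le_liminf (v := fun _ => ∑' m, S B s (N + m)) (Eventually.of_forall fun k => ?_)).trans
      (by simp)
    rw [ENNReal.tsum_sigma (fun m (a : Fin (N + k + m) → ℕ+) => Metric.ediam (cov B a) ^ s)]
    refine le_trans ?_ (ENNReal.tsum_comp_le_tsum_of_injective
      (add_left_injective k) (fun m => S B s (N + m)))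
    refine ENNReal.tsum_le_tsum fun m => ?_
    rw [S_eq]
    have : N + (m + k) = N + k + m := by ring
    rw [this]
    refine ENNReal.tsum_le_tsum fun a => ?_
    have h3 := q_pos (posL_wd a)
    have h4 : 1 ≤ B ^ (N + k + m) := one_le_pow₀ hB
    rw [Real.rpow_neg (by positivity), ← Real.inv_rpow (by positivity),
      ← ENNReal.ofReal_rpow_of_nonneg (by positivity) hs0.le]
    exact ENNReal.rpow_le_rpow (diam_cov hB a) hs0.le
  · have : Tendsto (fun k : ℕ => (2:ℝ) * (1/2) ^ k) atTop (𝓝 0) := by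
      simpa using (tendsto_pow_atTop_nhds_zero_of_lt_one (r := (1/2:ℝ)) (by norm_num) (by norm_num)).const_mul 2
    simpa using ENNReal.tendsto_ofReal this
  · refine Eventually.of_forall fun k i => (diam_cov hB i.2).trans (ENNReal.ofReal_le_ofReal ?_)
    have h3 := q_pos (posL_wd i.2)
    have h4 : 1 ≤ B ^ (N + k + i.1) := one_le_pow₀ hB
    have h5 := q_growth _ (wd i.2) (length_wd i.2) (posL_wd i.2)
    have h6 : (2:ℝ) ^ k ≤ 2 ^ (N + k + i.1) := pow_le_pow_right₀ (by norm_num) (by omega)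
    have h7 : (2 ^ k / 2 : ℝ) ≤ B ^ (N + k + i.1) * q (wd i.2) ^ 2 := by
      nlinarith [sq_nonneg (q (wd i.2))]
    have h8 : (2:ℝ) * (1/2)^k = (2 ^ k / 2 : ℝ)⁻¹ := by rw [one_div, inv_pow]; field_simp
    rw [h8]
    gcongr
  · exact Eventually.of_forall fun k => FB_cover hB (N + k)

end WW

/-! ### Lower bound -/

namespace WW
open scoped ENNReal NNReal Topology

lemma mass_principle {Ω : Type*} [MeasurableSpace Ω] (ν : Measure Ω) [IsProbabilityMeasure ν]
    (X : Ω → ℝ) (F : Set ℝ) (hX : ∀ ω, X ω ∈ F) (s : ℝ≥0) (C : ℝ≥0∞) (hC : C ≠ ∞)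
    (h : ∀ U : Set ℝ, ν (X ⁻¹' U) ≤ C * Metric.ediam U ^ (s:ℝ)) : (s : ℝ≥0∞) ≤ dimH F := by
  apply le_dimH_of_hausdorffMeasure_ne_zero
  have key : C⁻¹ ≤ μH[(s:ℝ)] F := by
    rw [Measure.hausdorffMeasure_apply]
    refine le_iSup₂_of_le 1 one_pos ?_
    refine le_iInf fun t => le_iInf fun ht => le_iInf fun _ => ?_
    have h1 : (1:ℝ≥0∞) ≤ C * ∑' n, ⨆ _ : (t n).Nonempty, Metric.ediam (t n) ^ (s:ℝ) := by
      calc (1:ℝ≥0∞) = ν univ := measure_univ.symm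
        _ ≤ ν (⋃ n, X ⁻¹' t n) := by
          refine measure_mono fun ω _ => ?_
          have := ht (hX ω)
          simpa using this
        _ ≤ ∑' n, ν (X ⁻¹' t n) := measure_iUnion_le _
        _ ≤ ∑' n, C * ⨆ _ : (t n).Nonempty, Metric.ediam (t n) ^ (s:ℝ) := by
          refine ENNReal.tsum_le_tsum fun n => ?_
          by_cases hn : (t n).Nonempty
          · simpa [hn] using h (t n)
          · rw [not_nonempty_iff_eq_empty] at hn
            simp [hn]
        _ = _ := ENNReal.tsum_mul_left
    rw [ENNReal.inv_le_iff_le_mul (fun _ h0 => by simp [h0] at h1) (fun h0 => absurd h0 hC)]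
    exact h1
  intro h0
  rw [h0] at key
  simp at key
  exact hC key

lemma rp {X Y V K s : ℝ} (hX : 0 < X) (hY : 0 < Y) (hV : 0 < V) (hK : 1 ≤ K) (hs : 0 ≤ s)
    (hs1 : s ≤ 1) (h : V ≤ K * (X * Y)) : X ^ (-s) * Y ^ (-s) ≤ K * V ^ (-s) := by
  rw [← Real.mul_rpow hX.le hY.le]
  have h1 : (K * (X * Y)) ^ (-s) ≤ V ^ (-s) :=
    Real.rpow_le_rpow_of_nonpos hV h (by linarith)
  rw [Real.mul_rpow (by linarith) (by positivity)] at h1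
  have h2 : K ^ (-s) * K ^ s = 1 := by
    rw [← Real.rpow_add (by linarith)]; simp
  have h3 : K ^ s ≤ K := by
    simpa using Real.rpow_le_rpow_of_exponent_le hK hs1
  have h4 : 0 < V ^ (-s) := by positivity
  have h5 : 0 < K ^ s := by positivity
  calc (X * Y) ^ (-s) = K ^ s * (K ^ (-s) * (X * Y) ^ (-s)) := by
        rw [← mul_assoc, mul_comm (K ^ s), h2, one_mul]
    _ ≤ K ^ s * V ^ (-s) := by gcongr
    _ ≤ K * V ^ (-s) := by gcongr

/-- The data of a finite family of words with large partition sum. -/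
structure ND (B s : ℝ) where
  /-- number of words -/
  r0 : ℕ
  /-- length of words -/
  ell : ℕ
  /-- the words -/
  U : ℕ → List ℕ
  pos : ∀ j, PosL (U j)
  len : ∀ j < r0, (U j).length = ell
  inj : ∀ j < r0, ∀ j' < r0, U j = U j' → j = j'
  big : 128 * B ≤ ∑ j ∈ Finset.range r0, (B ^ ell * q (U j) ^ 2) ^ (-s)

lemma exists_ND {B s : ℝ} (hB : 1 ≤ B) (hs : 0 ≤ s) (hsB : s < sExp B) : Nonempty (ND B s) := by
  obtain ⟨n, hn⟩ := exists_big hs hsB (show 0 < 128 * B by linarith)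
  rw [S_eq, ENNReal.tsum_eq_iSup_sum, lt_iSup_iff] at hn
  obtain ⟨A, hA⟩ := hn
  rw [← ENNReal.ofReal_sum_of_nonneg (fun a _ => by positivity)] at hA
  have hA' := (ENNReal.ofReal_lt_ofReal_iff_of_nonneg (by linarith)).1 hA
  set f : Fin A.card → (Fin n → ℕ+) := fun i => (A.equivFin.symm i : Fin n → ℕ+) with hf
  refine ⟨⟨A.card, n, fun j => if h : j < A.card then wd (f ⟨j, h⟩) else [], ?_, ?_, ?_, ?_⟩⟩
  · intro j
    split_ifs
    · exact posL_wd _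
    · exact posL_nil
  · intro j hj
    rw [dif_pos hj, length_wd]
  · intro j hj j' hj' h
    rw [dif_pos hj, dif_pos hj'] at h
    have h1 := wd_inj h
    have h2 := A.equivFin.symm.injective (Subtype.ext h1)
    simpa using h2
  · refine hA'.le.trans (le_of_eq ?_)
    rw [← Fin.sum_univ_eq_sum_range (fun j => (B ^ n * q (if h : j < A.card then wd (f ⟨j, h⟩)
      else []) ^ 2) ^ (-s)) A.card]
    rw [← Finset.sum_coe_sort A]
    rw [← Equiv.sum_comp A.equivFin.symm]
    refine Finset.sum_congr rfl fun i _ => ?_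
    rw [dif_pos i.2]

section scheme

variable {B s : ℝ} (D : ND B s)

/-- The state machine: current length and current slack. -/
noncomputable def st : ℕ → ℕ × ℝ
  | 0 => (0, 1)
  | k + 1 => if (st k).2 ≤ 1 then ((st k).1 + 2, 512 * B ^ 2 * (B ^ ((st k).1 + 2)) ^ s)
      else ((st k).1 + D.ell + 1, (st k).2 / 2)

/-- Special stage. -/
def Sp (k : ℕ) : Prop := (st D k).2 ≤ 1

/-- Size of the special digits. -/
noncomputable def Nn (k : ℕ) : ℕ := ⌈B ^ ((st D k).1 + 2)⌉₊

open Classical in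
/-- Number of letters. -/
noncomputable def rr (k : ℕ) : ℕ := if Sp D k then Nn D k else D.r0

open Classical in
/-- Letters. -/
noncomputable def let' (k j : ℕ) : List ℕ := if Sp D k then [2, Nn D k + j] else 2 :: D.U j

/-- Normalisation. -/
noncomputable def ZZ : ℝ := ∑ j ∈ Finset.range D.r0, (B ^ D.ell * q (D.U j) ^ 2) ^ (-s)

open Classical in
/-- Weights. -/
noncomputable def pp (k j : ℕ) : ℝ :=
  if Sp D k then 1 / (Nn D k : ℝ) else (B ^ D.ell * q (D.U j) ^ 2) ^ (-s) / ZZ D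

/-- Prefix words. -/
noncomputable def W (o : ℕ → ℕ) : ℕ → List ℕ
  | 0 => []
  | k + 1 => W o k ++ let' D k (o k)

/-- Mass of prefixes. -/
noncomputable def mm (o : ℕ → ℕ) (k : ℕ) : ℝ := ∏ i ∈ Finset.range k, pp D i (o i)

lemma Nn_pos (hB : 1 ≤ B) (k : ℕ) : 1 ≤ Nn D k := by
  have : 1 ≤ B ^ ((st D k).1 + 2) := one_le_pow₀ hB
  unfold Nn
  exact Nat.one_le_ceil_iff.2 (by linarith)

lemma Nn_ge (k : ℕ) : B ^ ((st D k).1 + 2) ≤ Nn D k := Nat.le_ceil _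

lemma Nn_le (hB : 1 ≤ B) (k : ℕ) : (Nn D k : ℝ) ≤ 2 * B ^ ((st D k).1 + 2) := by
  have h1 : 1 ≤ B ^ ((st D k).1 + 2) := one_le_pow₀ hB
  have := Nat.ceil_lt_add_one (show 0 ≤ B ^ ((st D k).1 + 2) by linarith)
  unfold Nn
  linarith

lemma ZZ_big : 128 * B ≤ ZZ D := D.big

lemma pp_nonneg (hB : 1 ≤ B) (k j : ℕ) : 0 ≤ pp D k j := by
  have := ZZ_big D
  have : 0 < ZZ D := by linarith
  unfold pp
  split_ifs <;> positivity

lemma pp_sum (hB : 1 ≤ B) (k : ℕ) : ∑ j : Fin (rr D k), pp D k j = 1 := by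
  rw [Fin.sum_univ_eq_sum_range (fun j => pp D k j) (rr D k)]
  have := ZZ_big D
  have : 0 < ZZ D := by linarith
  by_cases h : Sp D k
  · have h1 : (1:ℝ) ≤ Nn D k := by exact_mod_cast Nn_pos D hB k
    simp only [rr, pp, h, if_true, Finset.sum_const, Finset.card_range, nsmul_eq_mul]
    field_simp
  · simp only [rr, pp, h, if_false]
    rw [← Finset.sum_div]
    exact div_self (by positivity)

lemma let_pos (hB : 1 ≤ B) (k j : ℕ) : ∃ u, let' D k j = 2 :: u ∧ PosL u := by
  unfold let'
  split_ifs
  · refine ⟨_, rfl, ?_⟩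
    intro a ha
    have := Nn_pos D hB k
    simp at ha
    omega
  · exact ⟨_, rfl, D.pos j⟩

lemma posL_let (hB : 1 ≤ B) (k j : ℕ) : PosL (let' D k j) := by
  obtain ⟨u, h, hu⟩ := let_pos D hB k j
  rw [h]
  intro a ha
  rcases List.mem_cons.1 ha with h1 | h1
  · omega
  · exact hu a h1

lemma posL_W (hB : 1 ≤ B) (o : ℕ → ℕ) (k : ℕ) : PosL (W D o k) := by
  induction k with
  | zero => exact posL_nil
  | succ k ih => exact ih.append (posL_let D hB _ _)

lemma length_let {k j : ℕ} (h : j < rr D k) :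
    (st D k).1 + (let' D k j).length = (st D (k+1)).1 := by
  by_cases hk : Sp D k
  · have hk' := hk
    unfold Sp at hk'
    simp [let', hk, st, hk']
  · have hk' := hk
    unfold Sp at hk'
    simp only [rr, hk, if_false] at h
    simp [let', hk, st, hk', D.len j h, add_assoc]

lemma length_W {o : ℕ → ℕ} (ho : ∀ i, o i < rr D i) (k : ℕ) :
    (W D o k).length = (st D k).1 := by
  induction k with
  | zero => simp [W, st]
  | succ k ih => rw [← length_let D (ho k), W, List.length_append, ih]

lemma st_ge (k : ℕ) : k ≤ (st D k).1 := by
  induction k with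
  | zero => simp
  | succ k ih => simp only [st]; split_ifs <;> simp <;> omega

lemma sp_inf (M : ℕ) : ∃ k ≥ M, Sp D k := by
  by_contra! h
  have h1 : ∀ i, (st D (M + i)).2 = (st D M).2 / 2 ^ i := by
    intro i
    induction i with
    | zero => simp
    | succ i ih =>
      have := h (M + i) (by omega)
      unfold Sp at this
      rw [← add_assoc]
      simp only [st, this, if_false]
      rw [ih, pow_succ, div_div]
  obtain ⟨i, hi⟩ := pow_unbounded_of_one_lt (st D M).2 (show (1:ℝ) < 2 by norm_num)
  apply h (M + i) (by omega)
  unfold Sp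
  rw [h1, div_le_one (by positivity)]
  exact hi.le

lemma q_cons_two {u : List ℕ} (hu : PosL u) : q (2 :: u) ≤ 4 * q u := by
  have h := q_append_le (l := [2]) (m := u) (by intro a ha; simp at ha; omega) hu
  have h2 : q [2] = 2 := by simp [q, den, phi]
  rw [h2] at h
  simp only [List.singleton_append] at h
  linarith

lemma q_step {w u : List ℕ} (hw : PosL w) (hu : PosL u) : q (w ++ 2 :: u) ≤ 8 * (q w * q u) := by
  have h2u : PosL (2 :: u) := by
    intro a ha
    rcases List.mem_cons.1 ha with h1 | h1
    · omega
    · exact hu a h1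
  have h := q_append_le hw h2u
  have h3 := q_cons_two hu
  have := q_pos hw
  nlinarith

lemma invariants (hB : 1 ≤ B) (hs : 0 ≤ s) (hs1 : s ≤ 1) {o : ℕ → ℕ} (ho : ∀ i, o i < rr D i)
    (k : ℕ) :
    0 ≤ mm D o k ∧ 0 < (st D k).2 ∧ mm D o k ≤ 512 * B ^ 2 * (q (W D o k) ^ 2) ^ (-s) ∧
    mm D o k ≤ (st D k).2 * (B ^ (st D k).1 * q (W D o k) ^ 2) ^ (-s) := by
  induction k with
  | zero =>
    simp only [mm, W, st, q, den, Finset.range_zero, Finset.prod_empty, pow_zero, one_pow, mul_one,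
      Real.one_rpow, zero_le_one, true_and, zero_lt_one, le_refl, and_true]
    nlinarith
  | succ k ih =>
    obtain ⟨i0, i1, i2, i3⟩ := ih
    have hm : mm D o (k+1) = mm D o k * pp D k (o k) := Finset.prod_range_succ _ _
    have hw := posL_W D hB o k
    have hw' := posL_W D hB o (k+1)
    set w := W D o k with hwdef
    set w' := W D o (k+1) with hw'def
    set L := (st D k).1 with hL
    have qw := q_pos hw
    have qw' := q_pos hw'
    have hBL : 1 ≤ B ^ L := one_le_pow₀ hB
    have hZ := ZZ_big D
    have hZ0 : 0 < ZZ D := by linarith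
    have m0 : 0 ≤ mm D o (k+1) := by rw [hm]; exact mul_nonneg i0 (pp_nonneg D hB _ _)
    by_cases hk : Sp D k
    · have hk' := hk
      unfold Sp at hk'
      have hst : st D (k+1) = (L + 2, 512 * B ^ 2 * (B ^ (L + 2)) ^ s) := by
        simp only [st, hk', if_true]; rfl
      have hN1 : (1:ℝ) ≤ Nn D k := by exact_mod_cast Nn_pos D hB k
      have hN2 := Nn_le D hB k
      have ho' : o k < Nn D k := by simpa [rr, hk] using ho k
      have ho'' : (o k : ℝ) ≤ Nn D k := by exact_mod_cast ho'.le
      have e1 : w' = w ++ 2 :: [Nn D k + o k] := by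
        rw [hw'def, W, let', if_pos hk]
      have e2 : q w' ≤ 16 * q w * Nn D k := by
        rw [e1]
        refine (q_step hw ?_).trans ?_
        · intro a ha; have := Nn_pos D hB k; simp at ha; omega
        · have : q [Nn D k + o k] = Nn D k + o k := by simp [q, den, phi]
          rw [this]
          nlinarith
      have e3 : q w' ^ 2 ≤ 512 * B ^ 2 * ((B ^ L * q w ^ 2) * Nn D k) := by
        have : q w' ^ 2 ≤ (16 * q w * Nn D k) ^ 2 := by gcongr
        refine this.trans ?_
        have h5 : (Nn D k : ℝ) * (256 * q w ^ 2 * Nn D k)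
            ≤ (2 * B ^ (L + 2)) * (256 * q w ^ 2 * Nn D k) := by gcongr
        rw [pow_add] at h5
        nlinarith
      have e4 := rp (by positivity) (by linarith) (by positivity)
        (show 1 ≤ 512 * B ^ 2 by nlinarith) hs hs1 e3
      have e5 : mm D o (k+1) ≤ (B ^ L * q w ^ 2) ^ (-s) * (Nn D k : ℝ) ^ (-s) := by
        rw [hm, pp, if_pos hk]
        have h6 : 1 / (Nn D k : ℝ) ≤ (Nn D k : ℝ) ^ (-s) := by
          rw [one_div, ← Real.rpow_neg_one]
          exact Real.rpow_le_rpow_of_exponent_le hN1 (by linarith)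
        have h7 : mm D o k ≤ (B ^ L * q w ^ 2) ^ (-s) := by
          refine i3.trans ?_
          have : 0 ≤ (B ^ L * q w ^ 2) ^ (-s) := by positivity
          nlinarith
        gcongr
      have e6 := e5.trans e4
      refine ⟨m0, by rw [hst]; positivity, e6, ?_⟩
      rw [hst]
      simp only
      refine e6.trans (le_of_eq ?_)
      rw [Real.mul_rpow (by positivity) (by positivity), ← mul_assoc, mul_assoc (512 * B ^ 2),
        ← Real.rpow_add (by positivity)]
      simp
    · have hk' := hk
      unfold Sp at hk'
      have hst : st D (k+1) = (L + D.ell + 1, (st D k).2 / 2) := by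
        simp only [st, hk', if_false]; rfl
      have e1 : w' = w ++ 2 :: D.U (o k) := by
        rw [hw'def, W, let', if_neg hk]
      set u := D.U (o k) with hu
      have hup : PosL u := D.pos _
      have qu := q_pos hup
      have e2 : q w' ≤ 8 * (q w * q u) := by rw [e1]; exact q_step hw hup
      have e2' : q w' ^ 2 ≤ 64 * (q w ^ 2 * q u ^ 2) := by
        have : q w' ^ 2 ≤ (8 * (q w * q u)) ^ 2 := by gcongr
        nlinarith
      have hBl : 1 ≤ B ^ D.ell := one_le_pow₀ hB
      have a1 : q w' ^ 2 ≤ 64 * B * (q w ^ 2 * (B ^ D.ell * q u ^ 2)) := by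
        refine e2'.trans ?_
        have : 1 ≤ B * B ^ D.ell := by nlinarith
        have h0 : 0 ≤ 64 * (q w ^ 2 * q u ^ 2) := by positivity
        nlinarith
      have a2 : B ^ (L + D.ell + 1) * q w' ^ 2 ≤
          64 * B * ((B ^ L * q w ^ 2) * (B ^ D.ell * q u ^ 2)) := by
        have : B ^ (L + D.ell + 1) * q w' ^ 2 ≤ B ^ (L + D.ell + 1) * (64 * (q w ^ 2 * q u ^ 2)) := by
          gcongr
        refine this.trans (le_of_eq ?_)
        ring
      have b1 := rp (by positivity) (by positivity) (by positivity)
        (show 1 ≤ 64 * B by linarith) hs hs1 a1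
      have b2 := rp (by positivity) (by positivity) (by positivity)
        (show 1 ≤ 64 * B by linarith) hs hs1 a2
      have hpp : pp D k (o k) = (B ^ D.ell * q u ^ 2) ^ (-s) / ZZ D := by rw [pp, if_neg hk]
      refine ⟨m0, by rw [hst]; simp only; positivity, ?_, ?_⟩
      · rw [hm, hpp, mul_div_assoc', div_le_iff₀ hZ0]
        have hV : 0 ≤ (q w' ^ 2) ^ (-s) := by positivity
        calc mm D o k * (B ^ D.ell * q u ^ 2) ^ (-s)
            ≤ (512 * B ^ 2 * (q w ^ 2) ^ (-s)) * (B ^ D.ell * q u ^ 2) ^ (-s) := by gcongr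
          _ = 512 * B ^ 2 * ((q w ^ 2) ^ (-s) * (B ^ D.ell * q u ^ 2) ^ (-s)) := by ring
          _ ≤ 512 * B ^ 2 * (64 * B * (q w' ^ 2) ^ (-s)) := by gcongr
          _ ≤ 512 * B ^ 2 * (ZZ D * (q w' ^ 2) ^ (-s)) := by gcongr; linarith
          _ = _ := by ring
      · rw [hst]
        simp only
        rw [hm, hpp, mul_div_assoc', div_le_iff₀ hZ0]
        have hV : 0 ≤ (B ^ (L + D.ell + 1) * q w' ^ 2) ^ (-s) := by positivity
        calc mm D o k * (B ^ D.ell * q u ^ 2) ^ (-s)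
            ≤ ((st D k).2 * (B ^ L * q w ^ 2) ^ (-s)) * (B ^ D.ell * q u ^ 2) ^ (-s) := by gcongr
          _ = (st D k).2 * ((B ^ L * q w ^ 2) ^ (-s) * (B ^ D.ell * q u ^ 2) ^ (-s)) := by ring
          _ ≤ (st D k).2 * (64 * B * (B ^ (L + D.ell + 1) * q w' ^ 2) ^ (-s)) := by gcongr
          _ ≤ (st D k).2 * ((ZZ D / 2) * (B ^ (L + D.ell + 1) * q w' ^ 2) ^ (-s)) := by
            gcongr; linarith
          _ = _ := by ring

end scheme

end WW

namespace WW
open scoped ENNReal NNReal Topology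

section scheme2

variable {B s : ℝ} (D : ND B s)

lemma two_tail {u : List ℕ} (hu : PosL u) {y : ℝ} (hy : y ∈ Icc (0:ℝ) 1) :
    phi (2 :: u) y ∈ Icc (1/3:ℝ) (1/2) := by
  have h := phi_mem_Icc hu hy
  simp only [phi, Nat.cast_ofNat]
  constructor
  · apply one_div_le_one_div_of_le <;> linarith [h.1, h.2]
  · apply one_div_le_one_div_of_le <;> linarith [h.1, h.2]

/-- Existence of the point with prescribed prefixes. -/
lemma exists_pt (hB : 1 ≤ B) (o : ℕ → ℕ) : ∃ x : ℝ, ∀ k, ∃ y ∈ Icc (1/3:ℝ) (1/2),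
    x = phi (W D o k) y := by
  have hc : ∀ k, IsCompact (phi (W D o k) '' Icc (0:ℝ) 1) := fun k =>
    isCompact_Icc.image_of_continuousOn (continuousOn_phi (posL_W D hB o k))
  obtain ⟨x, hx⟩ := IsCompact.nonempty_iInter_of_sequence_nonempty_isCompact_isClosed
    (fun k => phi (W D o k) '' Icc (0:ℝ) 1) (fun k => by
      rintro _ ⟨y, hy, rfl⟩
      refine ⟨phi (let' D k (o k)) y, phi_mem_Icc (posL_let D hB _ _) hy, ?_⟩
      rw [W, phi_append])
    (fun k => (nonempty_Icc.2 zero_le_one).image _) (hc 0) (fun k => (hc k).isClosed)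
  refine ⟨x, fun k => ?_⟩
  obtain ⟨y, hy, rfl⟩ := mem_iInter.1 hx (k+1)
  obtain ⟨u, hu, hup⟩ := let_pos D hB k (o k)
  refine ⟨phi (2 :: u) y, two_tail hup hy, ?_⟩
  rw [W, phi_append, hu]

/-- The coded point. -/
noncomputable def pt (hB : 1 ≤ B) (o : ℕ → ℕ) : ℝ := (exists_pt D hB o).choose

/-- Tail of the coded point. -/
noncomputable def tl (hB : 1 ≤ B) (o : ℕ → ℕ) (k : ℕ) : ℝ :=
  ((exists_pt D hB o).choose_spec k).choose

lemma tl_mem (hB : 1 ≤ B) (o : ℕ → ℕ) (k : ℕ) : tl D hB o k ∈ Icc (1/3:ℝ) (1/2) :=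
  ((exists_pt D hB o).choose_spec k).choose_spec.1

lemma pt_eq (hB : 1 ≤ B) (o : ℕ → ℕ) (k : ℕ) : pt D hB o = phi (W D o k) (tl D hB o k) :=
  ((exists_pt D hB o).choose_spec k).choose_spec.2

lemma tl_eq (hB : 1 ≤ B) (o : ℕ → ℕ) (k : ℕ) :
    tl D hB o k = phi (let' D k (o k)) (tl D hB o (k+1)) := by
  have h1 := pt_eq D hB o k
  have h2 := pt_eq D hB o (k+1)
  rw [W, phi_append] at h2
  have h3 := h1.symm.trans h2
  have h4 := phi_expand (posL_W D hB o k) (tail_sub' (tl_mem D hB o k))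
    (phi_mem_Icc (posL_let D hB k (o k)) (tail_sub' (tl_mem D hB o (k+1))))
  rw [h3, sub_self, abs_zero, mul_zero] at h4
  exact sub_eq_zero.1 (abs_nonpos_iff.1 h4)

lemma pt_mem (hB : 1 ≤ B) {o : ℕ → ℕ} (ho : ∀ i, o i < rr D i) : pt D hB o ∈ FB B := by
  have hit : ∀ n, gaussMap^[n] (pt D hB o) ∈ Ioo (0:ℝ) 1 := by
    intro n
    have hlen : n ≤ (W D o n).length := by rw [length_W D ho]; exact st_ge D n
    have hp := posL_W D hB o n
    rw [pt_eq D hB o n]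
    rw [← List.take_append_drop n (W D o n)] at hp ⊢
    have hy := phi_mem_Ioo hp.of_append.2 (tail_sub (tl_mem D hB o n))
    rw [phi_append]
    have := gauss_iter hp.of_append.1 hy
    rw [List.length_take, min_eq_left hlen] at this
    rwa [this]
  refine ⟨hit 0, irr_of_iter hit, ?_⟩
  refine Set.infinite_of_forall_exists_gt fun M => ?_
  obtain ⟨k, hkM, hk⟩ := sp_inf D M
  refine ⟨(st D k).1 + 2, ?_, by have := st_ge D k; omega⟩
  have hy := tl_mem D hB o (k+1)
  have hp := posL_W D hB o k
  have e : pt D hB o = phi (W D o k ++ [2]) (1 / (((Nn D k + o k : ℕ) : ℝ) + tl D hB o (k+1))) := by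
    rw [pt_eq D hB o k, tl_eq, let', if_pos hk, phi_append]
    simp only [phi]
  have hp2 : PosL (W D o k ++ [2]) := hp.append (by intro a ha; simp at ha; omega)
  have hN := Nn_pos D hB k
  have hy2 : (1 / (((Nn D k + o k : ℕ) : ℝ) + tl D hB o (k+1))) ∈ Ioo (0:ℝ) 1 := by
    have := phi_mem_Ioo (l := [Nn D k + o k]) (by intro a ha; simp at ha; omega) (tail_sub hy)
    simpa [phi] using this
  have hg := gauss_iter hp2 hy2
  rw [← e, List.length_append, length_W D ho] at hg
  simp only [List.length_singleton] at hg
  have hpq : pq (pt D hB o) ((st D k).1 + 2) = Nn D k + o k := by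
    unfold pq
    rw [show (st D k).1 + 2 - 1 = (st D k).1 + 1 by omega, hg]
    exact (gauss_branch ⟨(tail_sub hy).1.le, (tail_sub hy).2⟩).2
  change B ^ _ ≤ ((pq _ _ : ℕ) : ℝ)
  rw [hpq]
  have := Nn_ge D k
  push_cast
  have h0 : (0:ℝ) ≤ o k := by positivity
  linarith

lemma W_congr {o o' : ℕ → ℕ} {k : ℕ} (h : ∀ i < k, o i = o' i) : W D o k = W D o' k := by
  induction k with
  | zero => rfl
  | succ k ih => rw [W, W, ih (fun i hi => h i (by omega)), h k (by omega)]

lemma mm_congr {o o' : ℕ → ℕ} {k : ℕ} (h : ∀ i < k, o i = o' i) : mm D o k = mm D o' k :=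
  Finset.prod_congr rfl fun i hi => by rw [h i (Finset.mem_range.1 hi)]

lemma exists_gap (D : ND B s) : ∃ δ : ℝ, 0 < δ ∧ ∀ j < D.r0, ∀ j' < D.r0, j ≠ j' →
    ∀ y ∈ Icc (1/3:ℝ) (1/2), ∀ y' ∈ Icc (1/3:ℝ) (1/2),
      δ ≤ |phi (2 :: D.U j) y - phi (2 :: D.U j') y'| := by
  have hpos : ∀ j, PosL (2 :: D.U j) := by
    intro j a ha
    rcases List.mem_cons.1 ha with h1 | h1
    · omega
    · exact D.pos j a h1
  have h1 : ∀ p : ℕ × ℕ, ∃ δ : ℝ, 0 < δ ∧ (p.1 < D.r0 → p.2 < D.r0 → p.1 ≠ p.2 →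
      ∀ y ∈ Icc (1/3:ℝ) (1/2), ∀ y' ∈ Icc (1/3:ℝ) (1/2),
      δ ≤ |phi (2 :: D.U p.1) y - phi (2 :: D.U p.2) y'|) := by
    rintro ⟨j, j'⟩
    by_cases h : j < D.r0 ∧ j' < D.r0 ∧ j ≠ j'
    · have hd := disjoint_phi (hpos j) (hpos j') (by simp [D.len j h.1, D.len j' h.2.1])
        (fun he => h.2.2 (D.inj j h.1 j' h.2.1 (by simpa using he)))
      obtain ⟨δ, hδ, hδ'⟩ := Metric.exists_pos_forall_lt_edist (isCompact_phi (hpos j))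
        (isCompact_phi (hpos j')).isClosed hd
      refine ⟨δ, by exact_mod_cast hδ, fun _ _ _ y hy y' hy' => ?_⟩
      have := hδ' _ ⟨y, hy, rfl⟩ _ ⟨y', hy', rfl⟩
      rw [edist_nndist, ENNReal.coe_lt_coe] at this
      rw [← Real.dist_eq, ← coe_nndist]
      exact_mod_cast this.le
    · refine ⟨1, one_pos, fun h1 h2 h3 => absurd ⟨h1, h2, h3⟩ h⟩
  choose f hf hf' using h1
  rcases Nat.eq_zero_or_pos D.r0 with h0 | h0
  · exact ⟨1, one_pos, fun j hj => by omega⟩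
  · have hne : (Finset.range D.r0 ×ˢ Finset.range D.r0).Nonempty :=
      ⟨(0, 0), by simp [h0]⟩
    obtain ⟨p, hp, hmin⟩ := Finset.exists_min_image _ f hne
    refine ⟨f p, hf p, fun j hj j' hj' hne y hy y' hy' => ?_⟩
    exact (hmin (j, j') (by simp [hj, hj'])).trans (hf' (j, j') hj hj' hne y hy y' hy')

/-- Special separation. -/
lemma special_gap (hB : 1 ≤ B) {k : ℕ} (hk : Sp D k) {i j : ℕ} (hi : i < j) (hj : j < Nn D k)
    {y y' : ℝ} (hy : y ∈ Icc (1/3:ℝ) (1/2)) (hy' : y' ∈ Icc (1/3:ℝ) (1/2)) :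
    ((j:ℝ) - i) ≤ 128 * (Nn D k : ℝ) ^ 2 * |phi (let' D k i) y - phi (let' D k j) y'| := by
  simp only [let', hk, if_true]
  have hN : (1:ℝ) ≤ Nn D k := by exact_mod_cast Nn_pos D hB k
  have hNn := Nn_pos D hB k
  have hp1 : PosL [Nn D k + i] := by intro a ha; simp at ha; omega
  have hp2 : PosL [Nn D k + j] := by intro a ha; simp at ha; omega
  have h := phi_expand (l := [2]) (by intro a ha; simp at ha; omega)
    (phi_mem_Icc hp1 (tail_sub' hy)) (phi_mem_Icc hp2 (tail_sub' hy'))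
  rw [← phi_append, ← phi_append] at h
  simp only [List.singleton_append] at h
  have h2 : q [2] = 2 := by simp [q, den, phi]
  rw [h2] at h
  have hj' : (j:ℝ) + 1 ≤ Nn D k := by exact_mod_cast hj
  have hi' : (i:ℝ) + 1 ≤ j := by exact_mod_cast hi
  have i0 : (0:ℝ) ≤ i := by positivity
  set N : ℝ := (Nn D k : ℝ) with hNdef
  have e : phi [Nn D k + i] y - phi [Nn D k + j] y' =
      ((j - i) + (y' - y)) / ((N + i + y) * (N + j + y')) := by
    simp only [phi]
    push_cast
    have : N + i + y ≠ 0 := by linarith [hy.1]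
    have : N + j + y' ≠ 0 := by linarith [hy'.1]
    rw [← hNdef]
    field_simp
    ring
  have hd1 : 0 < (N + i + y) * (N + j + y') := by
    apply mul_pos <;> linarith [hy.1, hy'.1]
  have hd2 : (N + i + y) * (N + j + y') ≤ (2 * N) * (2 * N) := by
    apply mul_le_mul <;> linarith [hy.1, hy'.1, hy.2, hy'.2]
  have h3 : ((j:ℝ) - i) / 2 / ((2 * N) * (2 * N)) ≤ |phi [Nn D k + i] y - phi [Nn D k + j] y'| := by
    rw [e]
    refine le_trans ?_ (le_abs_self _)
    apply div_le_div₀ <;> linarith [hy.1, hy'.1, hy.2, hy'.2]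
  have h4 := h3.trans h
  rw [div_div, div_le_iff₀ (by positivity)] at h4
  linarith

end scheme2

end WW

namespace WW
open scoped ENNReal NNReal Topology

section scheme3

variable {B s : ℝ} (D : ND B s)

lemma pmf_sum (hB : 1 ≤ B) (k : ℕ) :
    ∑ j : Fin (rr D k), ENNReal.ofReal (pp D k j) = 1 := by
  rw [← ENNReal.ofReal_sum_of_nonneg (f := fun j : Fin (rr D k) => pp D k j) (fun j _ => pp_nonneg D hB k j), pp_sum D hB k]
  simp

/-- Stage measure. -/
noncomputable def mu (hB : 1 ≤ B) (k : ℕ) : Measure (Fin (rr D k)) :=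
  (PMF.ofFintype (fun j : Fin (rr D k) => ENNReal.ofReal (pp D k j)) (pmf_sum D hB k)).toMeasure

instance (hB : 1 ≤ B) (k : ℕ) : IsProbabilityMeasure (mu D hB k) := by
  unfold mu; infer_instance

/-- The product measure. -/
noncomputable def nu (hB : 1 ≤ B) : Measure (∀ k, Fin (rr D k)) := Measure.infinitePi (mu D hB)

instance (hB : 1 ≤ B) : IsProbabilityMeasure (nu D hB) := by
  unfold nu; infer_instance

/-- Coding as naturals. -/
def cd (ω : ∀ k, Fin (rr D k)) : ℕ → ℕ := fun i => (ω i : ℕ)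

lemma cd_lt (ω : ∀ k, Fin (rr D k)) (i : ℕ) : cd D ω i < rr D i := (ω i).2

lemma mu_finset (hB : 1 ≤ B) (k : ℕ) (A : Finset (Fin (rr D k))) :
    mu D hB k A = ∑ j ∈ A, ENNReal.ofReal (pp D k j) := by
  unfold mu
  rw [PMF.toMeasure_apply_finset]
  rfl

lemma nu_cyl (hB : 1 ≤ B) (ω₀ : ∀ k, Fin (rr D k)) (k : ℕ) (A : Set (Fin (rr D k))) :
    nu D hB {ω | (∀ i < k, ω i = ω₀ i) ∧ ω k ∈ A} =
      ENNReal.ofReal (mm D (cd D ω₀) k) * mu D hB k A := by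
  classical
  let t : ∀ i, Set (Fin (rr D i)) := fun i =>
    {x | (i < k → x = ω₀ i) ∧ ∀ h : i = k, (h ▸ x) ∈ A}
  have e : {ω : ∀ k, Fin (rr D k) | (∀ i < k, ω i = ω₀ i) ∧ ω k ∈ A} =
      Set.pi (Finset.range (k+1)) t := by
    ext ω
    simp only [Set.mem_pi, Finset.coe_range, mem_Iio, t]
    constructor
    · rintro ⟨h1, h2⟩ i _
      refine ⟨h1 i, ?_⟩
      rintro rfl
      exact h2
    · intro h
      exact ⟨fun i hi => (h i (by omega)).1 hi, (h k (by omega)).2 rfl⟩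
  have hk : t k = A := by
    ext x; simp [t]
  have hi : ∀ i < k, t i = {ω₀ i} := by
    intro i hi
    ext x
    have : i ≠ k := by omega
    simp [t, hi, this]
  rw [e, nu, Measure.infinitePi_pi _ (fun i _ => MeasurableSet.of_discrete),
    Finset.prod_range_succ, hk, mm, ENNReal.ofReal_prod_of_nonneg (fun i _ => pp_nonneg D hB _ _)]
  congr 1
  refine Finset.prod_congr rfl fun i h => ?_
  rw [hi i (Finset.mem_range.1 h)]
  have := mu_finset D hB i {ω₀ i}
  simpa [cd] using this

lemma nu_cyl' (hB : 1 ≤ B) (ω₀ : ∀ k, Fin (rr D k)) (k : ℕ) :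
    nu D hB {ω | ∀ i < k, ω i = ω₀ i} = ENNReal.ofReal (mm D (cd D ω₀) k) := by
  have := nu_cyl D hB ω₀ k univ
  simpa using this

lemma nu_singleton (hB : 1 ≤ B) (hs : 0 < s) (hs1 : s ≤ 1) (ω₀ : ∀ k, Fin (rr D k)) :
    nu D hB {ω₀} = 0 := by
  have h1 : ∀ k, nu D hB {ω₀} ≤ ENNReal.ofReal (512 * B ^ 2 * (2 ^ s * ((2:ℝ) ^ (-s)) ^ k)) := by
    intro k
    refine (measure_mono (t := {ω | ∀ i < k, ω i = ω₀ i}) ?_).trans ?_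
    · rintro ω rfl i _; rfl
    rw [nu_cyl' D hB]
    apply ENNReal.ofReal_le_ofReal
    refine (invariants D hB hs.le hs1 (cd_lt D ω₀) k).2.2.1.trans ?_
    have hp := posL_W D hB (cd D ω₀) k
    have h2 := q_growth _ _ rfl hp
    have h3 : (2:ℝ) ^ k ≤ 2 ^ (W D (cd D ω₀) k).length :=
      pow_le_pow_right₀ (by norm_num) (by rw [length_W D (cd_lt D ω₀)]; exact st_ge D k)
    have h4 : (2:ℝ) ^ k / 2 ≤ q (W D (cd D ω₀) k) ^ 2 := by linarith
    have h5 := Real.rpow_le_rpow_of_nonpos (by positivity) h4 (show -s ≤ 0 by linarith)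
    have h6 : ((2:ℝ) ^ k / 2) ^ (-s) = 2 ^ s * ((2:ℝ) ^ (-s)) ^ k := by
      rw [Real.div_rpow (by positivity) (by positivity), ← Real.rpow_natCast, ← Real.rpow_natCast,
        ← Real.rpow_mul (by positivity), ← Real.rpow_mul (by positivity),
        Real.rpow_neg (by norm_num) s, div_inv_eq_mul]
      rw [mul_comm ((k:ℝ)) (-s)]; ring
    rw [h6] at h5
    gcongr
  have h2 : Tendsto (fun k : ℕ => ENNReal.ofReal (512 * B ^ 2 * (2 ^ s * ((2:ℝ) ^ (-s)) ^ k))) atTop (𝓝 0) := by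
    have h3 : (2:ℝ) ^ (-s) < 1 := Real.rpow_lt_one_of_one_lt_of_neg (by norm_num) (by linarith)
    have := ((tendsto_pow_atTop_nhds_zero_of_lt_one (by positivity) h3).const_mul ((2:ℝ)^s)).const_mul (512 * B ^ 2)
    simpa using ENNReal.tendsto_ofReal this
  exact le_antisymm (ge_of_tendsto' h2 h1) (zero_le)

lemma pt_dist (hB : 1 ≤ B) {o o' : ℕ → ℕ} {k : ℕ} (h : ∀ i < k, o i = o' i) :
    |tl D hB o k - tl D hB o' k| ≤ 4 * q (W D o k) ^ 2 * |pt D hB o - pt D hB o'| := by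
  rw [pt_eq D hB o k, pt_eq D hB o' k, ← W_congr D h]
  exact phi_expand (posL_W D hB o k) (tail_sub' (tl_mem D hB o k)) (tail_sub' (tl_mem D hB o' k))

lemma ediam_lower {U : Set ℝ} {x y r : ℝ} (hx : x ∈ U) (hy : y ∈ U) {K : ℝ} (hK : 0 ≤ K) (hs : 0 ≤ s)
    (h : r ≤ K * |x - y| ^ s) : ENNReal.ofReal r ≤ ENNReal.ofReal K * Metric.ediam U ^ s := by
  calc ENNReal.ofReal r ≤ ENNReal.ofReal (K * |x - y| ^ s) := ENNReal.ofReal_le_ofReal h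
    _ = ENNReal.ofReal K * ENNReal.ofReal |x - y| ^ s := by
      rw [ENNReal.ofReal_mul hK, ENNReal.ofReal_rpow_of_nonneg (abs_nonneg _) hs]
    _ ≤ _ := by
      gcongr
      rw [← Real.dist_eq, ← edist_dist]
      exact Metric.edist_le_ediam_of_mem hx hy

lemma measure_bound (hB : 1 ≤ B) (hs : 0 < s) (hs1 : s ≤ 1) : ∃ C : ℝ, 0 ≤ C ∧ ∀ U : Set ℝ,
    nu D hB ((fun ω => pt D hB (cd D ω)) ⁻¹' U) ≤ ENNReal.ofReal C * Metric.ediam U ^ s := by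
  obtain ⟨δ, hδ, hgap⟩ := exists_gap D
  have hB2 : 1 ≤ B ^ 2 := one_le_pow₀ hB
  refine ⟨2048 * B ^ 2 + 512 * B ^ 2 * (1 + 4 / δ), by positivity, fun U => ?_⟩
  set C := 2048 * B ^ 2 + 512 * B ^ 2 * (1 + 4 / δ) with hC
  have hC0 : 0 ≤ C := by positivity
  set V := (fun ω => pt D hB (cd D ω)) ⁻¹' U with hV
  by_cases hsub : V.Subsingleton
  · rcases hsub.eq_empty_or_singleton with h | ⟨ω, h⟩
    · rw [h]; simp
    · rw [h, nu_singleton D hB hs hs1]; exact zero_le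
  classical
  have hex : ∃ k, ∃ ω ∈ V, ∃ ω' ∈ V, ω k ≠ ω' k := by
    rw [Set.not_subsingleton_iff] at hsub
    obtain ⟨ω, h1, ω', h2, h3⟩ := hsub
    obtain ⟨k, hk⟩ := Function.ne_iff.1 h3
    exact ⟨k, ω, h1, ω', h2, hk⟩
  set k := Nat.find hex with hkdef
  obtain ⟨ω₁, hω₁, ω₂, hω₂, hne⟩ := Nat.find_spec hex
  rw [← hkdef] at hne
  have hagree : ∀ ω ∈ V, ∀ ω' ∈ V, ∀ i < k, ω i = ω' i := by
    intro ω hω ω' hω' i hi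
    by_contra hcon
    exact Nat.find_min hex hi ⟨ω, hω, ω', hω', hcon⟩
  have hagree' : ∀ ω ∈ V, ∀ ω' ∈ V, ∀ i < k, cd D ω i = cd D ω' i := by
    intro ω hω ω' hω' i hi
    unfold cd
    rw [hagree ω hω ω' hω' i hi]
  by_cases hk : Sp D k
  · -- special stage
    let E : Set ℕ := (fun ω => cd D ω k) '' V
    have hEne : E.Nonempty := ⟨_, ω₁, hω₁, rfl⟩
    have hEb : BddAbove E := ⟨rr D k, by rintro _ ⟨ω, _, rfl⟩; exact (cd_lt D ω k).le⟩
    obtain ⟨ωa, hωa, ha⟩ := Nat.sInf_mem hEne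
    obtain ⟨ωb, hωb, hb⟩ := Nat.sSup_mem hEne hEb
    set a := sInf E with hadef
    set b := sSup E with hbdef
    simp only at ha hb
    have hab : ∀ ω ∈ V, a ≤ cd D ω k ∧ cd D ω k ≤ b := fun ω hω =>
      ⟨Nat.sInf_le ⟨ω, hω, rfl⟩, le_csSup hEb ⟨ω, hω, rfl⟩⟩
    have hlt : a < b := by
      by_contra hcon
      apply hne
      have h1 := hab ω₁ hω₁
      have h2 := hab ω₂ hω₂
      apply Fin.ext
      change cd D ω₁ k = cd D ω₂ k
      omega
    have hbN : b < Nn D k := by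
      have := cd_lt D ωb k
      rw [hb] at this
      simpa [rr, hk] using this
    have haggab := hagree' ωa hωa ωb hωb
    have hgap' := special_gap D hB hk hlt hbN (tl_mem D hB (cd D ωa) (k+1))
      (tl_mem D hB (cd D ωb) (k+1))
    have hta := tl_eq D hB (cd D ωa) k
    have htb := tl_eq D hB (cd D ωb) k
    rw [ha] at hta
    rw [hb] at htb
    rw [← hta, ← htb] at hgap'
    have hd := pt_dist D hB haggab
    obtain ⟨m0, d0, -, hm⟩ := invariants D hB hs.le hs1 (cd_lt D ωa) k
    have hp := posL_W D hB (cd D ωa) k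
    have qp := q_pos hp
    set m := mm D (cd D ωa) k with hmdef
    set w := W D (cd D ωa) k with hwdef
    set Δ := |pt D hB (cd D ωa) - pt D hB (cd D ωb)| with hΔ
    set N : ℝ := (Nn D k : ℝ) with hN
    have hN1 : 1 ≤ N := by rw [hN]; exact_mod_cast Nn_pos D hB k
    have hN2 : N ≤ 2 * B ^ ((st D k).1 + 2) := Nn_le D hB k
    have hBL : 1 ≤ B ^ (st D k).1 := one_le_pow₀ hB
    have hg1 : (1:ℝ) ≤ (b:ℝ) - a := by
      have : (a:ℝ) + 1 ≤ b := by exact_mod_cast hlt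
      linarith
    set g : ℝ := (b:ℝ) - a with hg
    have hgN : g ≤ N := by
      have : (b:ℝ) ≤ N := by rw [hN]; exact_mod_cast hbN.le
      have : (0:ℝ) ≤ a := by positivity
      linarith
    have hΔg : g ≤ 512 * q w ^ 2 * N ^ 2 * Δ := by
      refine hgap'.trans ?_
      calc 128 * N ^ 2 * |tl D hB (cd D ωa) k - tl D hB (cd D ωb) k|
          ≤ 128 * N ^ 2 * (4 * q w ^ 2 * Δ) := by gcongr
        _ = _ := by ring
    have hΔ0 : 0 < Δ := by
      by_contra hcon
      have : Δ = 0 := le_antisymm (not_lt.1 hcon) (abs_nonneg _)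
      rw [this] at hΔg
      linarith
    -- the measure
    have hmeas : nu D hB V ≤ ENNReal.ofReal (m * ((g + 1) / N)) := by
      let A : Finset (Fin (rr D k)) := Finset.univ.filter fun j => a ≤ (j:ℕ) ∧ (j:ℕ) ≤ b
      have hVsub : V ⊆ {ω | (∀ i < k, ω i = ωa i) ∧ ω k ∈ (A : Set (Fin (rr D k)))} := by
        intro ω hω
        refine ⟨hagree ω hω ωa hωa, ?_⟩
        have := hab ω hω
        simpa [A, cd] using this
      refine (measure_mono hVsub).trans ?_
      rw [nu_cyl D hB ωa k, mu_finset]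
      have hcard : A.card ≤ b + 1 - a := by
        have : A.card ≤ (Finset.Icc a b).card := by
          refine Finset.card_le_card_of_injOn (fun j => (j:ℕ)) ?_ (fun x _ y _ h => Fin.ext h)
          intro j hj
          simpa [A] using hj
        simpa using this
      have hcard' : (A.card : ℝ) ≤ g + 1 := by
        have : (A.card : ℝ) ≤ ((b + 1 - a : ℕ) : ℝ) := by exact_mod_cast hcard
        rw [Nat.cast_sub (by omega)] at this
        push_cast at this
        linarith
      rw [← ENNReal.ofReal_sum_of_nonneg (f := fun j : Fin (rr D k) => pp D k j) (fun j _ => pp_nonneg D hB k j),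
        ← ENNReal.ofReal_mul m0]
      apply ENNReal.ofReal_le_ofReal
      refine mul_le_mul_of_nonneg_left ?_ m0
      simp only [pp, hk, if_true, Finset.sum_const, nsmul_eq_mul]
      rw [mul_one_div]
      gcongr
    refine hmeas.trans ?_
    refine ediam_lower hωa hωb hC0 hs.le ?_
    change _ ≤ C * Δ ^ s
    have h1 : (g + 1) / N ≤ 2 * (N / g) ^ (-s) := by
      have h2 : (g + 1) / N ≤ 2 * (g / N) := by
        rw [mul_div_assoc']; gcongr; linarith
      have h3 : g / N ≤ (g / N) ^ s := by
        have := Real.rpow_le_rpow_of_exponent_ge (x := g / N) (by positivity)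
          ((div_le_one (by linarith)).2 hgN) hs1
        simpa using this
      have h4 : (N / g) ^ (-s) = (g / N) ^ s := by
        rw [Real.rpow_neg (by positivity), ← Real.inv_rpow (by positivity), inv_div]
      rw [h4]; linarith
    have h2 : m ≤ (B ^ (st D k).1 * q w ^ 2) ^ (-s) := by
      refine hm.trans ?_
      have : 0 ≤ (B ^ (st D k).1 * q w ^ 2) ^ (-s) := by positivity
      have hk' : (st D k).2 ≤ 1 := hk
      nlinarith
    have h3 : 1 / Δ ≤ 1024 * B ^ 2 * ((B ^ (st D k).1 * q w ^ 2) * (N / g)) := by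
      rw [div_le_iff₀ hΔ0]
      have h5 : 512 * q w ^ 2 * N ^ 2 * Δ ≤ 512 * q w ^ 2 * (N * (2 * B ^ ((st D k).1 + 2))) * Δ := by
        rw [sq N]; gcongr
      have h6 := hΔg.trans h5
      have : 1024 * B ^ 2 * ((B ^ (st D k).1 * q w ^ 2) * (N / g)) * Δ =
        (512 * q w ^ 2 * (N * (2 * B ^ ((st D k).1 + 2))) * Δ) / g := by
        rw [pow_add]; ring
      rw [this, le_div_iff₀ (by linarith)]
      linarith
    have h4 := rp (s := s) (by positivity) (by positivity) (by positivity)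
      (show 1 ≤ 1024 * B ^ 2 by linarith) hs.le hs1 h3
    have h5 : (1 / Δ) ^ (-s) = Δ ^ s := by
      rw [Real.rpow_neg (by positivity), ← Real.inv_rpow (by positivity), one_div, inv_inv]
    rw [h5] at h4
    calc m * ((g + 1) / N) ≤ (B ^ (st D k).1 * q w ^ 2) ^ (-s) * (2 * (N / g) ^ (-s)) := by gcongr
      _ = 2 * ((B ^ (st D k).1 * q w ^ 2) ^ (-s) * (N / g) ^ (-s)) := by ring
      _ ≤ 2 * (1024 * B ^ 2 * Δ ^ s) := by gcongr
      _ = 2048 * B ^ 2 * Δ ^ s := by ring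
      _ ≤ C * Δ ^ s := by
        gcongr
        rw [hC]
        have : 0 ≤ 512 * B ^ 2 * (1 + 4 / δ) := by positivity
        linarith
  · -- normal stage
    have hr : rr D k = D.r0 := by simp [rr, hk]
    have c1 : cd D ω₁ k < D.r0 := hr ▸ cd_lt D ω₁ k
    have c2 : cd D ω₂ k < D.r0 := hr ▸ cd_lt D ω₂ k
    have hgap' := hgap _ c1 _ c2 (fun h => hne (Fin.ext h)) _ (tl_mem D hB (cd D ω₁) (k+1))
      _ (tl_mem D hB (cd D ω₂) (k+1))
    have hta := tl_eq D hB (cd D ω₁) k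
    have htb := tl_eq D hB (cd D ω₂) k
    rw [let', if_neg hk] at hta htb
    rw [← hta, ← htb] at hgap'
    have hd := pt_dist D hB (hagree' ω₁ hω₁ ω₂ hω₂)
    obtain ⟨m0, d0, hm, -⟩ := invariants D hB hs.le hs1 (cd_lt D ω₁) k
    have hp := posL_W D hB (cd D ω₁) k
    have qp := q_pos hp
    have hmeas : nu D hB V ≤ ENNReal.ofReal (mm D (cd D ω₁) k) := by
      rw [← nu_cyl' D hB]
      exact measure_mono fun ω hω => hagree ω hω ω₁ hω₁
    refine hmeas.trans (ediam_lower hω₁ hω₂ hC0 hs.le ?_)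
    set w := W D (cd D ω₁) k with hwdef
    change _ ≤ C * |pt D hB (cd D ω₁) - pt D hB (cd D ω₂)| ^ s
    set Δ := |pt D hB (cd D ω₁) - pt D hB (cd D ω₂)| with hΔ
    have hδΔ : δ ≤ 4 * q w ^ 2 * Δ := hgap'.trans hd
    have hΔ0 : 0 < Δ := by
      by_contra hcon
      have : Δ = 0 := le_antisymm (not_lt.1 hcon) (abs_nonneg _)
      rw [this] at hδΔ
      linarith
    have h3 : 1 / Δ ≤ (1 + 4 / δ) * (q w ^ 2 * 1) := by
      have : 1 / Δ ≤ 4 / δ * q w ^ 2 := by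
        rw [div_le_iff₀ hΔ0, div_mul_eq_mul_div, div_mul_eq_mul_div, le_div_iff₀ hδ]
        linarith
      have h0 : 0 ≤ q w ^ 2 := by positivity
      linarith
    have h4 := rp (s := s) (by positivity) one_pos (by positivity)
      (show 1 ≤ 1 + 4 / δ by have : 0 ≤ 4 / δ := by positivity
                             linarith) hs.le hs1 h3
    have h5 : (1 / Δ) ^ (-s) = Δ ^ s := by
      rw [Real.rpow_neg (by positivity), ← Real.inv_rpow (by positivity), one_div, inv_inv]
    rw [h5, Real.one_rpow, mul_one] at h4
    calc mm D (cd D ω₁) k ≤ 512 * B ^ 2 * (q w ^ 2) ^ (-s) := hm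
      _ ≤ 512 * B ^ 2 * ((1 + 4 / δ) * Δ ^ s) := by gcongr
      _ = 512 * B ^ 2 * (1 + 4 / δ) * Δ ^ s := by ring
      _ ≤ C * Δ ^ s := by
        gcongr
        rw [hC]
        linarith

end scheme3

lemma lower {B s : ℝ} (hB : 1 ≤ B) (hs : 0 < s) (hsB : s < sExp B) :
    ENNReal.ofReal s ≤ dimH (FB B) := by
  obtain ⟨D⟩ := exists_ND hB hs.le hsB
  have hs1 : s ≤ 1 := hsB.le.trans (sExp_le_one hB)
  obtain ⟨C, hC, h⟩ := measure_bound D hB hs hs1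
  refine mass_principle (nu D hB) (fun ω => pt D hB (cd D ω)) (FB B)
    (fun ω => pt_mem D hB (cd_lt D ω)) s.toNNReal (ENNReal.ofReal C) ENNReal.ofReal_ne_top ?_
  rw [Real.coe_toNNReal _ hs.le]
  exact h

end WW

theorem wang_wu (B : ℝ) (hB : 1 ≤ B) :
    dimH {x : ℝ | x ∈ Set.Ioo (0 : ℝ) 1 ∧ Irrational x ∧
      {n : ℕ | B ^ n ≤ (pq x n : ℝ)}.Infinite} = ENNReal.ofReal (sExp B) := by
  change dimH (WW.FB B) = _
  refine le_antisymm (WW.upper hB) ?_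
  refine le_of_forall_lt fun c hc => ?_
  have hct : c ≠ ⊤ := ne_top_of_lt hc
  have h1 : c.toReal < sExp B := by
    have := (ENNReal.lt_ofReal_iff_toReal_lt hct).1 hc
    exact this
  obtain ⟨s, hs1, hs2⟩ := exists_between h1
  have hs0 : 0 < s := lt_of_le_of_lt ENNReal.toReal_nonneg hs1
  refine lt_of_lt_of_le ?_ (WW.lower hB hs0 hs2)
  exact (ENNReal.lt_ofReal_iff_toReal_lt hct).2 hs1
end
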